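/- arXiv:2102.02708 — 11 statements merged into one kernel-verified Lean document; each statement's English description precedes it below -/
import Mathlib

section
/- Let 0 < α ≤ 1 and let f ∈ ℝ[z₁,…,zₙ] be a multiaffine polynomial with nonnegative coefficients, f(1,…,1) > 0, that is Γ_α-stable, and let μ be the distribution on subsets of [n] generated by f. Then for every index i with 0 < P[i] < 1, the ℓ₁-norm of the i-th row of the signed pairwise influence matrix is bounded: Σ_{j ≠ i} |P[j|i] − P[j|¬i]| ≤ 2/α − 1. -/
open Finset

/-- `z` lies in the open sector `Γ_α` of aperture `απ` centered on the positive real axis. -/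
def inSector (α : ℝ) (z : ℂ) : Prop := z ≠ 0 ∧ |z.arg| < α * Real.pi / 2

theorem inSector_iff {α : ℝ} (hα0 : 0 < α) (hα1 : α ≤ 1) (z : ℂ) :
    inSector α z ↔ 0 < z.re * Real.sin (α * Real.pi / 2) - z.im * Real.cos (α * Real.pi / 2) ∧
      0 < z.re * Real.sin (α * Real.pi / 2) + z.im * Real.cos (α * Real.pi / 2) := by
  have hpi := Real.pi_pos
  set θ := α * Real.pi / 2 with hθ
  have h0 : 0 < θ := by positivity
  have h1 : θ ≤ Real.pi / 2 := by rw [hθ]; nlinarith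
  by_cases hz : z = 0
  · simp [hz, inSector]
  have hr : 0 < ‖z‖ := norm_pos_iff.2 hz
  have e1 : z.re * Real.sin θ - z.im * Real.cos θ = ‖z‖ * Real.sin (θ - z.arg) := by
    rw [Real.sin_sub]
    nth_rewrite 1 [← Complex.norm_mul_cos_arg z]
    nth_rewrite 1 [← Complex.norm_mul_sin_arg z]
    ring
  have e2 : z.re * Real.sin θ + z.im * Real.cos θ = ‖z‖ * Real.sin (θ + z.arg) := by
    rw [Real.sin_add]
    nth_rewrite 1 [← Complex.norm_mul_cos_arg z]
    nth_rewrite 1 [← Complex.norm_mul_sin_arg z]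
    ring
  rw [e1, e2, mul_pos_iff_of_pos_left hr, mul_pos_iff_of_pos_left hr]
  have ha := Complex.neg_pi_lt_arg z
  have hb := Complex.arg_le_pi z
  constructor
  · rintro ⟨-, h⟩
    rw [abs_lt] at h
    exact ⟨Real.sin_pos_of_pos_of_lt_pi (by linarith) (by linarith),
      Real.sin_pos_of_pos_of_lt_pi (by linarith) (by linarith)⟩
  · rintro ⟨p, q⟩
    refine ⟨hz, abs_lt.2 ⟨?_, ?_⟩⟩
    · by_contra hcon
      have := Real.sin_nonpos_of_nonpos_of_neg_pi_le (x := θ + z.arg) (by linarith) (by linarith)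
      linarith
    · by_contra hcon
      have := Real.sin_nonpos_of_nonpos_of_neg_pi_le (x := θ - z.arg) (by linarith) (by linarith)
      linarith

theorem abs_arg_le_of_neg_not_inSector {α : ℝ} (hα0 : 0 < α) (hα1 : α ≤ 1) (z : ℂ) (hz : z ≠ 0)
    (h : ¬ inSector α (-z)) : |z.arg| ≤ Real.pi - α * Real.pi / 2 := by
  have hpi := Real.pi_pos
  rw [inSector_iff hα0 hα1] at h
  set θ := α * Real.pi / 2 with hθ
  have h0 : 0 < θ := by positivity
  have h1 : θ ≤ Real.pi / 2 := by rw [hθ]; nlinarith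
  have hr : 0 < ‖z‖ := norm_pos_iff.2 hz
  have e1 : (-z).re * Real.sin θ - (-z).im * Real.cos θ = ‖z‖ * Real.sin (z.arg - θ) := by
    rw [Real.sin_sub, Complex.neg_re, Complex.neg_im]
    nth_rewrite 1 [← Complex.norm_mul_cos_arg z]
    nth_rewrite 1 [← Complex.norm_mul_sin_arg z]
    ring
  have e2 : (-z).re * Real.sin θ + (-z).im * Real.cos θ = ‖z‖ * - Real.sin (θ + z.arg) := by
    rw [Real.sin_add, Complex.neg_re, Complex.neg_im]
    nth_rewrite 1 [← Complex.norm_mul_cos_arg z]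
    nth_rewrite 1 [← Complex.norm_mul_sin_arg z]
    ring
  rw [e1, e2, mul_pos_iff_of_pos_left hr, mul_pos_iff_of_pos_left hr] at h
  have ha := Complex.neg_pi_lt_arg z
  have hb := Complex.arg_le_pi z
  by_contra hcon
  apply h
  rw [not_le, lt_abs] at hcon
  rcases hcon with hc | hc
  · constructor
    · exact Real.sin_pos_of_pos_of_lt_pi (by linarith) (by linarith)
    · rw [← Real.sin_sub_pi]
      exact Real.sin_pos_of_pos_of_lt_pi (by linarith) (by linarith)
  · constructor
    · rw [← Real.sin_add_two_pi]
      exact Real.sin_pos_of_pos_of_lt_pi (by linarith) (by linarith)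
    · rw [← Real.sin_neg]
      exact Real.sin_pos_of_pos_of_lt_pi (by linarith) (by linarith)

/-- Schwarz-type bound for functions with values in a complementary sector. -/
theorem schwarz_sector {α : ℝ} (hα0 : 0 < α) (hα1 : α ≤ 1) (G : ℂ → ℂ)
    (hG : DifferentiableOn ℂ G (Metric.ball 0 1)) (a : ℝ) (ha : 0 < a) (hGa : G 0 = a)
    (d : ℂ) (hd : HasDerivAt G d 0) (hne : ∀ ζ ∈ Metric.ball (0 : ℂ) 1, G ζ ≠ 0)
    (hns : ∀ ζ ∈ Metric.ball (0 : ℂ) 1, ¬ inSector α (- G ζ)) :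
    ‖d / a‖ ≤ 2 * (2 - α) := by
  have hpi := Real.pi_pos
  have hb : ∀ ζ ∈ Metric.ball (0 : ℂ) 1, |(G ζ).arg| ≤ Real.pi - α * Real.pi / 2 :=
    fun ζ hζ => abs_arg_le_of_neg_not_inSector hα0 hα1 _ (hne ζ hζ) (hns ζ hζ)
  have hβ : (0 : ℝ) < 2 - α := by linarith
  have hslit : ∀ ζ ∈ Metric.ball (0 : ℂ) 1, G ζ ∈ Complex.slitPlane := by
    intro ζ hζ
    rw [Complex.mem_slitPlane_iff_arg]
    refine ⟨fun h => ?_, hne ζ hζ⟩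
    have := hb ζ hζ
    rw [h, abs_of_pos hpi] at this
    nlinarith
  set β : ℂ := ((2 - α : ℝ) : ℂ) with hβd
  have hβ0 : β ≠ 0 := by rw [hβd]; exact_mod_cast hβ.ne'
  set H : ℂ → ℂ := fun ζ => Complex.exp (Complex.log (G ζ) / β) with hH
  have hHre : ∀ ζ ∈ Metric.ball (0 : ℂ) 1, 0 ≤ (H ζ).re := by
    intro ζ hζ
    rw [hH]
    simp only [Complex.exp_re]
    refine mul_nonneg (Real.exp_pos _).le ?_
    have : (Complex.log (G ζ) / β).im = (G ζ).arg / (2 - α) := by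
      rw [hβd, Complex.div_ofReal_im, Complex.log_im]
    rw [this]
    apply Real.cos_nonneg_of_mem_Icc
    have h2 := abs_le.1 (hb ζ hζ)
    constructor
    · rw [le_div_iff₀ hβ]; linarith [h2.1]
    · rw [div_le_iff₀ hβ]; linarith [h2.2]
  set h : ℝ := Real.exp (Real.log a / (2 - α)) with hh
  have hhpos : 0 < h := Real.exp_pos _
  have hH0 : H 0 = h := by
    simp only [hH, hGa, hh, hβd]
    rw [← Complex.ofReal_log ha.le]
    push_cast
    rfl
  have hmem0 : (0 : ℂ) ∈ Metric.ball (0 : ℂ) 1 := by simp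
  have hHd : HasDerivAt H (h * (d / a / β)) 0 := by
    have := ((hd.clog (hslit 0 hmem0)).div_const β).cexp
    rw [hGa] at this
    have e : Complex.exp (Complex.log a / β) = h := by rw [← hH0, hH]; simp [hGa]
    rw [e] at this
    exact this
  have hHdiff : DifferentiableOn ℂ H (Metric.ball 0 1) :=
    ((hG.clog hslit).div_const β).cexp
  have hden : ∀ ζ ∈ Metric.ball (0 : ℂ) 1, H ζ + h ≠ 0 := by
    intro ζ hζ h0
    have := congrArg Complex.re h0
    simp at this
    linarith [hHre ζ hζ]
  set ψ : ℂ → ℂ := fun ζ => (H ζ - h) / (H ζ + h) with hψ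
  have hψ0 : ψ 0 = 0 := by simp [hψ, hH0]
  have hψdiff : DifferentiableOn ℂ ψ (Metric.ball 0 1) :=
    (hHdiff.sub_const _).div (hHdiff.add_const _) hden
  have hmaps : Set.MapsTo ψ (Metric.ball 0 1) (Metric.closedBall (ψ 0) 1) := by
    intro ζ hζ
    rw [hψ0, mem_closedBall_zero_iff]
    simp only [hψ]
    rw [norm_div, div_le_one (norm_pos_iff.2 (hden ζ hζ))]
    rw [← sq_le_sq₀ (norm_nonneg _) (norm_nonneg _), ← Complex.normSq_eq_norm_sq,
      ← Complex.normSq_eq_norm_sq, Complex.normSq_apply, Complex.normSq_apply]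
    simp
    nlinarith [mul_nonneg (hHre ζ hζ) hhpos.le]
  have hS := Complex.norm_deriv_le_one_of_mapsTo_ball hψdiff hmaps one_pos
  have hhc : (h : ℂ) ≠ 0 := by exact_mod_cast hhpos.ne'
  have hψd : HasDerivAt ψ (d / a / β / 2) 0 := by
    have := (hHd.sub_const (h : ℂ)).div (hHd.add_const (h : ℂ)) (hden 0 hmem0)
    rw [hH0] at this
    refine this.congr_deriv (Eq.symm ?_)
    generalize d / a / β = D
    have h2 : ((h : ℂ) + h) ^ 2 ≠ 0 := by
      rw [← two_mul]
      exact pow_ne_zero _ (mul_ne_zero two_ne_zero hhc)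
    rw [eq_div_iff h2]
    ring
  rw [hψd.deriv, norm_div, norm_div] at hS
  have : ‖β‖ = 2 - α := by rw [hβd, Complex.norm_real, Real.norm_of_nonneg hβ.le]
  rw [this, Complex.norm_ofNat, div_div, div_le_one (by positivity)] at hS
  linarith

theorem schwarz_pair {α : ℝ} (hα0 : 0 < α) (hα1 : α ≤ 1) (F0 F1 : ℂ → ℂ)
    (h0 : DifferentiableOn ℂ F0 (Metric.ball 0 1)) (h1 : DifferentiableOn ℂ F1 (Metric.ball 0 1))
    (a0 a1 d0 d1 : ℝ) (ha0 : 0 < a0) (ha1 : 0 < a1) (hF0 : F0 0 = a0) (hF1 : F1 0 = a1)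
    (hd0 : HasDerivAt F0 d0 0) (hd1 : HasDerivAt F1 d1 0)
    (hst : ∀ ζ ∈ Metric.ball (0 : ℂ) 1, ∀ z, inSector α z → z * F1 ζ + F0 ζ ≠ 0) :
    |d1 / a1 - d0 / a0| ≤ 2 * (2 - α) := by
  have hpi := Real.pi_pos
  have hsin : 0 < Real.sin (α * Real.pi / 2) :=
    Real.sin_pos_of_pos_of_lt_pi (by positivity) (by nlinarith)
  have hreal : ∀ x : ℝ, 0 < x → inSector α x := by
    intro x hx
    rw [inSector_iff hα0 hα1]
    simp
    positivity
  have key : ∀ ε : ℝ, 0 < ε →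
      |(d1 + ε * d0) / (a1 + ε * a0) - (ε * d1 + d0) / (ε * a1 + a0)| ≤ 2 * (2 - α) := by
    intro ε hε
    have hεc : (ε : ℂ) ≠ 0 := by exact_mod_cast hε.ne'
    have hden : ∀ ζ ∈ Metric.ball (0 : ℂ) 1, ε * F1 ζ + F0 ζ ≠ 0 :=
      fun ζ hζ => hst ζ hζ _ (hreal ε hε)
    have hnum : ∀ ζ ∈ Metric.ball (0 : ℂ) 1, F1 ζ + ε * F0 ζ ≠ 0 := by
      intro ζ hζ hcon
      apply hst ζ hζ _ (hreal ε⁻¹ (inv_pos.2 hε))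
      push_cast
      field_simp
      linear_combination hcon
    have hmem0 : (0 : ℂ) ∈ Metric.ball (0 : ℂ) 1 := by simp
    have p1 : 0 < a1 + ε * a0 := by positivity
    have p0 : 0 < ε * a1 + a0 := by positivity
    have p1c : (a1 + ε * a0 : ℂ) ≠ 0 := by exact_mod_cast p1.ne'
    have p0c : (ε * a1 + a0 : ℂ) ≠ 0 := by exact_mod_cast p0.ne'
    have hder := (hd1.add (hd0.const_mul (ε : ℂ))).div ((hd1.const_mul (ε : ℂ)).add hd0)
      (hden 0 hmem0)
    have := schwarz_sector hα0 hα1 (fun ζ => (F1 ζ + ε * F0 ζ) / (ε * F1 ζ + F0 ζ))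
      ((h1.add (h0.const_mul _)).div ((h1.const_mul _).add h0) hden)
      ((a1 + ε * a0) / (ε * a1 + a0)) (by positivity)
      (by simp [hF0, hF1]) _ hder
      (fun ζ hζ => div_ne_zero (hnum ζ hζ) (hden ζ hζ)) ?_
    · rw [← Real.norm_eq_abs, ← Complex.norm_real]
      refine le_trans (le_of_eq ?_) this
      congr 1
      simp only [Pi.add_apply, hF0, hF1]
      push_cast
      field_simp
    · intro ζ hζ hs
      set u := -((F1 ζ + ε * F0 ζ) / (ε * F1 ζ + F0 ζ)) with hu
      have hu' : F1 ζ * (1 + u * ε) + F0 ζ * (ε + u) = 0 := by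
        have hq : u * (ε * F1 ζ + F0 ζ) = -(F1 ζ + ε * F0 ζ) := by
          rw [hu, neg_mul, div_mul_cancel₀ _ (hden ζ hζ)]
        linear_combination hq
      have hs0 := hs.1
      rw [inSector_iff hα0 hα1] at hs
      have hre : 0 < u.re := by nlinarith [hs.1, hs.2]
      have huε : (ε : ℂ) + u ≠ 0 := by
        intro h
        have := congrArg Complex.re h
        simp at this
        linarith
      have hN : 0 < Complex.normSq (ε + u) := Complex.normSq_pos.2 huε
      apply hst ζ hζ ((1 + u * ε) / (ε + u))
      · rw [inSector_iff hα0 hα1]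
        have er : ((1 + u * ε) / (ε + u)).re =
            (u.re + ε + ε * (u.re ^ 2 + u.im ^ 2) + ε ^ 2 * u.re) / Complex.normSq (ε + u) := by
          rw [Complex.div_re]
          simp
          field_simp
          ring
        have ei : ((1 + u * ε) / (ε + u)).im =
            (- u.im + ε ^ 2 * u.im) / Complex.normSq (ε + u) := by
          rw [Complex.div_im]
          simp
          field_simp
          ring
        rw [er, ei]
        set N := Complex.normSq (ε + u)
        set s := Real.sin (α * Real.pi / 2)
        set c := Real.cos (α * Real.pi / 2)
        constructor
        · have : (u.re + ε + ε * (u.re ^ 2 + u.im ^ 2) + ε ^ 2 * u.re) / N * s -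
              (- u.im + ε ^ 2 * u.im) / N * c =
              ((u.re * s + u.im * c) + ε ^ 2 * (u.re * s - u.im * c)
                + (ε + ε * (u.re ^ 2 + u.im ^ 2)) * s) / N := by ring
          rw [this]
          have := hs.1
          have := hs.2
          positivity
        · have : (u.re + ε + ε * (u.re ^ 2 + u.im ^ 2) + ε ^ 2 * u.re) / N * s +
              (- u.im + ε ^ 2 * u.im) / N * c =
              ((u.re * s - u.im * c) + ε ^ 2 * (u.re * s + u.im * c)
                + (ε + ε * (u.re ^ 2 + u.im ^ 2)) * s) / N := by ring
          rw [this]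
          have := hs.1
          have := hs.2
          positivity
      · field_simp
        linear_combination hu'
  have hlim : Filter.Tendsto (fun ε : ℝ =>
      |(d1 + ε * d0) / (a1 + ε * a0) - (ε * d1 + d0) / (ε * a1 + a0)|)
      (nhdsWithin 0 (Set.Ioi 0)) (nhds |d1 / a1 - d0 / a0|) := by
    have : ContinuousAt (fun ε : ℝ =>
      |(d1 + ε * d0) / (a1 + ε * a0) - (ε * d1 + d0) / (ε * a1 + a0)|) 0 := by
      have : a1 + 0 * a0 ≠ 0 := by simpa using ha1.ne'
      have : 0 * a1 + a0 ≠ 0 := by simpa using ha0.ne'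
      fun_prop (disch := assumption)
    have := this.tendsto.mono_left (nhdsWithin_le_nhds (s := Set.Ioi 0))
    simpa using this
  refine le_of_tendsto hlim ?_
  filter_upwards [self_mem_nhdsWithin] with ε hε using key ε hε

theorem ell_facts (ζ : ℂ) (hζ : ζ ∈ Metric.ball (0 : ℂ) 1) :
    0 < ((1 + ζ) / (1 - ζ)).re ∧ 1 - ζ ≠ 0 := by
  rw [mem_ball_zero_iff] at hζ
  have h1 : 1 - ζ ≠ 0 := by
    intro h
    have : ζ = 1 := by linear_combination -h
    rw [this] at hζ
    simp at hζ
  refine ⟨?_, h1⟩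
  have hN : 0 < Complex.normSq (1 - ζ) := Complex.normSq_pos.2 h1
  have : ((1 + ζ) / (1 - ζ)).re = (1 - ‖ζ‖ ^ 2) / Complex.normSq (1 - ζ) := by
    rw [← Complex.normSq_eq_norm_sq, Complex.normSq_apply ζ, Complex.div_re]
    simp
    field_simp
    ring
  rw [this]
  have : ‖ζ‖ ^ 2 < 1 := by nlinarith [norm_nonneg ζ]
  apply div_pos _ hN
  linarith

theorem inSector_exp {α : ℝ} (hα0 : 0 < α) (hα1 : α ≤ 1) (x : ℂ)
    (hx : |x.im| < α * Real.pi / 2) : inSector α (Complex.exp x) := by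
  have hpi := Real.pi_pos
  refine ⟨Complex.exp_ne_zero _, ?_⟩
  have h := abs_lt.1 hx
  rw [← Complex.log_im, Complex.log_exp (by nlinarith) (by nlinarith)]
  exact hx

/-- Sector-stability implies a `2/α - 1` bound on the ℓ₁-norm of each row of the
signed pairwise influence matrix of the distribution `μ(S) = c S / f(1,…,1)` generated
by the multiaffine polynomial `f = Σ_S c_S z^S`. -/
theorem influence_row_norm_bound_of_sector_stable
    (n : ℕ) (α : ℝ) (hα0 : 0 < α) (hα1 : α ≤ 1)
    (c : Finset (Fin n) → ℝ) (hc : ∀ S, 0 ≤ c S)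
    (hpos : 0 < ∑ S : Finset (Fin n), c S)
    (hstable : ∀ z : Fin n → ℂ, (∀ i, inSector α (z i)) →
      (∑ S : Finset (Fin n), (c S : ℂ) * ∏ i ∈ S, z i) ≠ 0)
    (i : Fin n)
    (hPi0 : 0 < (∑ S ∈ univ.filter (fun S : Finset (Fin n) => i ∈ S), c S) /
      (∑ S : Finset (Fin n), c S))
    (hPi1 : (∑ S ∈ univ.filter (fun S : Finset (Fin n) => i ∈ S), c S) /
      (∑ S : Finset (Fin n), c S) < 1) :
    ∑ j ∈ univ.erase i,
      |(∑ S ∈ univ.filter (fun S : Finset (Fin n) => i ∈ S ∧ j ∈ S), c S) /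
          (∑ S ∈ univ.filter (fun S : Finset (Fin n) => i ∈ S), c S) -
        (∑ S ∈ univ.filter (fun S : Finset (Fin n) => i ∉ S ∧ j ∈ S), c S) /
          (∑ S ∈ univ.filter (fun S : Finset (Fin n) => i ∉ S), c S)|
      ≤ 2 / α - 1 := by
  have hsplit := Finset.sum_filter_add_sum_filter_not (univ : Finset (Finset (Fin n)))
    (fun S => i ∈ S) c
  set T1 := univ.filter (fun S : Finset (Fin n) => i ∈ S) with hT1
  set T0 := univ.filter (fun S : Finset (Fin n) => i ∉ S) with hT0
  set a1 := ∑ S ∈ T1, c S with ha1d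
  set a0 := ∑ S ∈ T0, c S with ha0d
  have ha1 : 0 < a1 := (div_pos_iff_of_pos_right hpos).1 hPi0
  have ha0 : 0 < a0 := by
    rw [div_lt_one hpos] at hPi1
    linarith
  set D : Fin n → ℝ := fun j =>
    (∑ S ∈ univ.filter (fun S : Finset (Fin n) => i ∈ S ∧ j ∈ S), c S) / a1 -
      (∑ S ∈ univ.filter (fun S : Finset (Fin n) => i ∉ S ∧ j ∈ S), c S) / a0 with hD
  set s : Fin n → ℝ := fun j => if j = i then 0 else SignType.sign (D j) with hs
  have hs1 : ∀ j, |s j| ≤ 1 := by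
    intro j
    simp only [hs]
    split_ifs
    · simp
    · rcases lt_trichotomy (D j) 0 with h | h | h <;> simp [h]
  have hLHS : ∑ j ∈ univ.erase i, |D j| = ∑ j, s j * D j := by
    rw [← Finset.sum_erase_add _ _ (Finset.mem_univ i)]
    have : s i = 0 := by simp [hs]
    rw [this, zero_mul, add_zero]
    refine Finset.sum_congr rfl fun j hj => ?_
    have hji := Finset.ne_of_mem_erase hj
    simp only [hs, if_neg hji]
    exact (sign_mul_self _).symm
  change ∑ j ∈ univ.erase i, |D j| ≤ _
  rw [hLHS]
  set ℓ : ℂ → ℂ := fun ζ => Complex.log ((1 + ζ) / (1 - ζ)) with hℓ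
  have hℓd : DifferentiableOn ℂ ℓ (Metric.ball 0 1) := by
    refine DifferentiableOn.clog ?_ fun ζ hζ => Or.inl (ell_facts ζ hζ).1
    exact (differentiableOn_id.const_add 1).div (differentiableOn_id.const_sub 1)
      fun ζ hζ => (ell_facts ζ hζ).2
  have hℓ0 : ℓ 0 = 0 := by simp [hℓ]
  have hℓ1 : HasDerivAt ℓ 2 0 := by
    have h : HasDerivAt (fun ζ : ℂ => (1 + ζ) / (1 - ζ)) 2 0 := by
      have := ((hasDerivAt_id (0 : ℂ)).const_add 1).div ((hasDerivAt_id (0 : ℂ)).const_sub 1)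
        (by simp)
      refine this.congr_deriv ?_
      norm_num
    have := h.clog (by simp)
    simpa using this
  set σ : Finset (Fin n) → ℝ := fun S => ∑ j ∈ S, s j with hσ
  set F : Finset (Finset (Fin n)) → ℂ → ℂ := fun T ζ =>
    ∑ S ∈ T, (c S : ℂ) * Complex.exp (ℓ ζ * ((α * σ S : ℝ) : ℂ)) with hF
  have hFd : ∀ T, DifferentiableOn ℂ (F T) (Metric.ball 0 1) := by
    intro T
    exact DifferentiableOn.fun_sum fun S _ => ((hℓd.mul_const _).cexp).const_mul _
  have hF0 : ∀ T, F T 0 = ((∑ S ∈ T, c S : ℝ) : ℂ) := by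
    intro T
    simp [hF, hℓ0]
  have hF1 : ∀ T, HasDerivAt (F T) ((2 * α * ∑ S ∈ T, c S * σ S : ℝ) : ℂ) 0 := by
    intro T
    have := HasDerivAt.fun_sum (u := T) fun S _ =>
      ((hℓ1.mul_const ((α * σ S : ℝ) : ℂ)).cexp).const_mul (c S : ℂ)
    refine this.congr_deriv (Eq.symm ?_)
    simp only [hℓ0, zero_mul, Complex.exp_zero, one_mul]
    push_cast
    rw [Finset.mul_sum]
    exact Finset.sum_congr rfl fun S _ => by ring
  have hst : ∀ ζ ∈ Metric.ball (0 : ℂ) 1, ∀ z, inSector α z → z * F T1 ζ + F T0 ζ ≠ 0 := by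
    intro ζ hζ z hz
    have him : |(ℓ ζ).im| < Real.pi / 2 := by
      simp only [hℓ, Complex.log_im]
      exact Complex.abs_arg_lt_pi_div_two_iff.2 (Or.inl (ell_facts ζ hζ).1)
    have := hstable (fun j => if j = i then z else Complex.exp (ℓ ζ * ((α * s j : ℝ) : ℂ))) ?_
    · convert this using 1
      rw [← Finset.sum_filter_add_sum_filter_not (univ : Finset (Finset (Fin n)))
        (fun S => i ∈ S)]
      have hexp : ∀ S : Finset (Fin n), Complex.exp (ℓ ζ * ((α * σ S : ℝ) : ℂ)) =
          ∏ j ∈ S, Complex.exp (ℓ ζ * ((α * s j : ℝ) : ℂ)) := by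
        intro S
        rw [← Complex.exp_sum, ← Finset.mul_sum, ← Complex.ofReal_sum, ← Finset.mul_sum]
      congr 1
      · simp only [hF]
        rw [Finset.mul_sum]
        refine Finset.sum_congr rfl fun S hS => ?_
        have hiS : i ∈ S := (Finset.mem_filter.1 hS).2
        rw [hexp, ← Finset.mul_prod_erase S _ hiS, ← Finset.mul_prod_erase S _ hiS]
        have hsi : s i = 0 := by simp [hs]
        rw [hsi, if_pos rfl]
        rw [Finset.prod_congr rfl fun j hj => if_neg (Finset.ne_of_mem_erase hj)]
        simp
        ring
      · simp only [hF]
        refine Finset.sum_congr rfl fun S hS => ?_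
        have hiS : i ∉ S := (Finset.mem_filter.1 hS).2
        rw [hexp]
        congr 1
        refine Finset.prod_congr rfl fun j hj => ?_
        rw [if_neg]
        rintro rfl
        exact hiS hj
    · intro j
      split_ifs
      · exact hz
      · apply inSector_exp hα0 hα1
        rw [Complex.im_mul_ofReal, abs_mul, abs_mul, abs_of_pos hα0]
        have h1 : |(ℓ ζ).im| * (α * |s j|) ≤ |(ℓ ζ).im| * (α * 1) := by
          gcongr
          exact hs1 j
        nlinarith
  have main := schwarz_pair hα0 hα1 (F T0) (F T1) (hFd _) (hFd _) a0 a1 _ _ ha0 ha1 (hF0 _) (hF0 _)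
    (hF1 _) (hF1 _) hst
  have hsw1 : ∑ S ∈ T1, c S * σ S =
      ∑ j, s j * ∑ S ∈ univ.filter (fun S : Finset (Fin n) => i ∈ S ∧ j ∈ S), c S := by
    simp only [hσ, hT1, Finset.sum_filter, Finset.mul_sum]
    rw [Finset.sum_comm]
    refine Finset.sum_congr rfl fun S _ => ?_
    by_cases h : i ∈ S
    · simp [h, mul_comm]
    · simp [h]
  have hsw0 : ∑ S ∈ T0, c S * σ S =
      ∑ j, s j * ∑ S ∈ univ.filter (fun S : Finset (Fin n) => i ∉ S ∧ j ∈ S), c S := by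
    simp only [hσ, hT0, Finset.sum_filter, Finset.mul_sum]
    rw [Finset.sum_comm]
    refine Finset.sum_congr rfl fun S _ => ?_
    by_cases h : i ∈ S
    · simp [h]
    · simp [h, mul_comm]
  have hfin : 2 * α * (∑ S ∈ T1, c S * σ S) / a1 - 2 * α * (∑ S ∈ T0, c S * σ S) / a0 =
      2 * α * ∑ j, s j * D j := by
    simp only [hD, mul_sub, Finset.sum_sub_distrib]
    rw [hsw1, hsw0]
    simp only [mul_div_assoc', ← Finset.sum_div]
  rw [hfin] at main
  have h3 := le_of_abs_le main
  have : 2 / α - 1 = (2 - α) / α := by field_simp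
  rw [this, le_div_iff₀ hα0]
  linarith
end

section
/- Let 0 < α ≤ 1 and let f ∈ ℝ[z₁,…,zₙ] be a multiaffine polynomial with nonnegative coefficients, f(1,…,1) > 0, that is Γ_α-stable, and let μ be the distribution on subsets of [n] generated by f. Then for every index i with P[i] > 0, the ℓ₁-norm of the i-th row of the correlation matrix is bounded: (1 − P[i]) + Σ_{j ≠ i} |P[j|i] − P[j]| ≤ 2/α. -/
open Finset

lemma inSector_exp_s1 {α : ℝ} (hα1 : α ≤ 1) {v : ℂ} (hv : |v.im| < α * Real.pi / 2) :
    inSector α (Complex.exp v) := by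
  refine ⟨Complex.exp_ne_zero _, ?_⟩
  have hpi := Real.pi_pos
  have h2 := abs_lt.1 hv
  have : (Complex.exp v).arg = v.im := by
    rw [← Complex.log_im, Complex.log_exp] <;> nlinarith
  rwa [this]

lemma inSector_pos {α : ℝ} (hα0 : 0 < α) {t : ℝ} (ht : 0 < t) : inSector α (t : ℂ) := by
  refine ⟨by exact_mod_cast ht.ne', ?_⟩
  rw [Complex.arg_ofReal_of_nonneg ht.le, abs_zero]
  have := Real.pi_pos
  positivity

lemma ne_zero_of_ray {U : Set ℂ} (hU : IsOpen U) (hUc : IsPreconnected U) {a b : ℂ → ℂ}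
    (ha : DifferentiableOn ℂ a U) (hb : DifferentiableOn ℂ b U)
    (hab : ∀ w ∈ U, ∀ t : ℝ, 0 < t → (t : ℂ) * a w + b w ≠ 0)
    {p : ℂ} (hp : p ∈ U) (hap : a p ≠ 0) : ∀ w ∈ U, a w ≠ 0 := by
  intro w0 hw0 h0
  have hb0 : b w0 ≠ 0 := by
    have := hab w0 hw0 1 one_pos
    simpa [h0] using this
  have hUn : U ∈ nhds w0 := hU.mem_nhds hw0
  have haa := ha.analyticAt hUn
  have hba := hb.analyticAt hUn
  have hbn : ∀ᶠ w in nhds w0, b w ≠ 0 := hba.continuousAt.eventually_ne hb0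
  have hg : AnalyticAt ℂ (fun w => a w / b w) w0 := haa.fun_div hba hb0
  rcases hg.eventually_constant_or_nhds_le_map_nhds with h | h
  · have : a =ᶠ[nhds w0] 0 := by
      filter_upwards [h, hbn] with w h1 h2
      simpa [h0, h2] using h1
    exact hap ((ha.analyticOnNhd hU).eqOn_zero_of_preconnected_of_eventuallyEq_zero hUc hw0 this hp)
  · have h1 : ∀ᶠ y in nhds (0 : ℂ), ∃ w ∈ U, b w ≠ 0 ∧ a w / b w = y := by
      have h2 : (fun w => a w / b w) '' (U ∩ {w | b w ≠ 0}) ∈ nhds (a w0 / b w0) :=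
        h (Filter.image_mem_map (Filter.inter_mem hUn hbn))
      rw [h0, zero_div] at h2
      filter_upwards [h2] with y hy
      obtain ⟨w, ⟨hw1, hw2⟩, rfl⟩ := hy
      exact ⟨w, hw1, hw2, rfl⟩
    have hcont : Filter.Tendsto (fun t : ℝ => -(t : ℂ)) (nhdsWithin 0 (Set.Ioi 0)) (nhds 0) := by
      have : Continuous (fun t : ℝ => -(t : ℂ)) := by fun_prop
      simpa using (this.tendsto 0).mono_left nhdsWithin_le_nhds
    have h3 := (hcont.eventually h1).and self_mem_nhdsWithin
    obtain ⟨t, ⟨w, hw, hbw, hq⟩, ht⟩ := h3.exists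
    have htp : (0 : ℝ) < t := ht
    apply hab w hw t⁻¹ (inv_pos.2 htp)
    rw [div_eq_iff hbw] at hq
    have : (t : ℂ) ≠ 0 := by exact_mod_cast htp.ne'
    rw [hq]
    push_cast
    field_simp
    ring

lemma schwarz_halfplane {k : ℂ → ℂ} {r : ℝ} {d : ℂ} (hr : 0 < r)
    (hk : DifferentiableOn ℂ k (Metric.ball 0 1)) (hre : ∀ u ∈ Metric.ball (0 : ℂ) 1, 0 ≤ (k u).re)
    (hk0 : k 0 = r) (hd : HasDerivAt k d 0) : ‖d‖ ≤ 2 * r := by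
  have hne : ∀ u ∈ Metric.ball (0 : ℂ) 1, k u + r ≠ 0 := by
    intro u hu h
    have h1 := congrArg Complex.re h
    simp at h1
    linarith [hre u hu]
  set M : ℂ → ℂ := fun u => (k u - r) / (k u + r) with hM
  have hMd : DifferentiableOn ℂ M (Metric.ball 0 1) :=
    (hk.sub_const _).fun_div (hk.add_const _) hne
  have hM1 : ∀ u ∈ Metric.ball (0 : ℂ) 1, ‖M u‖ ≤ 1 := by
    intro u hu
    rw [hM]
    simp only [norm_div]
    rw [div_le_one (norm_pos_iff.2 (hne u hu))]
    apply le_of_sq_le_sq _ (norm_nonneg _)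
    rw [Complex.sq_norm, Complex.sq_norm, Complex.normSq_apply, Complex.normSq_apply]
    simp
    nlinarith [mul_nonneg hr.le (hre u hu)]
  have hrc : (r : ℂ) ≠ 0 := by exact_mod_cast hr.ne'
  have hMderiv : HasDerivAt M (d / (2 * r)) 0 := by
    have := (hd.sub_const (r : ℂ)).fun_div (hd.add_const (r : ℂ)) (hne 0 (by simp))
    refine this.congr_deriv ?_
    rw [hk0]
    field_simp
    ring
  have hb : ∀ R : ℝ, 0 < R → R < 1 → ‖d / (2 * r)‖ * R ≤ 1 := by
    intro R hR hR1
    have hsub : Metric.closedBall (0 : ℂ) R ⊆ Metric.ball 0 1 := Metric.closedBall_subset_ball hR1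
    have := Complex.norm_deriv_le_of_forall_mem_sphere_norm_le (C := 1) hR
      (hMd.diffContOnCl_ball hsub) (fun z hz => hM1 z (hsub (Metric.sphere_subset_closedBall hz)))
    rw [hMderiv.deriv] at this
    rwa [le_div_iff₀ hR] at this
  have h1 : ‖d / (2 * r)‖ ≤ 1 := by
    by_contra! h
    have hx : 0 < ‖d / (2 * r)‖ := by linarith
    have := hb ((1 + ‖d / (2 * r)‖⁻¹) / 2) (by positivity)
      (by have := inv_lt_one_of_one_lt₀ h; linarith)
    have h2 := mul_inv_cancel₀ hx.ne'
    nlinarith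
  rw [norm_div, div_le_one (by simp [hr.ne'])] at h1
  simpa [abs_of_pos hr] using h1

lemma schwarz_sector_s1 {α : ℝ} (hα0 : 0 < α) (hα1 : α ≤ 1) {h : ℂ → ℂ} {r : ℝ} {d : ℂ} (hr : 0 < r)
    (hh : DifferentiableOn ℂ h (Metric.ball 0 1))
    (hne : ∀ u ∈ Metric.ball (0 : ℂ) 1, h u ≠ 0)
    (hsec : ∀ u ∈ Metric.ball (0 : ℂ) 1, ¬ inSector α (-h u))
    (hh0 : h 0 = r) (hd : HasDerivAt h d 0) : ‖d‖ ≤ 2 * (2 - α) * r := by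
  have hpi := Real.pi_pos
  have hap : 0 < α * Real.pi := by positivity
  have harg : ∀ u ∈ Metric.ball (0 : ℂ) 1, |(h u).arg| ≤ Real.pi - α * Real.pi / 2 := by
    intro u hu
    by_contra! hlt
    apply hsec u hu
    have hle := Complex.arg_le_pi (h u)
    have hgt := Complex.neg_pi_lt_arg (h u)
    rcases lt_abs.1 hlt with h1 | h1
    · have : -h u = Complex.exp (Complex.log (h u) - Real.pi * Complex.I) := by
        rw [Complex.exp_sub, Complex.exp_log (hne u hu), Complex.exp_pi_mul_I, div_neg, div_one]
      rw [this]
      apply inSector_exp_s1 hα1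
      simp only [Complex.sub_im, Complex.log_im, Complex.im_ofReal_mul,
        Complex.I_im, mul_one]
      rw [abs_lt]; constructor <;> linarith
    · have : -h u = Complex.exp (Complex.log (h u) + Real.pi * Complex.I) := by
        rw [Complex.exp_add, Complex.exp_log (hne u hu), Complex.exp_pi_mul_I]
        simp
      rw [this]
      apply inSector_exp_s1 hα1
      simp only [Complex.add_im, Complex.log_im, Complex.im_ofReal_mul,
        Complex.I_im, mul_one]
      rw [abs_lt]; constructor <;> linarith
  have hslit : ∀ u ∈ Metric.ball (0 : ℂ) 1, h u ∈ Complex.slitPlane := by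
    intro u hu
    rw [Complex.mem_slitPlane_iff_arg]
    refine ⟨fun he => ?_, hne u hu⟩
    have := harg u hu
    rw [he, abs_of_pos hpi] at this
    linarith
  set β : ℝ := (2 - α)⁻¹ with hβ
  have hβ0 : 0 < β := inv_pos.2 (by linarith)
  have hβ1 : β * (2 - α) = 1 := inv_mul_cancel₀ (by linarith)
  have hrc : (r : ℂ) ≠ 0 := by exact_mod_cast hr.ne'
  have key := schwarz_halfplane (k := fun u => Complex.exp (β * Complex.log (h u)))
    (r := Real.exp (β * Real.log r)) (d := Complex.exp (β * Complex.log (h 0)) * (β * (d / h 0)))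
    (Real.exp_pos _) ?_ ?_ ?_ ?_
  · have e1 : Complex.exp (β * Complex.log (h 0)) = (Real.exp (β * Real.log r) : ℝ) := by
      rw [hh0, ← Complex.ofReal_log hr.le]; push_cast; rfl
    rw [e1, hh0, norm_mul, norm_mul, norm_div, Complex.norm_real, Complex.norm_real,
      Complex.norm_real, Real.norm_of_nonneg (Real.exp_pos _).le, Real.norm_of_nonneg hβ0.le,
      Real.norm_of_nonneg hr.le, mul_comm 2] at key
    have key2 := le_of_mul_le_mul_left key (Real.exp_pos _)
    have : ‖d‖ / r ≤ 2 * (2 - α) := by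
      have h3 := mul_le_mul_of_nonneg_left key2 (show 0 ≤ 2 - α by linarith)
      calc ‖d‖ / r = (2 - α) * (β * (‖d‖ / r)) := by rw [← mul_assoc, mul_comm (2 - α), hβ1, one_mul]
        _ ≤ (2 - α) * 2 := h3
        _ = _ := by ring
    rwa [div_le_iff₀ hr] at this
  · exact ((hh.clog hslit).const_mul _).cexp
  · intro u hu
    rw [Complex.exp_re]
    apply mul_nonneg (Real.exp_pos _).le
    have h1 : ((β : ℂ) * Complex.log (h u)).im = β * (h u).arg := by
      simp [Complex.log_im]
    rw [h1]
    have h2 := abs_le.1 (harg u hu)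
    apply Real.cos_nonneg_of_mem_Icc
    constructor
    · nlinarith
    · nlinarith
  · rw [hh0, ← Complex.ofReal_log hr.le]; push_cast; rfl
  · exact ((hd.clog (hslit 0 (by simp))).const_mul (β : ℂ)).cexp

lemma core_bound {n : ℕ} {α : ℝ} (hα0 : 0 < α) (hα1 : α ≤ 1)
    (c : Finset (Fin n) → ℝ)
    (hstable : ∀ z : Fin n → ℂ, (∀ i, inSector α (z i)) →
      (∑ S : Finset (Fin n), (c S : ℂ) * ∏ i ∈ S, z i) ≠ 0)
    (i : Fin n) (s : Fin n → ℝ) (hsi : s i = 0) (hs : ∀ j, |s j| ≤ 1)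
    (ha : 0 < ∑ S ∈ univ.filter (fun S : Finset (Fin n) => i ∈ S), c S)
    (hb : 0 < ∑ S ∈ univ.filter (fun S : Finset (Fin n) => i ∉ S), c S) :
    (∑ S ∈ univ.filter (fun S : Finset (Fin n) => i ∈ S), c S * ∑ j ∈ S, s j) /
        (∑ S ∈ univ.filter (fun S : Finset (Fin n) => i ∈ S), c S) -
      (∑ S ∈ univ.filter (fun S : Finset (Fin n) => i ∉ S), c S * ∑ j ∈ S, s j) /
        (∑ S ∈ univ.filter (fun S : Finset (Fin n) => i ∉ S), c S) ≤ (2 - α) / α := by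
  have hpi := Real.pi_pos
  set v : ℂ → ℂ := fun u => α * Complex.log ((1 + u) / (1 - u)) with hv
  have h1u : ∀ u ∈ Metric.ball (0 : ℂ) 1, 1 - u ≠ 0 := by
    intro u hu h
    have : u = 1 := by linear_combination -h
    simp [this] at hu
  have hre : ∀ u ∈ Metric.ball (0 : ℂ) 1, 0 < ((1 + u) / (1 - u)).re := by
    intro u hu
    have hn : 0 < Complex.normSq (1 - u) := Complex.normSq_pos.2 (h1u u hu)
    have hu1 : ‖u‖ < 1 := by simpa using hu
    have hsq : u.re * u.re + u.im * u.im < 1 := by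
      rw [← Complex.normSq_apply, ← Complex.sq_norm]
      nlinarith [norm_nonneg u]
    rw [Complex.div_re, ← add_div]
    apply div_pos _ hn
    simp
    nlinarith
  have hvd : DifferentiableOn ℂ v (Metric.ball 0 1) := by
    refine DifferentiableOn.const_mul (DifferentiableOn.clog ?_ ?_) _
    · exact DifferentiableOn.fun_div (by fun_prop) (by fun_prop) h1u
    · intro u hu
      exact Or.inl (hre u hu)
  have hv0 : v 0 = 0 := by simp [hv]
  have hvderiv : HasDerivAt v (2 * α : ℂ) 0 := by
    have e1 : HasDerivAt (fun u : ℂ => 1 + u) 1 0 := (hasDerivAt_id _).const_add 1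
    have e2 : HasDerivAt (fun u : ℂ => 1 - u) (-1) 0 := (hasDerivAt_id _).const_sub 1
    have e3 := e1.fun_div e2 (by simp)
    have e4 := (e3.clog (by simp)).const_mul (α : ℂ)
    refine e4.congr_deriv ?_
    norm_num
    ring
  have hvim : ∀ u ∈ Metric.ball (0 : ℂ) 1, |(v u).im| < α * Real.pi / 2 := by
    intro u hu
    have h1 : |((1 + u) / (1 - u)).arg| < Real.pi / 2 :=
      Complex.abs_arg_lt_pi_div_two_iff.2 (Or.inl (hre u hu))
    have h2 : (v u).im = α * ((1 + u) / (1 - u)).arg := by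
      simp only [hv, Complex.im_ofReal_mul, Complex.log_im]
    rw [h2, abs_mul, abs_of_pos hα0]
    nlinarith
  set E : Finset (Finset (Fin n)) → ℂ → ℂ := fun F u =>
    ∑ S ∈ F, (c S : ℂ) * Complex.exp ((∑ j ∈ S, s j : ℝ) * v u) with hE
  have hEd : ∀ F, DifferentiableOn ℂ (E F) (Metric.ball 0 1) := by
    intro F
    refine DifferentiableOn.fun_sum fun S _ => ?_
    exact ((hvd.const_mul _).cexp).const_mul _
  have hE0 : ∀ F, E F 0 = (∑ S ∈ F, c S : ℝ) := by
    intro F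
    simp [hE, hv0]
  have hEderiv : ∀ F, HasDerivAt (E F) ((2 * α * ∑ S ∈ F, c S * ∑ j ∈ S, s j : ℝ) : ℂ) 0 := by
    intro F
    have := HasDerivAt.fun_sum (u := F) (x := (0 : ℂ)) fun S _ =>
      (((hvderiv.const_mul ((∑ j ∈ S, s j : ℝ) : ℂ)).cexp).const_mul (c S : ℂ))
    refine this.congr_deriv ?_
    simp only [hv0, mul_zero, Complex.exp_zero, one_mul]
    push_cast
    rw [Finset.mul_sum]
    refine Finset.sum_congr rfl fun S _ => ?_
    ring
  set FA := univ.filter (fun S : Finset (Fin n) => i ∈ S) with hFA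
  set FB := univ.filter (fun S : Finset (Fin n) => i ∉ S) with hFB
  have hst : ∀ u ∈ Metric.ball (0 : ℂ) 1, ∀ t : ℂ, inSector α t → t * E FA u + E FB u ≠ 0 := by
    intro u hu t ht
    have := hstable (Function.update (fun j => Complex.exp (s j * v u)) i t) ?_
    · convert this using 1
      rw [← Finset.sum_filter_add_sum_filter_not univ (fun S : Finset (Fin n) => i ∈ S)]
      congr 1
      · rw [hE, Finset.mul_sum]
        refine Finset.sum_congr rfl fun S hS => ?_
        have hiS : i ∈ S := by simpa [hFA] using hS
        rw [Finset.prod_update_of_mem hiS, ← Complex.exp_sum, ← Finset.sum_mul]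
        have : ∑ j ∈ S, s j = ∑ j ∈ S \ {i}, s j := by
          rw [← Finset.sum_sdiff (Finset.singleton_subset_iff.2 hiS)]
          simp [hsi]
        rw [this]
        push_cast
        ring
      · rw [hE]
        refine Finset.sum_congr rfl fun S hS => ?_
        have hiS : i ∉ S := by simpa [hFB] using hS
        rw [Finset.prod_update_of_notMem hiS, ← Complex.exp_sum, ← Finset.sum_mul]
        push_cast
        ring
    · intro j
      by_cases hj : j = i
      · subst hj; simpa using ht
      · rw [Function.update_of_ne hj]
        apply inSector_exp_s1 hα1
        rw [Complex.im_ofReal_mul, abs_mul]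
        have := hvim u hu
        nlinarith [hs j, abs_nonneg (s j), abs_nonneg (v u).im]
  have hpre : IsPreconnected (Metric.ball (0 : ℂ) 1) := (convex_ball _ _).isPreconnected
  have h0 : (0 : ℂ) ∈ Metric.ball (0 : ℂ) 1 := by simp
  have hA0 : E FA 0 ≠ 0 := by rw [hE0]; exact_mod_cast ha.ne'
  have hB0 : E FB 0 ≠ 0 := by rw [hE0]; exact_mod_cast hb.ne'
  have hAne := ne_zero_of_ray Metric.isOpen_ball hpre (hEd FA) (hEd FB)
    (fun w hw t ht => hst w hw t (inSector_pos hα0 ht)) h0 hA0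
  have hBne := ne_zero_of_ray Metric.isOpen_ball hpre (hEd FB) (hEd FA)
    (fun w hw t ht => by
      have h1 := hst w hw _ (inSector_pos hα0 (inv_pos.2 ht))
      have htc : (t : ℂ) ≠ 0 := by exact_mod_cast ht.ne'
      intro h2
      apply h1
      push_cast
      field_simp
      linear_combination h2) h0 hB0
  have key := schwarz_sector_s1 (h := fun u => E FB u / E FA u) hα0 hα1
    (div_pos hb ha) ((hEd FB).fun_div (hEd FA) hAne)
    (fun u hu => div_ne_zero (hBne u hu) (hAne u hu))
    (fun u hu hsec => by
      apply hst u hu _ hsec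
      have := hAne u hu
      field_simp
      ring)
    (by simp only [hE0]; push_cast; rfl)
    ((hEderiv FB).fun_div (hEderiv FA) hA0)
  rw [hE0, hE0] at key
  set a := ∑ S ∈ FA, c S
  set b := ∑ S ∈ FB, c S
  set dA := ∑ S ∈ FA, c S * ∑ j ∈ S, s j
  set dB := ∑ S ∈ FB, c S * ∑ j ∈ S, s j
  have e : (((2 * α * dB : ℝ) : ℂ) * (a : ℝ) - (b : ℝ) * ((2 * α * dA : ℝ) : ℂ)) / ((a : ℝ) : ℂ) ^ 2
      = ((2 * α * dB * a - b * (2 * α * dA)) / a ^ 2 : ℝ) := by push_cast; rfl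
  rw [e, Complex.norm_real] at key
  have k2 := (neg_le_abs _).trans key
  have e2 : -((2 * α * dB * a - b * (2 * α * dA)) / a ^ 2) = (2 * α * (b / a)) * (dA / a - dB / b) := by
    field_simp
    ring
  rw [e2] at k2
  rw [le_div_iff₀ hα0]
  have hba : 0 < b / a := div_pos hb ha
  have h3 : (2 * (b / a)) * ((dA / a - dB / b) * α) ≤ (2 * (b / a)) * (2 - α) := by linarith
  exact le_of_mul_le_mul_left h3 (by positivity)

/-- Sector-stability implies a `2/α` bound on the ℓ₁-norm of each row of the
correlation matrix of the distribution `μ(S) = c S / f(1,…,1)` generated by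
the multiaffine polynomial `f = Σ_S c_S z^S`. -/
theorem correlation_row_norm_bound_of_sector_stable
    (n : ℕ) (α : ℝ) (hα0 : 0 < α) (hα1 : α ≤ 1)
    (c : Finset (Fin n) → ℝ) (hc : ∀ S, 0 ≤ c S)
    (hpos : 0 < ∑ S : Finset (Fin n), c S)
    (hstable : ∀ z : Fin n → ℂ, (∀ i, inSector α (z i)) →
      (∑ S : Finset (Fin n), (c S : ℂ) * ∏ i ∈ S, z i) ≠ 0)
    (i : Fin n)
    (hPi0 : 0 < (∑ S ∈ univ.filter (fun S : Finset (Fin n) => i ∈ S), c S) /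
      (∑ S : Finset (Fin n), c S)) :
    (1 - (∑ S ∈ univ.filter (fun S : Finset (Fin n) => i ∈ S), c S) /
        (∑ S : Finset (Fin n), c S)) +
      ∑ j ∈ univ.erase i,
        |(∑ S ∈ univ.filter (fun S : Finset (Fin n) => i ∈ S ∧ j ∈ S), c S) /
            (∑ S ∈ univ.filter (fun S : Finset (Fin n) => i ∈ S), c S) -
          (∑ S ∈ univ.filter (fun S : Finset (Fin n) => j ∈ S), c S) /
            (∑ S : Finset (Fin n), c S)|
      ≤ 2 / α := by
  set a := ∑ S ∈ univ.filter (fun S : Finset (Fin n) => i ∈ S), c S with ha_def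
  set b := ∑ S ∈ univ.filter (fun S : Finset (Fin n) => i ∉ S), c S with hb_def
  have htot : ∑ S : Finset (Fin n), c S = a + b :=
    (Finset.sum_filter_add_sum_filter_not univ (fun S : Finset (Fin n) => i ∈ S) c).symm
  rw [htot] at hpos hPi0 ⊢
  have ha : 0 < a := by
    rcases div_pos_iff.1 hPi0 with h | h
    · exact h.1
    · linarith [h.2]
  have hb0 : 0 ≤ b := Finset.sum_nonneg fun S _ => hc S
  set aj : Fin n → ℝ := fun j =>
    ∑ S ∈ univ.filter (fun S : Finset (Fin n) => i ∈ S ∧ j ∈ S), c S with haj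
  set bj : Fin n → ℝ := fun j =>
    ∑ S ∈ univ.filter (fun S : Finset (Fin n) => i ∉ S ∧ j ∈ S), c S with hbj
  have hj : ∀ j, ∑ S ∈ univ.filter (fun S : Finset (Fin n) => j ∈ S), c S = aj j + bj j := by
    intro j
    rw [← Finset.sum_filter_add_sum_filter_not (univ.filter (fun S : Finset (Fin n) => j ∈ S))
      (fun S : Finset (Fin n) => i ∈ S) c]
    simp only [haj, hbj, Finset.filter_filter, and_comm]
  have hα2 : 2 ≤ 2 / α := by rw [le_div_iff₀ hα0]; linarith
  have hgoal : ∑ j ∈ univ.erase i,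
        |(∑ S ∈ univ.filter (fun S : Finset (Fin n) => i ∈ S ∧ j ∈ S), c S) / a -
          (∑ S ∈ univ.filter (fun S : Finset (Fin n) => j ∈ S), c S) / (a + b)|
      = ∑ j ∈ univ.erase i, |aj j / a - (aj j + bj j) / (a + b)| := by
    refine Finset.sum_congr rfl fun j _ => ?_
    rw [hj]
  rw [hgoal]
  rcases hb0.eq_or_lt with hb | hb
  · have hbj0 : ∀ j, bj j = 0 := by
      intro j
      apply le_antisymm _ (Finset.sum_nonneg fun S _ => hc S)
      rw [hb]
      apply Finset.sum_le_sum_of_subset_of_nonneg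
      · intro S hS
        simp only [Finset.mem_filter] at hS ⊢
        exact ⟨hS.1, hS.2.1⟩
      · intro S _ _
        exact hc S
    have : ∑ j ∈ univ.erase i, |aj j / a - (aj j + bj j) / (a + b)| = 0 := by
      refine Finset.sum_eq_zero fun j _ => ?_
      rw [hbj0, ← hb]
      simp
    rw [this, ← hb, add_zero, add_zero, div_self ha.ne']
    linarith
  · have hD : ∀ j, aj j / a - (aj j + bj j) / (a + b) = b / (a + b) * (aj j / a - bj j / b) := by
      intro j
      have : a + b ≠ 0 := hpos.ne'
      field_simp
      ring
    set s : Fin n → ℝ := fun j => if j = i then 0 else SignType.sign (aj j / a - bj j / b) with hs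
    have hs1 : ∀ j, |s j| ≤ 1 := by
      intro j
      simp only [hs]
      split_ifs
      · simp
      · rcases lt_trichotomy (aj j / a - bj j / b) 0 with h | h | h <;> simp [h]
    have key := core_bound hα0 hα1 c hstable i s (by simp [hs]) hs1 ha hb
    have swap : ∀ p : Finset (Fin n) → Prop, ∀ [DecidablePred p],
        ∑ S ∈ univ.filter p, c S * ∑ j ∈ S, s j =
        ∑ j, s j * ∑ S ∈ univ.filter (fun S => p S ∧ j ∈ S), c S := by
      intro p _
      have : ∀ S : Finset (Fin n), c S * ∑ j ∈ S, s j = ∑ j, if j ∈ S then s j * c S else 0 := by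
        intro S
        rw [Finset.mul_sum, ← Finset.sum_filter]
        simp [mul_comm]
      rw [Finset.sum_congr rfl fun S _ => this S, Finset.sum_comm]
      refine Finset.sum_congr rfl fun j _ => ?_
      rw [← Finset.filter_filter, Finset.sum_filter (fun S => j ∈ S), Finset.mul_sum]
      refine Finset.sum_congr rfl fun S _ => ?_
      split_ifs <;> simp
    rw [swap, swap, ← ha_def, ← hb_def, Finset.sum_div, Finset.sum_div,
      ← Finset.sum_sub_distrib] at key
    have e1 : ∑ j ∈ univ.erase i, |aj j / a - (aj j + bj j) / (a + b)| =
        b / (a + b) * ∑ j, (s j * aj j / a - s j * bj j / b) := by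
      rw [← Finset.add_sum_erase univ (fun j => s j * aj j / a - s j * bj j / b) (Finset.mem_univ i)]
      have : s i = 0 := by simp [hs]
      simp only [this, zero_mul, zero_div, sub_zero, zero_add]
      rw [Finset.mul_sum]
      refine Finset.sum_congr rfl fun j hj => ?_
      have hji : j ≠ i := Finset.ne_of_mem_erase hj
      rw [hD, abs_mul, abs_of_pos (div_pos hb hpos), ← sign_mul_self]
      simp only [hs, hji, if_false]
      ring
    rw [e1]
    have hq : 0 < b / (a + b) := div_pos hb hpos
    have hq1 : b / (a + b) ≤ 1 := by rw [div_le_one hpos]; linarith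
    have e2 : 1 - a / (a + b) = b / (a + b) := by
      have : a + b ≠ 0 := hpos.ne'
      field_simp
      ring
    have e3 : (2 - α) / α = 2 / α - 1 := by field_simp
    rw [e2]
    rw [e3] at key
    have := mul_le_mul_of_nonneg_left key hq.le
    nlinarith
end

section
/- Let g ∈ ℝ[z₁,…,zₙ] be a Hurwitz-stable polynomial. Let g_e be the sum of the terms of g whose total degree is even, and g_o the sum of the terms whose total degree is odd. Then each of g_e and g_o is either identically 0 or Hurwitz-stable. -/
open MvPolynomial

/-- A real polynomial is Hurwitz-stable if it does not vanish when all variables are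
assigned complex values with positive real part. -/
def HurwitzStable {n : ℕ} (g : MvPolynomial (Fin n) ℝ) : Prop :=
  ∀ z : Fin n → ℂ, (∀ i, 0 < (z i).re) → MvPolynomial.aeval z g ≠ 0

/-- The sum of the terms of `g` of even total degree. -/
noncomputable def evenPart {n : ℕ} (g : MvPolynomial (Fin n) ℝ) : MvPolynomial (Fin n) ℝ :=
  ∑ d ∈ g.support.filter (fun d => Even (d.sum fun _ e => e)),
    MvPolynomial.monomial d (MvPolynomial.coeff d g)

/-- The sum of the terms of `g` of odd total degree. -/
noncomputable def oddPart {n : ℕ} (g : MvPolynomial (Fin n) ℝ) : MvPolynomial (Fin n) ℝ :=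
  ∑ d ∈ g.support.filter (fun d => Odd (d.sum fun _ e => e)),
    MvPolynomial.monomial d (MvPolynomial.coeff d g)

theorem aux_ms (m : Multiset ℂ) (hm : ∀ a ∈ m, a.re ≤ 0) :
    ‖(m.map (fun a => (-1:ℂ) - a)).prod‖ ≤ ‖(m.map (fun a => (1:ℂ) - a)).prod‖ := by
  induction m using Multiset.induction_on with
  | empty => simp
  | cons a s ih =>
    simp only [Multiset.map_cons, Multiset.prod_cons, norm_mul]
    have h1 := ih (fun b hb => hm b (Multiset.mem_cons_of_mem hb))
    have h2 : ‖(-1:ℂ) - a‖ ≤ ‖(1:ℂ) - a‖ := by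
      have ha := hm a (Multiset.mem_cons_self a s)
      rw [Complex.norm_def, Complex.norm_def]
      apply Real.sqrt_le_sqrt
      simp only [Complex.normSq_apply, Complex.sub_re, Complex.sub_im, Complex.neg_re,
        Complex.neg_im, Complex.one_re, Complex.one_im]
      nlinarith
    gcongr

theorem aux_poly (p : Polynomial ℂ) (hp : ∀ s : ℂ, 0 < s.re → p.eval s ≠ 0) :
    ‖p.eval (-1)‖ ≤ ‖p.eval 1‖ := by
  have hs := (IsAlgClosed.splits p).eq_prod_roots
  have he : ∀ s : ℂ, p.eval s = p.leadingCoeff * (p.roots.map (fun a => s - a)).prod := by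
    intro s
    conv_lhs => rw [hs]
    simp [Polynomial.eval_multiset_prod, Multiset.map_map]
  rw [he, he, norm_mul, norm_mul]
  refine mul_le_mul_of_nonneg_left (aux_ms _ ?_) (norm_nonneg _)
  intro a ha
  by_contra h
  push Not at h
  exact hp a h (Polynomial.isRoot_of_mem_roots ha)

theorem aux_norm {n : ℕ} (g : MvPolynomial (Fin n) ℝ) (hg : HurwitzStable g)
    (z : Fin n → ℂ) (hz : ∀ i, 0 < (z i).re) :
    ‖aeval (-z) g‖ ≤ ‖aeval z g‖ := by
  let w : Fin n → Polynomial ℂ := fun i =>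
    Polynomial.C ((z i).re : ℂ) * Polynomial.X + Polynomial.C (((z i).im : ℂ) * Complex.I)
  have he : ∀ s : ℂ, (aeval w g).eval s
      = aeval (fun i => ((z i).re : ℂ) * s + ((z i).im : ℂ) * Complex.I) g := by
    intro s
    have := MvPolynomial.map_aeval w (Polynomial.evalRingHom s) g
    rw [Polynomial.coe_evalRingHom] at this
    rw [this, MvPolynomial.aeval_def, MvPolynomial.coe_eval₂Hom]
    congr 1
    · ext x; simp
    · funext i; simp [w]
  have h := aux_poly (aeval w g) (by
    intro s hs
    rw [he]
    apply hg
    intro i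
    simpa using mul_pos (hz i) hs)
  rw [he, he] at h
  have e1 : (fun i => ((z i).re : ℂ) * 1 + ((z i).im : ℂ) * Complex.I) = z := by
    funext i; simp [Complex.re_add_im]
  have e2 : (fun i => ((z i).re : ℂ) * (-1) + ((z i).im : ℂ) * Complex.I)
      = fun i => (starRingEnd ℂ) ((-z) i) := by
    funext i; apply Complex.ext <;> simp
  rw [e1, e2] at h
  have e3 : aeval (fun i => (starRingEnd ℂ) ((-z) i)) g = (starRingEnd ℂ) (aeval (-z) g) := by
    rw [MvPolynomial.map_aeval, MvPolynomial.aeval_def, MvPolynomial.coe_eval₂Hom]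
    congr 1
    ext x; simp
  rwa [e3, RCLike.norm_conj] at h

theorem aux_sum {n : ℕ} (g : MvPolynomial (Fin n) ℝ) : evenPart g + oddPart g = g := by
  unfold evenPart oddPart
  simp only [← Nat.not_even_iff_odd]
  rw [Finset.sum_filter_add_sum_filter_not]
  exact g.support_sum_monomial_coeff

theorem aux_mon {n : ℕ} (d : Fin n →₀ ℕ) (c : ℝ) (z : Fin n → ℂ) :
    aeval (-z) (monomial d c) = (-1) ^ (d.sum fun _ e => e) * aeval z (monomial d c) := by
  simp only [aeval_monomial, Finsupp.prod, Finsupp.sum, Pi.neg_apply]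
  rw [← Finset.prod_pow_eq_pow_sum, mul_left_comm, ← Finset.prod_mul_distrib]
  congr 1
  refine Finset.prod_congr rfl fun i _ => ?_
  rw [neg_pow]

theorem aux_even {n : ℕ} (g : MvPolynomial (Fin n) ℝ) (z : Fin n → ℂ) :
    aeval (-z) (evenPart g) = aeval z (evenPart g) := by
  unfold evenPart
  rw [map_sum, map_sum]
  refine Finset.sum_congr rfl fun d hd => ?_
  rw [aux_mon, (Finset.mem_filter.1 hd).2.neg_one_pow, one_mul]

theorem aux_odd {n : ℕ} (g : MvPolynomial (Fin n) ℝ) (z : Fin n → ℂ) :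
    aeval (-z) (oddPart g) = - aeval z (oddPart g) := by
  unfold oddPart
  rw [map_sum, map_sum, ← Finset.sum_neg_distrib]
  refine Finset.sum_congr rfl fun d hd => ?_
  rw [aux_mon, (Finset.mem_filter.1 hd).2.neg_one_pow, neg_one_mul]

theorem aux_zero {n : ℕ} (p : MvPolynomial (Fin n) ℝ)
    (hp : ∀ z : Fin n → ℂ, (∀ i, 0 < (z i).re) → aeval z p = 0) : p = 0 := by
  refine MvPolynomial.funext_set (fun _ => Set.Ioi (0:ℝ)) (fun _ => Set.Ioi_infinite 0) ?_
  intro x hx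
  have h := hp (fun i => (x i : ℂ)) (fun i => by simpa using hx i (Set.mem_univ i))
  have e : aeval (fun i => (x i : ℂ)) p = ((eval x p : ℝ) : ℂ) :=
    MvPolynomial.aeval_algebraMap_apply (B := ℂ) x p
  rw [e] at h
  simpa using h

theorem aux_diff {n : ℕ} (p : MvPolynomial (Fin n) ℝ) :
    Differentiable ℂ (fun z : Fin n → ℂ => aeval z p) := by
  induction p using MvPolynomial.induction_on with
  | C a => simp
  | add p q hp hq =>
    simp only [map_add]
    exact hp.add hq
  | mul_X p i hp =>
    simp only [map_mul, aeval_X]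
    exact hp.mul (differentiable_apply i)

theorem aux_max {n : ℕ} (g : MvPolynomial (Fin n) ℝ) (hg : HurwitzStable g)
    (z₀ : Fin n → ℂ) (hz₀ : ∀ i, 0 < (z₀ i).re) (c : ℂ) (hc : ‖c‖ = 1)
    (h₀ : aeval (-z₀) g = c * aeval z₀ g)
    (z : Fin n → ℂ) (hz : ∀ i, 0 < (z i).re) : aeval (-z) g = c * aeval z g := by
  let U : Set (Fin n → ℂ) := Set.univ.pi fun _ => {w : ℂ | 0 < w.re}
  have hmem : ∀ w : Fin n → ℂ, w ∈ U ↔ ∀ i, 0 < (w i).re := by intro w; simp [U]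
  have hU : IsOpen U := isOpen_set_pi Set.finite_univ
    fun _ _ => isOpen_lt continuous_const Complex.continuous_re
  have hconv : Convex ℝ U := convex_pi fun _ _ => convex_halfSpace_re_gt 0
  have hne : ∀ w ∈ U, aeval w g ≠ 0 := fun w hw => hg w ((hmem w).1 hw)
  let f : (Fin n → ℂ) → ℂ := fun w => aeval (-w) g / aeval w g
  have hd : DifferentiableOn ℂ f U := by
    intro w hw
    have h1 : DifferentiableAt ℂ (fun w : Fin n → ℂ => aeval (-w) g) w :=
      ((aux_diff g).comp (differentiable_id.neg : Differentiable ℂ (fun w : Fin n → ℂ => -w))) w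
    have h2 : DifferentiableAt ℂ (fun w : Fin n → ℂ => aeval w g) w := aux_diff g w
    have hw0 : (fun w : Fin n → ℂ => aeval w g) w ≠ 0 := hne w hw
    have h3 : DifferentiableAt ℂ f w := by
      have h4 := h1.mul (DifferentiableAt.fun_inv h2 hw0)
      exact h4
    exact h3.differentiableWithinAt
  have hf0 : f z₀ = c := by
    simp only [f]; rw [h₀, mul_div_cancel_right₀ _ (hg z₀ hz₀)]
  have hmax : IsMaxOn (norm ∘ f) U z₀ := by
    intro w hw
    simp only [Set.mem_ofPred_eq, Function.comp_apply, hf0, hc]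
    simp only [f, norm_div]
    exact div_le_one_of_le₀ (aux_norm g hg w ((hmem w).1 hw)) (norm_nonneg _)
  have key := Complex.eqOn_of_isPreconnected_of_isMaxOn_norm hconv.isPreconnected hU hd
    ((hmem z₀).2 hz₀) hmax ((hmem z).2 hz)
  simp only [Function.const_apply, hf0] at key
  exact (div_eq_iff (hg z hz)).1 key

/-- The even and odd parts of a Hurwitz-stable real polynomial are each either
identically zero or Hurwitz-stable. -/
theorem evenPart_oddPart_hurwitzStable {n : ℕ} (g : MvPolynomial (Fin n) ℝ)
    (hg : HurwitzStable g) :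
    (evenPart g = 0 ∨ HurwitzStable (evenPart g)) ∧
      (oddPart g = 0 ∨ HurwitzStable (oddPart g)) := by
  have hsum : ∀ z : Fin n → ℂ, aeval z g = aeval z (evenPart g) + aeval z (oddPart g) := by
    intro z
    rw [← map_add, aux_sum]
  have hneg : ∀ z : Fin n → ℂ, aeval (-z) g = aeval z (evenPart g) - aeval z (oddPart g) := by
    intro z
    rw [hsum, aux_even, aux_odd, sub_eq_add_neg]
  constructor
  · by_cases h : HurwitzStable (evenPart g)
    · exact Or.inr h
    left
    unfold HurwitzStable at h
    push Not at h
    obtain ⟨z₀, hz₀, h0⟩ := h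
    refine aux_zero _ fun z hz => ?_
    have := aux_max g hg z₀ hz₀ (-1) (by simp) (by rw [hneg, hsum, h0]; ring) z hz
    rw [hneg, hsum] at this
    linear_combination this / 2
  · by_cases h : HurwitzStable (oddPart g)
    · exact Or.inr h
    left
    unfold HurwitzStable at h
    push Not at h
    obtain ⟨z₀, hz₀, h0⟩ := h
    refine aux_zero _ fun z hz => ?_
    have := aux_max g hg z₀ hz₀ 1 (by simp) (by rw [hneg, hsum, h0]; ring) z hz
    rw [hneg, hsum] at this
    linear_combination -this / 2
end

section
/- Let g ∈ ℂ[z₁,…,zₙ] be a nonzero Γ₁-stable (Hurwitz-stable) polynomial with constant parity, i.e., all monomials appearing in g with nonzero coefficient have total degree of the same parity. Let k_max and k_min be the maximum and minimum total degree of monomials of g with nonzero coefficient. Then for every integer k with k_min ≤ k ≤ k_max and k ≡ k_max (mod 2), the degree-k part g_k is Γ_{1/2}-stable. -/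
open MvPolynomial

/-- A complex polynomial is `Γ_α`-stable if it does not vanish when all variables are
assigned values in the open sector of aperture `απ` centered on the positive real axis. -/
def SectorStable {n : ℕ} (α : ℝ) (g : MvPolynomial (Fin n) ℂ) : Prop :=
  ∀ z : Fin n → ℂ, (∀ i, z i ≠ 0 ∧ |(z i).arg| < α * Real.pi / 2) →
    MvPolynomial.eval z g ≠ 0

lemma hb_multiset_bound (m : Multiset ℂ) (h : ∀ r ∈ m, 1 ≤ ‖r‖) :
    ‖(m.map (fun r => 1 - r)).prod‖ ≤ 2 ^ m.card * ‖(m.map (fun r => 0 - r)).prod‖ := by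
  induction m using Multiset.induction_on with
  | empty => simp
  | cons a s ih =>
    have h1 := ih (fun r hr => h r (Multiset.mem_cons_of_mem hr))
    have ha := h a (Multiset.mem_cons_self a s)
    have h2 : ‖1 - a‖ ≤ 2 * ‖0 - a‖ := by
      have := norm_sub_le (1 : ℂ) a
      rw [norm_one] at this
      rw [zero_sub, norm_neg]
      linarith
    rw [Multiset.map_cons, Multiset.prod_cons, Multiset.map_cons, Multiset.prod_cons,
      norm_mul, norm_mul, Multiset.card_cons, pow_succ]
    calc _ ≤ (2 * ‖0 - a‖) * (2 ^ s.card * ‖(s.map (fun r => 0 - r)).prod‖) := by gcongr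
      _ = _ := by ring

lemma hb_poly_bound (p : Polynomial ℂ) (D : ℕ) (hD : p.natDegree ≤ D)
    (h : ∀ u : ℂ, ‖u‖ < 1 → p.eval u ≠ 0) :
    ‖p.eval 1‖ ≤ 2 ^ D * ‖p.eval 0‖ := by
  have hs := IsAlgClosed.splits p
  have hb := hb_multiset_bound p.roots (fun r hr => by
    by_contra hlt
    exact h r (not_le.mp hlt) (Polynomial.isRoot_of_mem_roots hr))
  rw [hs.eval_eq_prod_roots, hs.eval_eq_prod_roots, norm_mul, norm_mul]
  have hc : p.roots.card ≤ D := (Polynomial.card_roots' p).trans hD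
  have hp : (2 : ℝ) ^ p.roots.card ≤ 2 ^ D := pow_le_pow_right₀ (by norm_num) hc
  calc _ ≤ ‖p.leadingCoeff‖ * (2 ^ D * ‖(p.roots.map (fun r => 0 - r)).prod‖) := by
        gcongr
        exact hb.trans (by gcongr)
    _ = _ := by ring

/-- Stability in terms of real parts. -/
lemma hb_stable_re {n : ℕ} {g : MvPolynomial (Fin n) ℂ} (hs : SectorStable 1 g)
    (z : Fin n → ℂ) (hz : ∀ i, 0 < (z i).re) : MvPolynomial.eval z g ≠ 0 := by
  refine hs z (fun i => ⟨?_, ?_⟩)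
  · intro h0
    have := hz i
    simp [h0] at this
  · rw [one_mul]
    exact Complex.abs_arg_lt_pi_div_two_iff.mpr (Or.inl (hz i))

lemma hb_ball_bound {n : ℕ} {g : MvPolynomial (Fin n) ℂ} (hs : SectorStable 1 g)
    (z w : Fin n → ℂ) (hw : ∀ i, ‖w i - z i‖ < (z i).re) (t : ℝ) (ht : 0 < t) :
    ‖MvPolynomial.eval (fun i => (t : ℂ) * w i) g‖ ≤
      2 ^ g.totalDegree * ‖MvPolynomial.eval (fun i => (t : ℂ) * z i) g‖ := by
  let f : Fin n → Polynomial ℂ := fun i =>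
    Polynomial.C ((t : ℂ) * (w i - z i)) * Polynomial.X + Polynomial.C ((t : ℂ) * z i)
  have hev : ∀ u : ℂ, (MvPolynomial.aeval f g).eval u =
      MvPolynomial.eval (fun i => (t : ℂ) * (z i + u * (w i - z i))) g := by
    intro u
    rw [← Polynomial.coe_evalRingHom, MvPolynomial.aeval_def, MvPolynomial.hom_eval₂,
      MvPolynomial.eval, MvPolynomial.coe_eval₂Hom]
    congr 1
    · ext x <;> simp
    · funext i
      simp [f]
      ring
  have hb := hb_poly_bound (MvPolynomial.aeval f g) g.totalDegree
    (by simpa using MvPolynomial.aeval_natDegree_le g le_rfl f (n := 1)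
          (fun i => Polynomial.natDegree_linear_le)) (by
      intro u hu
      rw [hev]
      apply hb_stable_re hs
      intro i
      rw [Complex.re_ofReal_mul]
      apply mul_pos ht
      have h1 : ‖u * (w i - z i)‖ < (z i).re := by
        rw [norm_mul]
        exact (mul_le_of_le_one_left (norm_nonneg _) hu.le).trans_lt (hw i)
      have h2 := (abs_le.mp (Complex.abs_re_le_norm (u * (w i - z i)))).1
      rw [Complex.add_re]
      linarith)
  rw [hev, hev] at hb
  simpa using hb

lemma hb_scale {n : ℕ} (g : MvPolynomial (Fin n) ℂ) (k : ℕ) (t : ℂ) (w : Fin n → ℂ) :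
    MvPolynomial.eval (fun i => t * w i) (homogeneousComponent k g) =
      t ^ k * MvPolynomial.eval w (homogeneousComponent k g) := by
  rw [MvPolynomial.eval_eq', MvPolynomial.eval_eq', Finset.mul_sum]
  refine Finset.sum_congr rfl (fun d hd => ?_)
  have hdeg : ∑ i, d i = k := by
    have h := MvPolynomial.mem_support_iff.mp hd
    rw [coeff_homogeneousComponent] at h
    have h2 : d.degree = k := by
      by_contra hne
      simp [hne] at h
    rw [← h2, Finsupp.degree_eq_sum]
  simp_rw [mul_pow]
  rw [Finset.prod_mul_distrib, Finset.prod_pow_eq_pow_sum, hdeg]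
  ring

lemma hb_expand {n : ℕ} (g : MvPolynomial (Fin n) ℂ) (K : ℕ)
    (hK : ∀ d ∈ g.support, (d.sum fun _ e => e) ≤ K) (t : ℂ) (w : Fin n → ℂ) :
    MvPolynomial.eval (fun i => t * w i) g =
      ∑ k ∈ Finset.range (K + 1), t ^ k * MvPolynomial.eval w (homogeneousComponent k g) := by
  have h : g = ∑ k ∈ Finset.range (K + 1), homogeneousComponent k g := by
    ext d
    rw [coeff_sum]
    simp_rw [coeff_homogeneousComponent]
    rw [Finset.sum_ite_eq]
    split_ifs with h
    · rfl
    · by_contra hne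
      have := hK d (MvPolynomial.mem_support_iff.mpr hne)
      change d.degree ≤ K at this
      exact h (Finset.mem_range.mpr (by omega))
  conv_lhs => rw [h]
  rw [map_sum]
  exact Finset.sum_congr rfl (fun k _ => hb_scale g k t w)

/-- If all `a w` are continuous families dominated by `a z`, limit passage at `0`. -/
lemma hb_limit (a b : ℂ → ℂ) (ha : Continuous a) (hb : Continuous b) (C : ℝ)
    (h : ∀ s : ℝ, 0 < s → ‖a s‖ ≤ C * ‖b s‖) (hb0 : b 0 = 0) : a 0 = 0 := by
  have h1 : Filter.Tendsto (fun s : ℝ => ‖a s‖) (nhdsWithin 0 (Set.Ioi 0)) (nhds ‖a 0‖) := by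
    have : Continuous (fun s : ℝ => ‖a s‖) := by fun_prop
    simpa using (this.tendsto 0).mono_left nhdsWithin_le_nhds
  have h2 : Filter.Tendsto (fun s : ℝ => C * ‖b s‖) (nhdsWithin 0 (Set.Ioi 0))
      (nhds (C * ‖b 0‖)) := by
    have : Continuous (fun s : ℝ => C * ‖b s‖) := by fun_prop
    simpa using (this.tendsto 0).mono_left nhdsWithin_le_nhds
  have h3 := le_of_tendsto_of_tendsto h1 h2
    (Filter.eventually_of_mem self_mem_nhdsWithin (fun s hs => h s hs))
  rw [hb0, norm_zero, mul_zero] at h3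
  exact norm_le_zero_iff.mp h3

lemma hb_zero_of_ball {n : ℕ} (p : MvPolynomial (Fin n) ℂ) (z : Fin n → ℂ)
    (hz : ∀ i, 0 < (z i).re)
    (h : ∀ w : Fin n → ℂ, (∀ i, ‖w i - z i‖ < (z i).re) → MvPolynomial.eval w p = 0) :
    p = 0 := by
  refine MvPolynomial.funext_set (fun i => Metric.ball (z i) (z i).re) (fun i => ?_) ?_
  · exact infinite_of_mem_nhds (z i) (Metric.ball_mem_nhds _ (hz i))
  · intro w hw
    rw [map_zero]
    apply h
    intro i
    have := hw i (Set.mem_univ i)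
    rwa [Metric.mem_ball, dist_eq_norm] at this

lemma hb_component_ne {n : ℕ} (g : MvPolynomial (Fin n) ℂ) (k : ℕ)
    (h : ∃ d ∈ g.support, (d.sum fun _ e => e) = k) : homogeneousComponent k g ≠ 0 := by
  obtain ⟨d, hd, hdk⟩ := h
  intro h0
  have h1 := congrArg (coeff d) h0
  rw [coeff_homogeneousComponent, if_pos (show d.degree = k from hdk), coeff_zero] at h1
  exact MvPolynomial.mem_support_iff.mp hd h1

lemma hb_max_ne {n : ℕ} (g : MvPolynomial (Fin n) ℂ) (hs : SectorStable 1 g) (K : ℕ)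
    (hKm : ∃ d ∈ g.support, (d.sum fun _ e => e) = K)
    (hK : ∀ d ∈ g.support, (d.sum fun _ e => e) ≤ K)
    (z : Fin n → ℂ) (hz : ∀ i, 0 < (z i).re) :
    MvPolynomial.eval z (homogeneousComponent K g) ≠ 0 := by
  intro h0
  refine hb_component_ne g K hKm (hb_zero_of_ball _ z hz (fun w hw => ?_))
  let a : (Fin n → ℂ) → ℂ → ℂ := fun w s => ∑ k ∈ Finset.range (K + 1),
    s ^ (K - k) * MvPolynomial.eval w (homogeneousComponent k g)
  have ha0 : ∀ w, a w 0 = MvPolynomial.eval w (homogeneousComponent K g) := by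
    intro w
    simp only [a]
    rw [Finset.sum_range_succ, Finset.sum_eq_zero]
    · simp
    · intro k hk
      rw [zero_pow (by have := Finset.mem_range.mp hk; omega), zero_mul]
  have hac : ∀ w, Continuous (a w) := by
    intro w
    simp only [a]
    fun_prop
  have hag : ∀ w, ∀ s : ℝ, 0 < s →
      a w s = (s : ℂ) ^ K * MvPolynomial.eval (fun i => ((s⁻¹ : ℝ) : ℂ) * w i) g := by
    intro w s hs
    have hs' : (s : ℂ) ≠ 0 := by exact_mod_cast hs.ne'
    rw [hb_expand g K hK, Finset.mul_sum]
    refine Finset.sum_congr rfl (fun k hk => ?_)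
    have hk' : k ≤ K := by have := Finset.mem_range.mp hk; omega
    rw [pow_sub₀ _ hs' hk', Complex.ofReal_inv, inv_pow]
    ring
  rw [← ha0 w]
  refine hb_limit (a w) (a z) (hac w) (hac z) (2 ^ g.totalDegree) (fun s hs0 => ?_)
    ((ha0 z).trans h0)
  rw [hag w s hs0, hag z s hs0, norm_mul, norm_mul]
  have := hb_ball_bound hs z w hw s⁻¹ (inv_pos.mpr hs0)
  calc _ ≤ ‖(s : ℂ) ^ K‖ * (2 ^ g.totalDegree *
        ‖MvPolynomial.eval (fun i => ((s⁻¹ : ℝ) : ℂ) * z i) g‖) := by gcongr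
    _ = _ := by ring

lemma hb_component_low {n : ℕ} (g : MvPolynomial (Fin n) ℂ) (m : ℕ)
    (hm : ∀ d ∈ g.support, m ≤ (d.sum fun _ e => e)) (k : ℕ) (hk : k < m) :
    homogeneousComponent k g = 0 := by
  apply homogeneousComponent_eq_zero'
  intro d hd
  have := hm d hd
  change m ≤ d.degree at this
  omega

lemma hb_min_ne {n : ℕ} (g : MvPolynomial (Fin n) ℂ) (hs : SectorStable 1 g) (K m : ℕ)
    (hK : ∀ d ∈ g.support, (d.sum fun _ e => e) ≤ K)
    (hmm : ∃ d ∈ g.support, (d.sum fun _ e => e) = m)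
    (hm : ∀ d ∈ g.support, m ≤ (d.sum fun _ e => e))
    (z : Fin n → ℂ) (hz : ∀ i, 0 < (z i).re) :
    MvPolynomial.eval z (homogeneousComponent m g) ≠ 0 := by
  intro h0
  refine hb_component_ne g m hmm (hb_zero_of_ball _ z hz (fun w hw => ?_))
  have hmK : m ≤ K := by
    obtain ⟨d, hd, rfl⟩ := hmm
    exact hK d hd
  let a : (Fin n → ℂ) → ℂ → ℂ := fun w s => ∑ k ∈ Finset.range (K + 1),
    s ^ (k - m) * MvPolynomial.eval w (homogeneousComponent k g)
  have ha0 : ∀ w, a w 0 = MvPolynomial.eval w (homogeneousComponent m g) := by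
    intro w
    simp only [a]
    rw [Finset.sum_eq_single m]
    · simp
    · intro k _ hne
      rcases lt_or_gt_of_ne hne with h | h
      · rw [hb_component_low g m hm k h, map_zero, mul_zero]
      · rw [zero_pow (by omega), zero_mul]
    · intro h
      exact absurd (Finset.mem_range.mpr (by omega)) h
  have hac : ∀ w, Continuous (a w) := by
    intro w
    simp only [a]
    fun_prop
  have hag : ∀ w, ∀ s : ℝ,
      MvPolynomial.eval (fun i => (s : ℂ) * w i) g = (s : ℂ) ^ m * a w s := by
    intro w s
    rw [hb_expand g K hK, Finset.mul_sum]
    refine Finset.sum_congr rfl (fun k hk => ?_)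
    rcases lt_or_ge k m with h | h
    · rw [hb_component_low g m hm k h, map_zero, mul_zero, mul_zero, mul_zero]
    · rw [← mul_assoc, ← pow_add, Nat.add_sub_cancel' h]
  rw [← ha0 w]
  refine hb_limit (a w) (a z) (hac w) (hac z) (2 ^ g.totalDegree) (fun s hs0 => ?_)
    ((ha0 z).trans h0)
  have := hb_ball_bound hs z w hw s hs0
  rw [hag w s, hag z s, norm_mul, norm_mul] at this
  have hpos : 0 < ‖(s : ℂ) ^ m‖ := by
    rw [norm_pos_iff]
    exact pow_ne_zero _ (by exact_mod_cast hs0.ne')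
  refine le_of_mul_le_mul_left ?_ hpos
  linarith

/-- Coefficients of a strictly Hurwitz polynomial do not vanish. -/
lemma hb_coeff_ne (N : ℕ) : ∀ q : Polynomial ℂ, q.natDegree = N →
    (∀ s : ℂ, 0 ≤ s.re → q.eval s ≠ 0) → ∀ j ≤ N, q.coeff j ≠ 0 := by
  induction N with
  | zero =>
    intro q _ h j hj
    obtain rfl : j = 0 := by omega
    rw [Polynomial.coeff_zero_eq_eval_zero]
    exact h 0 le_rfl
  | succ N ih =>
    intro q hq h j hj
    rcases j with _ | j
    · rw [Polynomial.coeff_zero_eq_eval_zero]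
      exact h 0 le_rfl
    · have hdeg : 0 < q.degree := Polynomial.natDegree_pos_iff_degree_pos.mp (by omega)
      have hd : q.derivative.natDegree = N := by
        rw [Polynomial.natDegree_derivative, hq]; rfl
      have hd0 : q.derivative ≠ 0 := by
        intro h0
        have := Polynomial.natDegree_eq_zero_of_derivative_eq_zero h0
        omega
      have key := ih q.derivative hd (by
        intro s hs h0
        have hmem : s ∈ q.derivative.rootSet ℂ := by
          rw [Polynomial.mem_rootSet, Polynomial.coe_aeval_eq_eval]
          exact ⟨hd0, h0⟩
        have hc := Polynomial.rootSet_derivative_subset_convexHull_rootSet hdeg hmem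
        have hsub : convexHull ℝ (q.rootSet ℂ) ⊆ {s : ℂ | s.re < 0} := by
          refine convexHull_min ?_ (convex_halfSpace_re_lt 0)
          intro r hr
          rw [Polynomial.mem_rootSet, Polynomial.coe_aeval_eq_eval] at hr
          by_contra hlt
          exact h r (not_lt.mp hlt) hr.2
        exact absurd (hsub hc) (not_lt.mpr hs)) j (by omega)
      rw [Polynomial.coeff_derivative] at key
      exact left_ne_zero_of_mul key

lemma hb_quarter (z : ℂ) (hz : z ≠ 0) (h : |z.arg| < 1 / 2 * Real.pi / 2) : |z.im| < z.re := by
  have hpi := Real.pi_pos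
  have hre : 0 < z.re := by
    rcases Complex.abs_arg_lt_pi_div_two_iff.mp (show |z.arg| < Real.pi / 2 by linarith) with h | h
    · exact h
    · exact absurd h hz
  have hcos : 0 < Real.cos (2 * z.arg) := by
    have := abs_lt.mp h
    exact Real.cos_pos_of_mem_Ioo ⟨by linarith, by linarith⟩
  have h1 := Complex.norm_mul_cos_arg z
  have h2 := Complex.norm_mul_sin_arg z
  have hn : 0 < ‖z‖ := norm_pos_iff.mpr hz
  have h3 : 0 < z.re ^ 2 - z.im ^ 2 := by
    rw [← h1, ← h2]
    have : (‖z‖ * Real.cos z.arg) ^ 2 - (‖z‖ * Real.sin z.arg) ^ 2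
        = ‖z‖ ^ 2 * Real.cos (2 * z.arg) := by
      rw [Real.cos_two_mul']; ring
    rw [this]
    positivity
  exact abs_lt_of_sq_lt_sq (by linarith) hre.le

lemma hb_sqrt (s : ℂ) (hs : 0 ≤ s.re) (hs0 : s ≠ 0) :
    ∃ t : ℂ, t ^ 2 = s ∧ 0 < t.re ∧ |t.im| ≤ t.re := by
  obtain ⟨t, ht⟩ : ∃ t : ℂ, t ^ 2 = s := IsAlgClosed.exists_pow_nat_eq s (by norm_num)
  obtain ⟨t, ht, htre⟩ : ∃ t : ℂ, t ^ 2 = s ∧ 0 ≤ t.re := by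
    rcases le_total 0 t.re with h | h
    · exact ⟨t, ht, h⟩
    · exact ⟨-t, by rw [neg_sq, ht], by simpa using h⟩
  have hre : s.re = t.re ^ 2 - t.im ^ 2 := by
    rw [← ht, pow_two, Complex.mul_re]; ring
  have him : |t.im| ≤ t.re := abs_le_of_sq_le_sq (by linarith) htre
  refine ⟨t, ht, lt_of_le_of_ne htre (fun h0 => hs0 ?_), him⟩
  rw [← h0] at him
  have : t = 0 := Complex.ext h0.symm (abs_nonpos_iff.mp him)
  rw [← ht, this]
  simp

lemma hb_mul_re (t z : ℂ) (h0 : 0 < t.re) (ht : |t.im| ≤ t.re) (hz : |z.im| < z.re) :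
    0 < (t * z).re := by
  rw [Complex.mul_re]
  have h1 : t.im * z.im ≤ |t.im| * |z.im| := by
    rw [← abs_mul]; exact le_abs_self _
  have h2 : |t.im| * |z.im| ≤ t.re * |z.im| := by gcongr
  have h3 : t.re * |z.im| < t.re * z.re := by gcongr
  linarith

/-- If `g` is a nonzero Hurwitz-stable (`Γ₁`-stable) polynomial all of whose monomials
have total degree of the same parity, then for any `k` between the minimal and maximal
total degree with `k ≡ k_max (mod 2)`, the degree-`k` part of `g` is `Γ_{1/2}`-stable. -/
theorem homogeneousComponent_sectorStable_of_hurwitz_constant_parity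
    {n : ℕ} (g : MvPolynomial (Fin n) ℂ) (hg : g ≠ 0)
    (hstable : SectorStable 1 g)
    (hparity : ∀ d ∈ g.support, ∀ d' ∈ g.support,
      (d.sum fun _ e => e) % 2 = (d'.sum fun _ e => e) % 2)
    (kmin kmax : ℕ)
    (hkmaxmem : ∃ d ∈ g.support, (d.sum fun _ e => e) = kmax)
    (hkmaxub : ∀ d ∈ g.support, (d.sum fun _ e => e) ≤ kmax)
    (hkminmem : ∃ d ∈ g.support, (d.sum fun _ e => e) = kmin)
    (hkminlb : ∀ d ∈ g.support, kmin ≤ (d.sum fun _ e => e))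
    (k : ℕ) (hk1 : kmin ≤ k) (hk2 : k ≤ kmax) (hk3 : k % 2 = kmax % 2) :
    SectorStable (1 / 2) (MvPolynomial.homogeneousComponent k g) := by
  intro z hz
  have hz' : ∀ i, |(z i).im| < (z i).re := fun i => hb_quarter (z i) (hz i).1 (hz i).2
  have hzre : ∀ i, 0 < (z i).re := fun i => (abs_nonneg _).trans_lt (hz' i)
  have hmax := hb_max_ne g hstable kmax hkmaxmem hkmaxub z hzre
  have hmin := hb_min_ne g hstable kmax kmin hkmaxub hkminmem hkminlb z hzre
  have hpar : kmin % 2 = kmax % 2 := by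
    obtain ⟨d, hd, rfl⟩ := hkmaxmem
    obtain ⟨d', hd', rfl⟩ := hkminmem
    exact hparity _ hd' _ hd
  obtain ⟨N, hN⟩ : ∃ N, kmax = kmin + 2 * N := ⟨(kmax - kmin) / 2, by omega⟩
  obtain ⟨j, hj⟩ : ∃ j, k = kmin + 2 * j := ⟨(k - kmin) / 2, by omega⟩
  let c : ℕ → ℂ := fun k => MvPolynomial.eval z (homogeneousComponent k g)
  let q : Polynomial ℂ := ∑ i ∈ Finset.range (N + 1),
    Polynomial.monomial i (c (kmin + 2 * i))
  have hqc : ∀ i, q.coeff i = if i ≤ N then c (kmin + 2 * i) else 0 := by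
    intro i
    simp only [q]
    rw [Polynomial.finsetSum_coeff]
    simp_rw [Polynomial.coeff_monomial]
    rw [Finset.sum_ite_eq']
    simp [Nat.lt_succ_iff]
  have hqN : q.natDegree = N := by
    refine Polynomial.natDegree_eq_of_le_of_coeff_ne_zero ?_ ?_
    · rw [Polynomial.natDegree_le_iff_coeff_eq_zero]
      intro i hi
      rw [hqc, if_neg (by omega)]
    · rw [hqc, if_pos le_rfl, ← hN]
      exact hmax
  have hcodd : ∀ i, (∀ j, i ≠ kmin + 2 * j) → c i = 0 := by
    intro i hi
    have : homogeneousComponent i g = 0 := by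
      apply homogeneousComponent_eq_zero'
      intro d hd hdi
      obtain ⟨d', hd', hdm⟩ := hkminmem
      have h1 := hparity d hd d' hd'
      have h2 := hkminlb d hd
      have h3 : (d.sum fun _ e => e) = i := hdi
      exact hi ((i - kmin) / 2) (by omega)
    simp only [c]
    rw [this, map_zero]
  have hq : ∀ s : ℂ, 0 ≤ s.re → q.eval s ≠ 0 := by
    intro s hs
    by_cases hs0 : s = 0
    · rw [hs0, ← Polynomial.coeff_zero_eq_eval_zero, hqc, if_pos (Nat.zero_le _)]
      exact hmin
    · obtain ⟨t, ht, htre, htim⟩ := hb_sqrt s hs hs0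
      have hne := hb_stable_re hstable (fun i => t * z i)
        (fun i => hb_mul_re t (z i) htre htim (hz' i))
      rw [hb_expand g kmax hkmaxub] at hne
      have heq : ∑ k ∈ Finset.range (kmax + 1),
          t ^ k * MvPolynomial.eval z (homogeneousComponent k g) = t ^ kmin * q.eval s := by
        simp only [q]
        rw [Polynomial.eval_finsetSum, Finset.mul_sum]
        symm
        refine Finset.sum_of_injOn (fun i => kmin + 2 * i) ?_ ?_ ?_ ?_
        · intro x _ y _ hxy
          simp only at hxy
          omega
        · intro x hx
          simp only [Finset.coe_range, Set.mem_Iio] at hx ⊢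
          omega
        · intro i hi hni
          have h0 : c i = 0 := by
            apply hcodd
            intro j hj
            apply hni
            refine ⟨j, ?_, hj.symm⟩
            have := Finset.mem_range.mp hi
            simp only [Finset.coe_range, Set.mem_Iio]
            omega
          simp only [c] at h0
          rw [h0, mul_zero]
        · intro i _
          rw [Polynomial.eval_monomial, ← ht, pow_add, pow_mul]
          ring
      rw [heq] at hne
      exact right_ne_zero_of_mul hne
  have := hb_coeff_ne N q hqN hq j (by omega)
  rw [hqc, if_pos (by omega), ← hj] at this
  exact this
end

section
/- Let A ∈ ℝ^{n×n} be a matrix such that A + Aᵀ is positive semidefinite. Define f(z₁,…,zₙ) = Σ_{S ⊆ [n]} det(A_{S,S}) · Π_{i ∉ S} z_i, where A_{S,S} is the principal submatrix of A indexed by S (with det of the empty matrix equal to 1). Then f has nonnegative coefficients, and f is either identically 0 or Hurwitz-stable. -/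
open Finset Matrix

/-- The determinant of the principal submatrix `A_{S,S}` (with `det(A_{∅,∅}) = 1`). -/
noncomputable def principalMinor {n : ℕ} (A : Matrix (Fin n) (Fin n) ℝ)
    (S : Finset (Fin n)) : ℝ :=
  (A.submatrix (fun x : {i // i ∈ S} => (x : Fin n)) (fun x : {i // i ∈ S} => (x : Fin n))).det

/-- The polynomial `f(z) = Σ_{S ⊆ [n]} det(A_{S,S}) Π_{i ∉ S} z_i`, as a function on `ℂⁿ`. -/
noncomputable def minorPoly {n : ℕ} (A : Matrix (Fin n) (Fin n) ℝ) (z : Fin n → ℂ) : ℂ :=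
  ∑ S : Finset (Fin n), (principalMinor A S : ℂ) * ∏ i ∈ Sᶜ, z i

lemma mp_eq_det {n : ℕ} (A : Matrix (Fin n) (Fin n) ℝ) (z : Fin n → ℂ) :
    minorPoly A z = (A.map (algebraMap ℝ ℂ) + diagonal z).det := by
  have h := (detRowAlternating (n := Fin n) (R := ℂ)).toMultilinearMap.map_add_univ
    (fun i => (A.map (algebraMap ℝ ℂ)) i) (fun i => (diagonal z : Matrix _ _ ℂ) i)
  have h2 : (A.map (algebraMap ℝ ℂ) + diagonal z).det = ∑ s : Finset (Fin n),
      Matrix.det (Matrix.of (s.piecewise (fun i => (A.map (algebraMap ℝ ℂ)) i)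
        (fun i => (diagonal z : Matrix _ _ ℂ) i))) := h
  rw [h2, minorPoly]
  refine Finset.sum_congr rfl fun S _ => ?_
  rw [twoBlockTriangular_det _ (fun i => i ∈ S)]
  · refine congrArg₂ (· * ·) ?_ ?_
    · have h3 : toSquareBlockProp (Matrix.of (S.piecewise (fun i => (A.map (algebraMap ℝ ℂ)) i)
        (fun i => (diagonal z : Matrix _ _ ℂ) i))) (fun i => i ∈ S)
          = (algebraMap ℝ ℂ).mapMatrix (A.submatrix (fun x : {i // i ∈ S} => (x : Fin n))
              (fun x : {i // i ∈ S} => (x : Fin n))) := by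
        ext i j
        simp [toSquareBlockProp, Finset.piecewise, i.2]
      rw [h3, principalMinor, ← Complex.coe_algebraMap, RingHom.map_det]
      congr!
    · have : toSquareBlockProp (Matrix.of (S.piecewise (fun i => (A.map (algebraMap ℝ ℂ)) i)
        (fun i => (diagonal z : Matrix _ _ ℂ) i))) (fun i => ¬ i ∈ S)
          = diagonal (fun i : {i // ¬ i ∈ S} => z i) := by
        ext i j
        simp [toSquareBlockProp, Finset.piecewise, i.2, diagonal_apply, Subtype.ext_iff]
      rw [this, det_diagonal]
      exact Finset.prod_subtype _ (by simp) _
  · intro i hi j hj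
    have : i ≠ j := by rintro rfl; exact hi hj
    simp [Finset.piecewise, hi, this]

lemma quad_nonneg {m : Type*} [Fintype m] (A : Matrix m m ℝ)
    (hA : (A + Aᵀ).PosSemidef) (x : m → ℝ) : 0 ≤ x ⬝ᵥ A *ᵥ x := by
  have h := hA.dotProduct_mulVec_nonneg x
  have h2 : x ⬝ᵥ Aᵀ *ᵥ x = x ⬝ᵥ A *ᵥ x := by
    rw [mulVec_transpose, dotProduct_comm, ← dotProduct_mulVec]
  simp only [star_trivial, add_mulVec, dotProduct_add, h2] at h
  linarith

lemma det_nonneg' {m : Type*} [Fintype m] [DecidableEq m] (A : Matrix m m ℝ)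
    (hA : ∀ x, 0 ≤ x ⬝ᵥ A *ᵥ x) : 0 ≤ A.det := by
  by_contra! hneg
  let g : ℝ → ℝ := fun t => (t • (1 : Matrix m m ℝ) + (1 - t) • A).det
  have hg : Continuous g := by
    apply Continuous.matrix_det; fun_prop
  have h0 : g 0 = A.det := by simp [g]
  have h1 : g 1 = 1 := by simp [g]
  obtain ⟨t, ht, hgt⟩ := intermediate_value_Icc (zero_le_one' ℝ) hg.continuousOn
    (show (0 : ℝ) ∈ Set.Icc (g 0) (g 1) by rw [h0, h1]; exact ⟨hneg.le, zero_le_one⟩)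
  have ht0 : 0 < t := by
    rcases ht.1.lt_or_eq with h | h
    · exact h
    · subst h; rw [h0] at hgt; exact absurd hgt hneg.ne
  obtain ⟨v, hv, hv2⟩ := exists_mulVec_eq_zero_iff.mpr hgt
  have h := congrArg (fun w => v ⬝ᵥ w) hv2
  simp only [add_mulVec, smul_mulVec, one_mulVec, dotProduct_add, dotProduct_smul,
    dotProduct_zero, smul_eq_mul] at h
  have hp : 0 < v ⬝ᵥ v := by
    have := dotProduct_star_self_pos_iff.mpr hv
    simpa using this
  have := mul_nonneg (sub_nonneg.mpr ht.2) (hA v)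
  have := mul_pos ht0 hp
  linarith

/-- If `A + Aᵀ` is positive semidefinite, then `f(z) = Σ_S det(A_{S,S}) z^{[n]∖S}` has
nonnegative coefficients and is either identically zero or Hurwitz-stable. -/
theorem minorPoly_nonneg_and_hurwitzStable {n : ℕ} (A : Matrix (Fin n) (Fin n) ℝ)
    (hA : (A + Aᵀ).PosSemidef) :
    (∀ S : Finset (Fin n), 0 ≤ principalMinor A S) ∧
      ((∀ z : Fin n → ℂ, minorPoly A z = 0) ∨
        (∀ z : Fin n → ℂ, (∀ i, 0 < (z i).re) → minorPoly A z ≠ 0)) := by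
  refine ⟨fun S => ?_, Or.inr fun z hz h0 => ?_⟩
  · apply det_nonneg'
    apply quad_nonneg
    exact hA.submatrix (fun x : {i // i ∈ S} => (x : Fin n))
  · rw [mp_eq_det] at h0
    obtain ⟨v, hv, hv2⟩ := exists_mulVec_eq_zero_iff.mpr h0
    have h := congrArg (fun w => (star v ⬝ᵥ w).re) hv2
    simp only [add_mulVec, dotProduct_add, dotProduct_zero, Complex.add_re, Complex.zero_re] at h
    have e1 : (star v ⬝ᵥ (A.map (algebraMap ℝ ℂ)) *ᵥ v).re =
        (fun i => (v i).re) ⬝ᵥ A *ᵥ (fun i => (v i).re) +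
        (fun i => (v i).im) ⬝ᵥ A *ᵥ (fun i => (v i).im) := by
      simp [dotProduct, mulVec, Complex.re_sum, Complex.im_sum, Finset.sum_add_distrib]
    have e2 : (star v ⬝ᵥ (diagonal z) *ᵥ v).re = ∑ i, (z i).re * Complex.normSq (v i) := by
      simp only [dotProduct, mulVec_diagonal, Complex.re_sum]
      refine Finset.sum_congr rfl fun i _ => ?_
      simp [Complex.normSq_apply]
      ring
    have q1 := quad_nonneg A hA (fun i => (v i).re)
    have q2 := quad_nonneg A hA (fun i => (v i).im)
    obtain ⟨i, hi⟩ := Function.ne_iff.mp hv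
    have q3 : 0 < ∑ i, (z i).re * Complex.normSq (v i) :=
      Finset.sum_pos' (fun j _ => mul_nonneg (hz j).le (Complex.normSq_nonneg _))
        ⟨i, Finset.mem_univ _, mul_pos (hz i) (Complex.normSq_pos.mpr hi)⟩
    rw [e1, e2] at h
    linarith
end

section
/- Let A ∈ ℝ^{n×n} be such that A + Aᵀ is positive semidefinite, and let 0 ≤ k ≤ n. Then both f_k(z₁,…,zₙ) = Σ_{S ⊆ [n], |S| = k} det(A_{S,S}) · Π_{i ∉ S} z_i and its dual f_k*(z₁,…,zₙ) = Σ_{S ⊆ [n], |S| = k} det(A_{S,S}) · Π_{i ∈ S} z_i have nonnegative coefficients, and each is either identically 0 or Γ_{1/2}-stable. -/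
open Finset Matrix

/-- `f_k(z) = Σ_{|S| = k} det(A_{S,S}) Π_{i ∉ S} z_i`, as a function on `ℂⁿ`. -/
noncomputable def minorPolyCard {n : ℕ} (A : Matrix (Fin n) (Fin n) ℝ) (k : ℕ)
    (z : Fin n → ℂ) : ℂ :=
  ∑ S ∈ univ.filter (fun S : Finset (Fin n) => S.card = k),
    (principalMinor A S : ℂ) * ∏ i ∈ Sᶜ, z i

/-- The dual `f_k*(z) = Σ_{|S| = k} det(A_{S,S}) Π_{i ∈ S} z_i`, as a function on `ℂⁿ`. -/
noncomputable def minorPolyCardDual {n : ℕ} (A : Matrix (Fin n) (Fin n) ℝ) (k : ℕ)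
    (z : Fin n → ℂ) : ℂ :=
  ∑ S ∈ univ.filter (fun S : Finset (Fin n) => S.card = k),
    (principalMinor A S : ℂ) * ∏ i ∈ S, z i

lemma aux_qf {ι : Type*} [Fintype ι] [DecidableEq ι] {A : Matrix ι ι ℝ} (hA : (A + Aᵀ).PosDef)
    {x : ι → ℝ} (hx : x ≠ 0) : 0 < x ⬝ᵥ (A *ᵥ x) := by
  have h := hA.dotProduct_mulVec_pos hx
  have h2 : x ⬝ᵥ (Aᵀ *ᵥ x) = x ⬝ᵥ (A *ᵥ x) := by
    rw [Matrix.mulVec_transpose, dotProduct_comm, ← Matrix.dotProduct_mulVec]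
  simp only [star_trivial, Matrix.add_mulVec, dotProduct_add, h2] at h
  linarith

lemma aux_qf' {ι : Type*} [Fintype ι] [DecidableEq ι] {A : Matrix ι ι ℝ} (hA : (A + Aᵀ).PosDef)
    (x : ι → ℝ) : 0 ≤ x ⬝ᵥ (A *ᵥ x) := by
  by_cases hx : x = 0
  · simp [hx]
  · exact (aux_qf hA hx).le

lemma aux_det_pos {ι : Type*} [Fintype ι] [DecidableEq ι] {A : Matrix ι ι ℝ}
    (hA : (A + Aᵀ).PosDef) : 0 < A.det := by
  by_contra hneg
  push Not at hneg
  let g : ℝ → ℝ := fun t => ((1 - t) • (1 : Matrix ι ι ℝ) + t • A).det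
  have hg : Continuous g := by
    apply Continuous.matrix_det
    fun_prop
  have h0 : g 0 = 1 := by simp [g]
  have h1 : g 1 = A.det := by simp [g]
  obtain ⟨t, ht, hgt⟩ := intermediate_value_Icc' (zero_le_one (α := ℝ)) hg.continuousOn
    (show (0 : ℝ) ∈ Set.Icc (g 1) (g 0) from ⟨by rw [h1]; exact hneg, by rw [h0]; norm_num⟩)
  obtain ⟨v, hv, hMv⟩ := Matrix.exists_mulVec_eq_zero_iff.2 hgt
  have h3 : v ⬝ᵥ (((1 - t) • (1 : Matrix ι ι ℝ) + t • A) *ᵥ v) = 0 := by rw [hMv]; simp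
  rw [Matrix.add_mulVec, Matrix.smul_mulVec, Matrix.smul_mulVec, Matrix.one_mulVec,
    dotProduct_add, dotProduct_smul, dotProduct_smul, smul_eq_mul, smul_eq_mul] at h3
  have h4 := aux_qf hA hv
  have h5 : 0 < v ⬝ᵥ v := by
    have := Matrix.dotProduct_star_self_pos_iff.2 hv
    simpa using this
  rcases eq_or_lt_of_le ht.1 with h | h
  · subst h; simp at h3; exact hv h3
  · nlinarith [mul_pos h h4, mul_nonneg (sub_nonneg.2 ht.2) h5.le]

lemma aux_minor_pos {n : ℕ} {A : Matrix (Fin n) (Fin n) ℝ} (hA : (A + Aᵀ).PosDef)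
    (S : Finset (Fin n)) : 0 < principalMinor A S := by
  unfold principalMinor
  apply aux_det_pos
  exact hA.submatrix (e := fun x : {i // i ∈ S} => (x : Fin n)) Subtype.val_injective

lemma aux_nonsing {n : ℕ} {A : Matrix (Fin n) (Fin n) ℝ} (hA : (A + Aᵀ).PosDef)
    (d : Fin n → ℂ) (hd : ∀ i, 0 ≤ (d i).re) :
    (Matrix.diagonal d + A.map (fun a : ℝ => (a : ℂ))).det ≠ 0 := by
  intro h0
  obtain ⟨v, hv, hMv⟩ := Matrix.exists_mulVec_eq_zero_iff.2 h0
  set x : Fin n → ℝ := fun i => (v i).re with hx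
  set y : Fin n → ℝ := fun i => (v i).im with hy
  have key : (star v ⬝ᵥ ((Matrix.diagonal d + A.map (fun a : ℝ => (a : ℂ))) *ᵥ v)).re
      = ∑ i, (d i).re * ((x i)^2 + (y i)^2) + x ⬝ᵥ (A *ᵥ x) + y ⬝ᵥ (A *ᵥ y) := by
    have hdg : Matrix.diagonal d *ᵥ v = fun i => d i * v i := by
      funext i; exact Matrix.mulVec_diagonal d v i
    have e1 : (star v ⬝ᵥ (Matrix.diagonal d *ᵥ v)).re
        = ∑ i, (d i).re * ((x i)^2 + (y i)^2) := by
      rw [hdg]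
      simp only [dotProduct, Complex.re_sum]
      refine Finset.sum_congr rfl fun i _ => ?_
      simp [hx, hy]; ring
    have e2 : (star v ⬝ᵥ (A.map (fun a : ℝ => (a : ℂ)) *ᵥ v)).re
        = x ⬝ᵥ (A *ᵥ x) + y ⬝ᵥ (A *ᵥ y) := by
      simp only [dotProduct, Matrix.mulVec, Matrix.map_apply, Complex.re_sum, Finset.mul_sum,
        ← Finset.sum_add_distrib]
      refine Finset.sum_congr rfl fun i _ => ?_
      refine Finset.sum_congr rfl fun j _ => ?_
      simp [hx, hy]
    rw [Matrix.add_mulVec, dotProduct_add, Complex.add_re, e1, e2]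
    ring
  rw [hMv] at key
  simp only [dotProduct_zero, Complex.zero_re] at key
  have h1 : 0 ≤ ∑ i, (d i).re * ((x i)^2 + (y i)^2) :=
    Finset.sum_nonneg fun i _ => mul_nonneg (hd i) (by positivity)
  have h2 := aux_qf' hA x
  have h3 := aux_qf' hA y
  have hx0 : x = 0 := by
    by_contra h
    linarith [aux_qf hA h]
  have hy0 : y = 0 := by
    by_contra h
    linarith [aux_qf hA h]
  apply hv
  funext i
  apply Complex.ext
  · exact congrFun hx0 i
  · exact congrFun hy0 i

lemma aux_mprod (s : Multiset ℂ) (hs : ∀ r ∈ s, r.re < 0) :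
    ‖(s.map fun r => (-1 - r)).prod‖ ≤ ‖(s.map fun r => (1 - r)).prod‖ ∧
    0 < ‖(s.map fun r => (1 - r)).prod‖ ∧
    (s ≠ 0 → ‖(s.map fun r => (-1 - r)).prod‖ < ‖(s.map fun r => (1 - r)).prod‖) := by
  induction s using Multiset.induction_on with
  | empty => simp
  | cons a s ih =>
    have ha := hs a (Multiset.mem_cons_self a s)
    obtain ⟨h1, h2, -⟩ := ih (fun r hr => hs r (Multiset.mem_cons_of_mem hr))
    have hlt : ‖-1 - a‖ < ‖1 - a‖ := by
      rw [← sq_lt_sq₀ (norm_nonneg _) (norm_nonneg _), Complex.sq_norm, Complex.sq_norm,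
        Complex.normSq_apply, Complex.normSq_apply]
      simp
      nlinarith
    have h3 : ‖-1 - a‖ * ‖(s.map fun r => (-1 - r)).prod‖
        < ‖1 - a‖ * ‖(s.map fun r => (1 - r)).prod‖ :=
      mul_lt_mul_of_lt_of_le_of_nonneg_of_pos hlt h1 (norm_nonneg _) h2
    simp only [Multiset.map_cons, Multiset.prod_cons, norm_mul]
    refine ⟨h3.le, ?_, fun _ => h3⟩
    exact lt_of_le_of_lt (by positivity) h3

lemma aux_rootbound (p : Polynomial ℂ) (N : ℕ) (hN : p.natDegree ≤ N) (ρ : ℝ) (hρ : 0 < ρ)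
    (hr : ∀ r ∈ p.roots, ρ ≤ ‖r‖) :
    ‖p.eval 1‖ ≤ (1 + 1 / ρ) ^ N * ‖p.eval 0‖ := by
  have hs := IsAlgClosed.splits p
  have hm : ∀ s : Multiset ℂ, (∀ r ∈ s, ρ ≤ ‖r‖) →
      ‖(s.map fun r => (1 - r)).prod‖ ≤
        (1 + 1 / ρ) ^ (Multiset.card s) * ‖(s.map fun r => (0 - r)).prod‖ := by
    intro s
    induction s using Multiset.induction_on with
    | empty => simp
    | cons a s ih =>
      intro hs
      have ha := hs a (Multiset.mem_cons_self a s)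
      have h1 := ih (fun r hr => hs r (Multiset.mem_cons_of_mem hr))
      simp only [Multiset.map_cons, Multiset.prod_cons, norm_mul, Multiset.card_cons, pow_succ]
      have h2 : ‖1 - a‖ ≤ (1 + 1 / ρ) * ‖0 - a‖ := by
        have := norm_sub_le (1 : ℂ) a
        simp only [norm_one, zero_sub, norm_neg] at this ⊢
        have h3 : 1 ≤ 1 / ρ * ‖a‖ := by
          rw [one_div, ← div_eq_inv_mul, le_div_iff₀ hρ]; linarith
        linarith
      calc _ ≤ ((1 + 1 / ρ) * ‖0 - a‖) * _ := mul_le_mul h2 h1 (norm_nonneg _) (by positivity)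
        _ = _ := by ring
  have h1 := hm p.roots hr
  rw [hs.eval_eq_prod_roots, hs.eval_eq_prod_roots, norm_mul, norm_mul]
  have h2 : (1 + 1 / ρ) ^ (Multiset.card p.roots) ≤ (1 + 1 / ρ) ^ N := by
    apply pow_le_pow_right₀
    · have : 0 < 1 / ρ := by positivity
      linarith
    · exact (Polynomial.card_roots' p).trans hN
  calc _ ≤ ‖p.leadingCoeff‖ * ((1 + 1 / ρ) ^ (Multiset.card p.roots)
          * ‖(p.roots.map fun r => (0 - r)).prod‖) := by gcongr
    _ ≤ ‖p.leadingCoeff‖ * ((1 + 1 / ρ) ^ N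
          * ‖(p.roots.map fun r => (0 - r)).prod‖) := by gcongr
    _ = _ := by ring

lemma aux_coeff_ne (Q : Polynomial ℂ) (hQ : ∀ w, Q.eval w = 0 → w.re < 0)
    (j : ℕ) (hj : j ≤ Q.natDegree) : Q.coeff j ≠ 0 := by
  induction j generalizing Q with
  | zero =>
    intro h
    rw [Polynomial.coeff_zero_eq_eval_zero] at h
    simpa using hQ 0 h
  | succ j ih =>
    intro h
    have hdeg : 0 < Q.degree := Polynomial.natDegree_pos_iff_degree_pos.1 (by omega)
    refine ih (Polynomial.derivative Q) ?_ ?_ ?_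
    · intro w hw
      have hne : Polynomial.derivative Q ≠ 0 := by
        intro h0
        have := Polynomial.derivative_eq_zero.1 h0
        omega
      have hmem : w ∈ (Polynomial.derivative Q).rootSet ℂ := by
        rw [Polynomial.mem_rootSet]; exact ⟨hne, by simpa using hw⟩
      have h2 := Polynomial.rootSet_derivative_subset_convexHull_rootSet hdeg hmem
      have h3 : convexHull ℝ (Q.rootSet ℂ) ⊆ {c : ℂ | c.re < 0} := by
        apply convexHull_min _ (convex_halfSpace_re_lt 0)
        intro c hc
        rw [Polynomial.mem_rootSet] at hc
        exact hQ c (by simpa using hc.2)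
      exact h3 h2
    · rw [Polynomial.natDegree_derivative]; omega
    · rw [Polynomial.coeff_derivative, h, zero_mul]

lemma aux_det_lt {n : ℕ} (hn : 0 < n) {A : Matrix (Fin n) (Fin n) ℝ} (hA : (A + Aᵀ).PosDef)
    (u : Fin n → ℂ) (hu : ∀ i, 0 < (u i).re) :
    ‖(Matrix.diagonal u - A.map (fun a : ℝ => (a : ℂ))).det‖ <
      ‖(Matrix.diagonal u + A.map (fun a : ℝ => (a : ℂ))).det‖ := by
  set Ac := A.map (fun a : ℝ => (a : ℂ)) with hAc
  set x : Fin n → ℂ := fun i => ((u i).re : ℂ) with hx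
  set y : Fin n → ℂ := fun i => ((u i).im : ℂ) * Complex.I with hy
  have hx0 : ∀ i, x i ≠ 0 := fun i => by
    simp only [hx]; exact_mod_cast (hu i).ne'
  set M : Matrix (Fin n) (Fin n) ℂ :=
    -(Matrix.diagonal (fun i => (x i)⁻¹) * (Matrix.diagonal y + Ac)) with hM
  have H : ∀ s : ℂ, (∏ i, x i) * M.charpoly.eval s =
      (Matrix.diagonal (fun i => s * x i + y i) + Ac).det := by
    intro s
    rw [Matrix.eval_charpoly, ← Matrix.det_diagonal, ← Matrix.det_mul]
    congr 1
    ext i j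
    simp only [hM, sub_neg_eq_add, Matrix.diagonal_mul, Matrix.add_apply, Matrix.scalar_apply]
    have := hx0 i
    by_cases hij : i = j
    · subst hij; simp only [Matrix.diagonal_apply_eq]; field_simp; ring
    · simp only [Matrix.diagonal_apply_ne _ hij]; field_simp; ring
  have hprod : (∏ i, x i) ≠ 0 := Finset.prod_ne_zero_iff.2 fun i _ => hx0 i
  have hroots : ∀ r ∈ M.charpoly.roots, r.re < 0 := by
    intro r hr
    have hr0 : M.charpoly.eval r = 0 := (Polynomial.mem_roots'.1 hr).2
    by_contra hre
    push Not at hre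
    have h1 := H r
    rw [hr0, mul_zero] at h1
    refine aux_nonsing hA _ ?_ h1.symm
    intro i
    simp only [hx, hy, Complex.add_re, Complex.mul_re, Complex.ofReal_re, Complex.ofReal_im,
      Complex.I_re, Complex.I_im]
    have := mul_nonneg hre (hu i).le
    linarith
  have hs := IsAlgClosed.splits M.charpoly
  have hne : M.charpoly.roots ≠ 0 := by
    apply Polynomial.Splits.roots_ne_zero hs
    rw [Matrix.charpoly_natDegree_eq_dim, Fintype.card_fin]; omega
  have hlt := (aux_mprod _ hroots).2.2 hne
  have hmon : M.charpoly.leadingCoeff = 1 := Matrix.charpoly_monic M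
  have e1 : M.charpoly.eval 1 = (M.charpoly.roots.map fun r => (1 - r)).prod := by
    rw [hs.eval_eq_prod_roots, hmon, one_mul]
  have e2 : M.charpoly.eval (-1) = (M.charpoly.roots.map fun r => (-1 - r)).prod := by
    rw [hs.eval_eq_prod_roots, hmon, one_mul]
  rw [← e1, ← e2] at hlt
  have h1 : (Matrix.diagonal u + Ac).det = (∏ i, x i) * M.charpoly.eval 1 := by
    rw [H]
    congr 3
    funext i
    simp only [hx, hy, one_mul, Complex.re_add_im]
  have h2 : ‖(Matrix.diagonal u - Ac).det‖ = ‖(∏ i, x i) * M.charpoly.eval (-1)‖ := by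
    rw [H, ← RCLike.norm_conj (Matrix.det (Matrix.diagonal u - Ac))]
    have h3 : (starRingEnd ℂ) (Matrix.diagonal u - Ac).det =
        (-1) ^ n * (Matrix.diagonal (fun i => -1 * x i + y i) + Ac).det := by
      rw [RingHom.map_det]
      have := Matrix.det_neg (Matrix.diagonal (fun i => -1 * x i + y i) + Ac)
      rw [Fintype.card_fin] at this
      rw [← this]
      congr 1
      ext i j
      simp only [RingHom.mapMatrix_apply, Matrix.map_apply, Matrix.sub_apply, Matrix.neg_apply,
        Matrix.add_apply, map_sub, hAc, Complex.conj_ofReal]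
      by_cases hij : i = j
      · subst hij
        simp only [Matrix.diagonal_apply_eq, hx, hy]
        apply Complex.ext <;> simp [sub_eq_add_neg, add_comm]
      · simp [Matrix.diagonal_apply_ne _ hij]
    rw [h3, norm_mul, norm_pow, norm_neg, norm_one, one_pow, one_mul]
  rw [h1, h2, norm_mul, norm_mul]
  exact mul_lt_mul_of_pos_left hlt (norm_pos_iff.2 hprod)

/-- The generating polynomial `det (1 + X Z A)` of the dual polynomials. -/
noncomputable def auxP {n : ℕ} (A : Matrix (Fin n) (Fin n) ℝ) (z : Fin n → ℂ) : Polynomial ℂ :=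
  (1 + (Polynomial.X : Polynomial ℂ) •
    (Matrix.diagonal z * A.map (fun a : ℝ => (a : ℂ))).map Polynomial.C).det

lemma auxP_coeff {n : ℕ} (A : Matrix (Fin n) (Fin n) ℝ) (z : Fin n → ℂ) (k : ℕ) :
    (auxP A z).coeff k = minorPolyCardDual A k z := by
  unfold auxP minorPolyCardDual
  rw [Matrix.coeff_det_one_add_X_smul_eq_sum_minors]
  refine Finset.sum_congr ?_ ?_
  · ext S; simp [Finset.mem_powersetCard]
  · intro S _
    have : (Matrix.diagonal z * A.map (fun a : ℝ => (a : ℂ))).submatrix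
        (Subtype.val : S → Fin n) (Subtype.val : S → Fin n) =
        Matrix.diagonal (fun i : S => z i) *
          (A.submatrix (Subtype.val : S → Fin n) (Subtype.val : S → Fin n)).map
            (fun a : ℝ => (a : ℂ)) := by
      ext i j
      simp [Matrix.diagonal_mul]
    rw [this, Matrix.det_mul, Matrix.det_diagonal, mul_comm]
    congr 1
    · unfold principalMinor
      exact (RingHom.map_det Complex.ofRealHom _).symm
    · exact Finset.prod_coe_sort S z

lemma auxP_eval {n : ℕ} (A : Matrix (Fin n) (Fin n) ℝ) (z : Fin n → ℂ) (t : ℂ) :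
    (auxP A z).eval t = (1 + t • (Matrix.diagonal z * A.map (fun a : ℝ => (a : ℂ)))).det := by
  unfold auxP
  rw [← Polynomial.coe_evalRingHom, RingHom.map_det]
  congr 1
  ext i j
  by_cases hij : i = j
  · subst hij; simp
  · simp [hij]

lemma auxP_lt {n : ℕ} (hn : 0 < n) {A : Matrix (Fin n) (Fin n) ℝ} (hA : (A + Aᵀ).PosDef)
    (z : Fin n → ℂ) (t : ℂ) (hz : ∀ i, 0 < (t * z i).re) :
    ‖(auxP A z).eval (-t)‖ < ‖(auxP A z).eval t‖ := by
  have h0 : ∀ i, t * z i ≠ 0 := fun i h => by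
    have := hz i; rw [h] at this; simp at this
  have hu : ∀ i, 0 < ((t * z i)⁻¹).re := fun i => by
    rw [Complex.inv_re]
    exact div_pos (hz i) (Complex.normSq_pos.2 (h0 i))
  have h := aux_det_lt hn hA _ hu
  have hprod : (∏ i, t * z i) ≠ 0 := Finset.prod_ne_zero_iff.2 fun i _ => h0 i
  have e1 : (auxP A z).eval t = (∏ i, t * z i) * (Matrix.diagonal (fun i => (t * z i)⁻¹) +
      A.map (fun a : ℝ => (a : ℂ))).det := by
    rw [auxP_eval, ← Matrix.det_diagonal, ← Matrix.det_mul, Matrix.mul_add,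
      Matrix.diagonal_mul_diagonal]
    congr 1
    ext i j
    by_cases hij : i = j
    · subst hij
      have ht := left_ne_zero_of_mul (h0 i); have hzi := right_ne_zero_of_mul (h0 i)
      simp [Matrix.diagonal_mul, ← mul_assoc]; field_simp
    · simp [Matrix.diagonal_mul, mul_assoc, hij]
  have e2 : (auxP A z).eval (-t) = (∏ i, t * z i) * (Matrix.diagonal (fun i => (t * z i)⁻¹) -
      A.map (fun a : ℝ => (a : ℂ))).det := by
    rw [auxP_eval, ← Matrix.det_diagonal, ← Matrix.det_mul, Matrix.mul_sub,
      Matrix.diagonal_mul_diagonal]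
    congr 1
    ext i j
    by_cases hij : i = j
    · subst hij
      have ht := left_ne_zero_of_mul (h0 i); have hzi := right_ne_zero_of_mul (h0 i)
      simp [Matrix.diagonal_mul, ← mul_assoc, sub_eq_add_neg]; field_simp
    · simp [Matrix.diagonal_mul, mul_assoc, hij]
  rw [e1, e2, norm_mul, norm_mul]
  exact mul_lt_mul_of_pos_left h (norm_pos_iff.2 hprod)

lemma aux_sqrt (w : ℂ) (hw : w ≠ 0) (hre : 0 ≤ w.re) : ∃ t : ℂ, t ^ 2 = w ∧ 0 < t.re ∧
    |t.im| ≤ t.re := by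
  obtain ⟨t, ht⟩ := IsAlgClosed.exists_pow_nat_eq w (n := 2) (by norm_num)
  have key : ∀ t : ℂ, t ^ 2 = w → 0 ≤ t.re → 0 < t.re ∧ |t.im| ≤ t.re := by
    intro t ht h0
    have h1 : w.re = t.re * t.re - t.im * t.im := by rw [← ht, sq, Complex.mul_re]
    have h2 : |t.im| ≤ t.re := abs_le_of_sq_le_sq (by nlinarith) h0
    refine ⟨lt_of_le_of_ne h0 fun h => hw ?_, h2⟩
    rw [← h] at h2
    have h3 : t.im = 0 := abs_eq_zero.1 (le_antisymm h2 (abs_nonneg _))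
    rw [← ht, show t = 0 from Complex.ext h.symm h3]; simp
  rcases le_total 0 t.re with h | h
  · exact ⟨t, ht, key t ht h⟩
  · exact ⟨-t, by rw [neg_sq, ht], key (-t) (by rw [neg_sq, ht]) (by simpa using h)⟩

lemma aux_even_s6 (P : Polynomial ℂ) (t : ℂ) :
    P.eval t + P.eval (-t) = 2 * (Polynomial.contract 2 P).eval (t ^ 2) := by
  have : P + P.comp (Polynomial.C (-1) * Polynomial.X) =
      Polynomial.C 2 * Polynomial.expand ℂ 2 (Polynomial.contract 2 P) := by
    ext m
    rw [Polynomial.coeff_add, Polynomial.comp_C_mul_X_coeff, Polynomial.coeff_C_mul,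
      Polynomial.coeff_expand (by norm_num)]
    rcases Nat.even_or_odd m with h | h
    · rw [if_pos h.two_dvd, Polynomial.coeff_contract (by norm_num), Nat.div_mul_cancel h.two_dvd,
        h.neg_one_pow]; ring
    · rw [if_neg (by intro h2; exact (Nat.not_even_iff_odd.2 h) (even_iff_two_dvd.2 h2)),
        h.neg_one_pow]; ring
  have h2 := congrArg (Polynomial.eval t) this
  simpa [Polynomial.expand_eval] using h2

lemma aux_odd_s6 (P : Polynomial ℂ) (t : ℂ) :
    P.eval t - P.eval (-t) = 2 * t * (Polynomial.contract 2 P.divX).eval (t ^ 2) := by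
  have h1 := aux_even_s6 P.divX t
  have h2 := congrArg (Polynomial.eval t) (Polynomial.X_mul_divX_add P)
  have h3 := congrArg (Polynomial.eval (-t)) (Polynomial.X_mul_divX_add P)
  simp only [Polynomial.eval_add, Polynomial.eval_mul, Polynomial.eval_X, Polynomial.eval_C] at h2 h3
  rw [← h2, ← h3]
  linear_combination t * h1

lemma aux_sum_ne {κ : Type*} (F : Finset κ) (hF : F.Nonempty) (c : κ → ℝ) (w : κ → ℂ)
    (hc : ∀ S ∈ F, 0 < c S) (hw : ∀ S ∈ F, 0 < (w S).re) : ∑ S ∈ F, (c S : ℂ) * w S ≠ 0 := by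
  intro h
  have h1 := congrArg Complex.re h
  rw [Complex.re_sum] at h1
  have h2 : 0 < ∑ S ∈ F, ((c S : ℂ) * w S).re := by
    apply Finset.sum_pos _ hF
    intro S hS
    rw [Complex.re_ofReal_mul]
    exact mul_pos (hc S hS) (hw S hS)
  rw [h1] at h2
  simp at h2

lemma aux_prod_re {κ : Type*} (T : Finset κ) (hT : T.card ≤ 1) (w : κ → ℂ)
    (hw : ∀ i, 0 < (w i).re) : 0 < (∏ i ∈ T, w i).re := by
  rcases Nat.le_one_iff_eq_zero_or_eq_one.1 hT with h | h
  · rw [Finset.card_eq_zero.1 h]; simp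
  · obtain ⟨a, ha⟩ := Finset.card_eq_one.1 h
    rw [ha]; simpa using hw a

lemma aux_filter_nonempty {n k : ℕ} (hk : k ≤ n) :
    (univ.filter (fun S : Finset (Fin n) => S.card = k)).Nonempty := by
  obtain ⟨S, -, hS⟩ := Finset.exists_subset_card_eq
    (s := (univ : Finset (Fin n))) (n := k) (by simpa using hk)
  exact ⟨S, by simpa using hS⟩

lemma aux_low {n k : ℕ} {A : Matrix (Fin n) (Fin n) ℝ} (hA : (A + Aᵀ).PosDef)
    (z : Fin n → ℂ) (hz : ∀ i, 0 < (z i).re) (hk : k ≤ n) (hk1 : k ≤ 1) :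
    minorPolyCardDual A k z ≠ 0 := by
  unfold minorPolyCardDual
  apply aux_sum_ne _ (aux_filter_nonempty hk)
  · intro S _; exact aux_minor_pos hA S
  · intro S hS
    exact aux_prod_re S (by rw [(Finset.mem_filter.1 hS).2]; exact hk1) z hz

lemma aux_high {n k : ℕ} {A : Matrix (Fin n) (Fin n) ℝ} (hA : (A + Aᵀ).PosDef)
    (z : Fin n → ℂ) (hz : ∀ i, 0 < (z i).re) (hk : k ≤ n) (hk1 : n ≤ k + 1) :
    minorPolyCardDual A k z ≠ 0 := by
  have h0 : ∀ i, z i ≠ 0 := fun i h => by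
    have := hz i; rw [h] at this; simp at this
  have : minorPolyCardDual A k z = (∏ i, z i) *
      ∑ S ∈ univ.filter (fun S : Finset (Fin n) => S.card = k),
        (principalMinor A S : ℂ) * ∏ i ∈ Sᶜ, (z i)⁻¹ := by
    unfold minorPolyCardDual
    rw [Finset.mul_sum]
    refine Finset.sum_congr rfl fun S _ => ?_
    have h1 : (∏ i ∈ Sᶜ, z i) ≠ 0 := Finset.prod_ne_zero_iff.2 fun i _ => h0 i
    rw [← Finset.prod_mul_prod_compl S z, Finset.prod_inv_distrib]
    field_simp
  rw [this]
  refine mul_ne_zero (Finset.prod_ne_zero_iff.2 fun i _ => h0 i) ?_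
  apply aux_sum_ne _ (aux_filter_nonempty hk)
  · intro S _; exact aux_minor_pos hA S
  · intro S hS
    refine aux_prod_re Sᶜ ?_ _ ?_
    · rw [Finset.card_compl, (Finset.mem_filter.1 hS).2, Fintype.card_fin]; omega
    · intro i
      rw [Complex.inv_re]
      exact div_pos (hz i) (Complex.normSq_pos.2 (h0 i))

lemma aux_pd {n k : ℕ} {A : Matrix (Fin n) (Fin n) ℝ} (hA : (A + Aᵀ).PosDef)
    (z : Fin n → ℂ) (hz : ∀ i, |(z i).im| < (z i).re) (hk : k ≤ n) :
    minorPolyCardDual A k z ≠ 0 := by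
  have hz' : ∀ i, 0 < (z i).re := fun i => lt_of_le_of_lt (abs_nonneg _) (hz i)
  rcases Nat.eq_zero_or_pos n with hn | hn
  · exact aux_low hA z hz' hk (by omega)
  have hP : ∀ t : ℂ, 0 < t.re → |t.im| ≤ t.re →
      ‖(auxP A z).eval (-t)‖ < ‖(auxP A z).eval t‖ := by
    intro t ht1 ht2
    apply auxP_lt hn hA
    intro i
    rw [Complex.mul_re]
    have h1 : t.im * (z i).im ≤ |t.im| * |(z i).im| := by
      rw [← abs_mul]; exact le_abs_self _
    have h2 : |t.im| * |(z i).im| ≤ t.re * |(z i).im| :=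
      mul_le_mul_of_nonneg_right ht2 (abs_nonneg _)
    have h3 : t.re * |(z i).im| < t.re * (z i).re := mul_lt_mul_of_pos_left (hz i) ht1
    linarith
  rcases Nat.even_or_odd' k with ⟨j, hj | hj⟩
  · have hc : ∀ m, (Polynomial.contract 2 (auxP A z)).coeff m = minorPolyCardDual A (2 * m) z := by
      intro m
      rw [Polynomial.coeff_contract (by norm_num), auxP_coeff, mul_comm]
    rw [hj, ← hc]
    apply aux_coeff_ne
    · intro w hw
      by_contra hre
      push Not at hre
      by_cases hw0 : w = 0
      · rw [hw0, ← Polynomial.coeff_zero_eq_eval_zero, hc] at hw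
        exact aux_low hA z hz' (by omega) (by omega) hw
      · obtain ⟨t, ht, ht1, ht2⟩ := aux_sqrt w hw0 hre
        have h1 := aux_even_s6 (auxP A z) t
        rw [ht, hw, mul_zero] at h1
        have h2 := hP t ht1 ht2
        rw [eq_neg_of_add_eq_zero_left h1, norm_neg] at h2
        exact lt_irrefl _ h2
    · refine le_trans (show j ≤ n / 2 by omega) (Polynomial.le_natDegree_of_ne_zero ?_)
      rw [hc]
      exact aux_high hA z hz' (by omega) (by omega)
  · have hc : ∀ m, (Polynomial.contract 2 (auxP A z).divX).coeff m =
        minorPolyCardDual A (2 * m + 1) z := by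
      intro m
      rw [Polynomial.coeff_contract (by norm_num), Polynomial.coeff_divX, auxP_coeff, mul_comm]
    rw [hj, ← hc]
    apply aux_coeff_ne
    · intro w hw
      by_contra hre
      push Not at hre
      by_cases hw0 : w = 0
      · rw [hw0, ← Polynomial.coeff_zero_eq_eval_zero, hc] at hw
        exact aux_low hA z hz' (by omega) (by omega) hw
      · obtain ⟨t, ht, ht1, ht2⟩ := aux_sqrt w hw0 hre
        have h1 := aux_odd_s6 (auxP A z) t
        rw [ht, hw, mul_zero] at h1
        have h2 := hP t ht1 ht2
        rw [sub_eq_zero.1 h1] at h2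
        exact lt_irrefl _ h2
    · refine le_trans (show j ≤ (n - 1) / 2 by omega) (Polynomial.le_natDegree_of_ne_zero ?_)
      rw [hc]
      exact aux_high hA z hz' (by omega) (by omega)

lemma aux_perturb {n : ℕ} {A : Matrix (Fin n) (Fin n) ℝ} (hA : (A + Aᵀ).PosSemidef)
    {ε : ℝ} (hε : 0 < ε) :
    ((A + ε • (1 : Matrix (Fin n) (Fin n) ℝ)) + (A + ε • (1 : Matrix (Fin n) (Fin n) ℝ))ᵀ).PosDef := by
  have h : (A + ε • (1 : Matrix (Fin n) (Fin n) ℝ)) + (A + ε • (1 : Matrix (Fin n) (Fin n) ℝ))ᵀ =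
      (2 * ε) • (1 : Matrix (Fin n) (Fin n) ℝ) + (A + Aᵀ) := by
    rw [Matrix.transpose_add, Matrix.transpose_smul, Matrix.transpose_one]
    module
  rw [h]
  exact (Matrix.PosDef.one.smul (by positivity)).add_posSemidef hA

lemma aux_minor_cont {n : ℕ} (A : Matrix (Fin n) (Fin n) ℝ) (S : Finset (Fin n)) :
    Continuous fun ε : ℝ => principalMinor (A + ε • (1 : Matrix (Fin n) (Fin n) ℝ)) S := by
  unfold principalMinor
  apply Continuous.matrix_det
  apply Continuous.matrix_submatrix
  fun_prop

lemma aux_minor_nonneg {n : ℕ} {A : Matrix (Fin n) (Fin n) ℝ} (hA : (A + Aᵀ).PosSemidef)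
    (S : Finset (Fin n)) : 0 ≤ principalMinor A S := by
  have h := (aux_minor_cont A S).tendsto 0
  simp only [zero_smul, add_zero] at h
  refine ge_of_tendsto (h.mono_left (nhdsWithin_le_nhds (s := Set.Ioi 0))) ?_
  filter_upwards [self_mem_nhdsWithin] with ε hε
  exact (aux_minor_pos (aux_perturb hA hε) S).le

lemma aux_dual {n k : ℕ} {A : Matrix (Fin n) (Fin n) ℝ} (hA : (A + Aᵀ).PosSemidef) (hk : k ≤ n)
    (S₀ : Finset (Fin n)) (hS₀ : S₀.card = k) (hne : principalMinor A S₀ ≠ 0)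
    (z : Fin n → ℂ) (hz : ∀ i, |(z i).im| < (z i).re) :
    minorPolyCardDual A k z ≠ 0 := by
  -- the segment from `z` to the all-ones vector
  let ζ : ℂ → Fin n → ℂ := fun t i => z i + (1 - z i) * t
  have hζ : ∀ᶠ t in nhds (0 : ℂ), ∀ i, |(ζ t i).im| < (ζ t i).re := by
    rw [Filter.eventually_all]
    intro i
    have hc : Continuous fun t => ζ t i := by fun_prop
    have ho : IsOpen {t : ℂ | |(ζ t i).im| < (ζ t i).re} :=
      isOpen_lt (by fun_prop) (by fun_prop)
    apply ho.mem_nhds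
    simpa [ζ] using hz i
  obtain ⟨ρ, hρ, hball⟩ := Metric.eventually_nhds_iff.1 hζ
  let h : Matrix (Fin n) (Fin n) ℝ → Polynomial ℂ := fun B =>
    ∑ S ∈ univ.filter (fun S : Finset (Fin n) => S.card = k),
      Polynomial.C (principalMinor B S : ℂ) *
        ∏ i ∈ S, (Polynomial.C (z i) + Polynomial.C (1 - z i) * Polynomial.X)
  have heval : ∀ B t, (h B).eval t = minorPolyCardDual B k (ζ t) := by
    intro B t
    simp [h, minorPolyCardDual, ζ, Polynomial.eval_finsetSum, Polynomial.eval_prod]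
  have hdeg : ∀ B, (h B).natDegree ≤ n := by
    intro B
    apply Polynomial.natDegree_sum_le_of_forall_le
    intro S hS
    refine (Polynomial.natDegree_C_mul_le _ _).trans ((Polynomial.natDegree_prod_le _ _).trans ?_)
    refine (Finset.sum_le_sum (g := fun _ => 1) fun i _ => ?_).trans ?_
    · rw [add_comm]; exact Polynomial.natDegree_linear_le
    · rw [Finset.sum_const, smul_eq_mul, mul_one, (Finset.mem_filter.1 hS).2]; exact hk
  have hbound : ∀ ε : ℝ, 0 < ε →
      ‖minorPolyCardDual (A + ε • (1 : Matrix (Fin n) (Fin n) ℝ)) k (ζ 1)‖ ≤ (1 + 1 / ρ) ^ n *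
        ‖minorPolyCardDual (A + ε • (1 : Matrix (Fin n) (Fin n) ℝ)) k (ζ 0)‖ := by
    intro ε hε
    rw [← heval, ← heval]
    apply aux_rootbound _ n (hdeg _) ρ hρ
    intro r hr
    by_contra hlt
    push Not at hlt
    have hr0 := (Polynomial.mem_roots'.1 hr).2
    rw [Polynomial.IsRoot, heval] at hr0
    exact aux_pd (aux_perturb hA hε) (ζ r) (hball (by simpa using hlt)) hk hr0
  have hcont : ∀ w : Fin n → ℂ, Continuous fun ε : ℝ =>
      minorPolyCardDual (A + ε • (1 : Matrix (Fin n) (Fin n) ℝ)) k w := by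
    intro w
    unfold minorPolyCardDual
    refine continuous_finsetSum _ fun S _ => ?_
    exact (Complex.continuous_ofReal.comp (aux_minor_cont A S)).mul continuous_const
  have hlim : ‖minorPolyCardDual A k (ζ 1)‖ ≤ (1 + 1 / ρ) ^ n * ‖minorPolyCardDual A k (ζ 0)‖ := by
    have h1 := ((hcont (ζ 1)).norm).tendsto 0
    have h2 := (((hcont (ζ 0)).norm).tendsto 0).const_mul ((1 + 1 / ρ) ^ n)
    simp only [zero_smul, add_zero] at h1 h2
    refine le_of_tendsto_of_tendsto (h1.mono_left (nhdsWithin_le_nhds (s := Set.Ioi 0)))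
      (h2.mono_left nhdsWithin_le_nhds) ?_
    filter_upwards [self_mem_nhdsWithin] with ε hε
    exact hbound ε hε
  have hz0 : ζ 0 = z := by funext i; simp [ζ]
  have hz1 : ζ 1 = fun _ => 1 := by funext i; simp [ζ]
  intro h0
  rw [hz0, h0, norm_zero, mul_zero, hz1] at hlim
  have h3 := norm_le_zero_iff.1 hlim
  have h4 : ∑ S ∈ univ.filter (fun S : Finset (Fin n) => S.card = k), principalMinor A S = 0 := by
    have : minorPolyCardDual A k (fun _ => 1) =
      ((∑ S ∈ univ.filter (fun S : Finset (Fin n) => S.card = k), principalMinor A S : ℝ) : ℂ) := by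
      simp [minorPolyCardDual]
    rw [this] at h3
    exact_mod_cast h3
  rw [Finset.sum_eq_zero_iff_of_nonneg fun S _ => aux_minor_nonneg hA S] at h4
  exact hne (h4 S₀ (by simpa using hS₀))

lemma aux_sector (z : ℂ) (hz : inSector (1 / 2) z) : |z.im| < z.re := by
  obtain ⟨h0, harg⟩ := hz
  have hp := Real.pi_pos
  have h1 := abs_lt.1 harg
  have hcos : 0 < Real.cos z.arg :=
    Real.cos_pos_of_mem_Ioo ⟨by linarith, by linarith⟩
  have hcos2 : 0 < Real.cos (2 * z.arg) :=
    Real.cos_pos_of_mem_Ioo ⟨by linarith, by linarith⟩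
  rw [Real.cos_two_mul'] at hcos2
  have hlt : |Real.sin z.arg| < Real.cos z.arg := abs_lt_of_sq_lt_sq (by linarith) hcos.le
  have hn : 0 < ‖z‖ := norm_pos_iff.2 h0
  rw [← Complex.norm_mul_cos_arg z, ← Complex.norm_mul_sin_arg z, abs_mul, abs_norm]
  exact mul_lt_mul_of_pos_left hlt hn

lemma aux_inv (z : ℂ) (hz : |z.im| < z.re) : |(z⁻¹).im| < (z⁻¹).re := by
  have h0 : z ≠ 0 := by rintro rfl; simp at hz
  have hn := Complex.normSq_pos.2 h0
  rw [Complex.inv_re, Complex.inv_im, abs_div, abs_neg, abs_of_pos hn]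
  exact div_lt_div_of_pos_right hz hn

/-- If `A + Aᵀ` is positive semidefinite and `0 ≤ k ≤ n`, then both
`f_k = Σ_{|S|=k} det(A_{S,S}) z^{[n]∖S}` and its dual `f_k* = Σ_{|S|=k} det(A_{S,S}) z^S`
have nonnegative coefficients, and each is either identically zero or `Γ_{1/2}`-stable. -/
theorem minorPolyCard_nonneg_and_sectorStable {n : ℕ} (A : Matrix (Fin n) (Fin n) ℝ)
    (hA : (A + Aᵀ).PosSemidef) (k : ℕ) (hk : k ≤ n) :
    (∀ S : Finset (Fin n), S.card = k → 0 ≤ principalMinor A S) ∧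
      ((∀ z : Fin n → ℂ, minorPolyCard A k z = 0) ∨
        (∀ z : Fin n → ℂ, (∀ i, inSector (1 / 2) (z i)) → minorPolyCard A k z ≠ 0)) ∧
      ((∀ z : Fin n → ℂ, minorPolyCardDual A k z = 0) ∨
        (∀ z : Fin n → ℂ, (∀ i, inSector (1 / 2) (z i)) → minorPolyCardDual A k z ≠ 0)) := by

  refine ⟨fun S _ => aux_minor_nonneg hA S, ?_⟩
  by_cases hall : ∀ S : Finset (Fin n), S.card = k → principalMinor A S = 0
  · refine ⟨Or.inl fun z => ?_, Or.inl fun z => ?_⟩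
    · refine Finset.sum_eq_zero fun S hS => ?_
      rw [hall S (Finset.mem_filter.1 hS).2]; simp
    · refine Finset.sum_eq_zero fun S hS => ?_
      rw [hall S (Finset.mem_filter.1 hS).2]; simp
  · push Not at hall
    obtain ⟨S₀, hS₀, hne⟩ := hall
    refine ⟨Or.inr fun z hz => ?_, Or.inr fun z hz =>
      aux_dual hA hk S₀ hS₀ hne z fun i => aux_sector _ (hz i)⟩
    have h1 := aux_dual hA hk S₀ hS₀ hne (fun i => (z i)⁻¹)
      fun i => aux_inv _ (aux_sector _ (hz i))
    have h2 : minorPolyCard A k z = (∏ i, z i) * minorPolyCardDual A k (fun i => (z i)⁻¹) := by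
      unfold minorPolyCard minorPolyCardDual
      rw [Finset.mul_sum]
      refine Finset.sum_congr rfl fun S _ => ?_
      have h3 : (∏ i ∈ S, z i) ≠ 0 := Finset.prod_ne_zero_iff.2 fun i _ => (hz i).1
      rw [← Finset.prod_mul_prod_compl S z, Finset.prod_inv_distrib]
      field_simp
    rw [h2]
    exact mul_ne_zero (Finset.prod_ne_zero_iff.2 fun i _ => (hz i).1) h1
end

section
/- Let g ∈ ℂ[z₁,…,zₙ] be a homogeneous Γ₁-stable polynomial. Let T₁,…,T_k be a partition of [n] and (c₁,…,c_k) ∈ ℤ_{≥0}^k. Define the (T₁,…,T_k)-degree of a monomial z₁^{t₁}⋯zₙ^{tₙ} as (Σ_{i∈T₁} t_i, …, Σ_{i∈T_k} t_i), and let h be the sum of the terms of g whose (T₁,…,T_k)-degree equals (c₁,…,c_k). Then h is either identically zero or Γ_{1/2^k}-stable. -/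
open MvPolynomial Finset

/-- One-variable Hurwitz-type lemma through the maximum modulus principle. -/
lemma hurwitz_one (G : ℝ → ℂ → ℂ) (hc : Continuous (Function.uncurry G))
    (hd : ∀ e, Differentiable ℂ (G e)) (r : ℝ) (hr : 0 < r)
    (hne : ∀ e, 0 < e → ∀ s ∈ Metric.closedBall (0 : ℂ) r, G e s ≠ 0)
    (h0 : ∀ s ∈ Metric.sphere (0 : ℂ) r, G 0 s ≠ 0) : G 0 0 ≠ 0 := by
  intro hz
  have hcompact : IsCompact (Metric.sphere (0 : ℂ) r) := isCompact_sphere 0 r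
  have hnonempty : (Metric.sphere (0 : ℂ) r).Nonempty :=
    NormedSpace.sphere_nonempty.2 hr.le
  have hcont0 : Continuous fun s => ‖G 0 s‖ := (hd 0).continuous.norm
  obtain ⟨s0, hs0, hmin⟩ := hcompact.exists_isMinOn hnonempty hcont0.continuousOn
  set δ := ‖G 0 s0‖ with hδ
  have hδpos : 0 < δ := norm_pos_iff.2 (h0 s0 hs0)
  have ev1 : ∀ᶠ e in nhds (0 : ℝ), ∀ s ∈ Metric.sphere (0 : ℂ) r, δ / 2 < ‖G e s‖ := by
    apply hcompact.eventually_forall_of_forall_eventually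
    intro s hs
    have h1 : δ ≤ ‖G 0 s‖ := hmin hs
    have h2 : Filter.Tendsto (fun p : ℝ × ℂ => ‖G p.1 p.2‖) (nhds (0, s)) (nhds ‖G 0 s‖) :=
      (hc.norm).tendsto (0, s)
    exact h2.eventually (lt_mem_nhds (by linarith))
  have ev2 : ∀ᶠ e in nhds (0 : ℝ), ‖G e 0‖ < δ / 2 := by
    have h2 : Filter.Tendsto (fun e : ℝ => ‖G e 0‖) (nhds 0) (nhds ‖G 0 0‖) := by
      have : Continuous fun e : ℝ => ‖G e 0‖ :=
        (hc.comp (Continuous.prodMk_left (0 : ℂ))).norm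
      exact this.tendsto 0
    rw [hz, norm_zero] at h2
    exact h2.eventually (gt_mem_nhds (by linarith))
  obtain ⟨e, ⟨he1, he2⟩, hepos⟩ :=
    (((ev1.and ev2).filter_mono nhdsWithin_le_nhds).and
      (self_mem_nhdsWithin : Set.Ioi (0 : ℝ) ∈ nhdsWithin 0 (Set.Ioi 0))).exists
  have hepos' : 0 < e := hepos
  have hdc : DiffContOnCl ℂ (fun s => (G e s)⁻¹) (Metric.ball (0 : ℂ) r) := by
    apply DiffContOnCl.inv
    · exact (hd e).diffContOnCl
    · intro s hs
      rw [closure_ball _ hr.ne'] at hs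
      exact hne e hepos' s hs
  have := Complex.norm_le_of_forall_mem_frontier_norm_le (Metric.isBounded_ball) hdc
    (C := (δ / 2)⁻¹) (z := 0) (by
      intro s hs
      rw [frontier_ball _ hr.ne'] at hs
      rw [norm_inv]
      exact inv_anti₀ (by positivity) (he1 s hs).le)
    (subset_closure (Metric.mem_ball_self hr))
  rw [norm_inv] at this
  have hpos : 0 < ‖G e 0‖ :=
    norm_pos_iff.2 (hne e hepos' 0 (Metric.mem_closedBall_self hr.le))
  have h3 := (inv_le_inv₀ hpos (by positivity)).1 this
  linarith

lemma eval_map_eval_cont {n : ℕ} (R : Polynomial (MvPolynomial (Fin n) ℂ))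
    (L : ℂ → Fin n → ℂ) (hL : ∀ i, Differentiable ℂ fun s => L s i) :
    Continuous (Function.uncurry fun (e : ℝ) (s : ℂ) =>
      (R.map (MvPolynomial.eval (L s))).eval (e : ℂ)) ∧
    ∀ e : ℝ, Differentiable ℂ fun s : ℂ =>
      (R.map (MvPolynomial.eval (L s))).eval (e : ℂ) := by
  have hdiff : ∀ Q : MvPolynomial (Fin n) ℂ,
      Differentiable ℂ fun s => MvPolynomial.eval (L s) Q := by
    intro Q
    simp only [MvPolynomial.eval_eq]
    fun_prop
  have key : ∀ (e : ℝ) (s : ℂ), (R.map (MvPolynomial.eval (L s))).eval (e : ℂ) =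
      ∑ m ∈ Finset.range (R.natDegree + 1),
        MvPolynomial.eval (L s) (R.coeff m) * (e : ℂ) ^ m := by
    intro e s
    rw [Polynomial.eval_map, Polynomial.eval₂_eq_sum_range]
  simp only [key]
  constructor
  · unfold Function.uncurry
    refine continuous_finsetSum _ fun m _ => ?_
    exact ((hdiff _).continuous.comp continuous_snd).mul
      ((Complex.continuous_ofReal.comp continuous_fst).pow m)
  · intro e
    refine Differentiable.fun_sum fun m _ => ?_
    exact (hdiff _).mul_const _

lemma hurwitz_multi {n : ℕ} (U : Set (Fin n → ℂ)) (hU : IsOpen U)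
    (R : Polynomial (MvPolynomial (Fin n) ℂ)) (hR : R.coeff 0 ≠ 0)
    (h : ∀ z ∈ U, ∀ e : ℝ, 0 < e → (R.map (MvPolynomial.eval z)).eval (e : ℂ) ≠ 0) :
    ∀ z ∈ U, MvPolynomial.eval z (R.coeff 0) ≠ 0 := by
  intro z0 hz0 hzero
  obtain ⟨z1, hz1⟩ : ∃ z1, MvPolynomial.eval z1 (R.coeff 0) ≠ 0 := by
    by_contra! hcon
    exact hR (MvPolynomial.funext fun x => by simpa using hcon x)
  set L : ℂ → Fin n → ℂ := fun s i => z0 i + s * (z1 i - z0 i) with hLdef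
  have hL : ∀ i, Differentiable ℂ fun s => L s i := by
    intro i; simp only [hLdef]; fun_prop
  have hLc : Continuous L := continuous_pi fun i => (hL i).continuous
  obtain ⟨hc, hd⟩ := eval_map_eval_cont R L hL
  set G : ℝ → ℂ → ℂ := fun e s => (R.map (MvPolynomial.eval (L s))).eval (e : ℂ) with hG
  have hG0 : ∀ s, G 0 s = MvPolynomial.eval (L s) (R.coeff 0) := by
    intro s
    simp only [hG, Complex.ofReal_zero]
    rw [← Polynomial.coeff_zero_eq_eval_zero, Polynomial.coeff_map]
  have hL0 : L 0 = z0 := by ext i; simp [hLdef]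
  have hL1 : L 1 = z1 := by ext i; simp [hLdef]
  have han : AnalyticOnNhd ℂ (G 0) Set.univ :=
    (hd 0).differentiableOn.analyticOnNhd isOpen_univ
  have hev : ∀ᶠ s in nhdsWithin (0 : ℂ) {0}ᶜ, G 0 s ≠ 0 := by
    rcases (han 0 trivial).eventually_eq_zero_or_eventually_ne_zero with h1 | h1
    · exfalso
      have := han.eqOn_zero_of_preconnected_of_eventuallyEq_zero isPreconnected_univ
        (Set.mem_univ 0) h1 (Set.mem_univ 1)
      rw [hG0, hL1] at this
      exact hz1 this
    · exact h1
  have hLU : ∀ᶠ s in nhds (0 : ℂ), L s ∈ U :=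
    hLc.continuousAt.eventually (hU.mem_nhds (by rw [hL0]; exact hz0))
  rw [eventually_nhdsWithin_iff] at hev
  obtain ⟨r, hr, hball⟩ := Metric.eventually_nhds_iff_ball.1 (hev.and hLU)
  have hr2 : 0 < r / 2 := by linarith
  have := hurwitz_one G hc hd (r / 2) hr2
    (fun e he s hs => h (L s) (hball s (Metric.closedBall_subset_ball (by linarith) hs)).2 e he)
    (fun s hs => (hball s (Metric.closedBall_subset_ball (by linarith)
        (Metric.sphere_subset_closedBall hs))).1 (by
          rintro rfl
          simp at hs
          linarith))
  rw [hG0, hL0] at this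
  exact this hzero

/-- Iterated Gauss-Lucas for the right half-plane. -/
lemma gauss_lucas_iter (p : Polynomial ℂ) (h : ∀ y : ℂ, 0 < y.re → p.eval y ≠ 0) (c : ℕ)
    (hc : c ≤ p.natDegree) :
    ∀ y : ℂ, 0 < y.re → (Polynomial.derivative^[c] p).eval y ≠ 0 := by
  induction c with
  | zero => simpa using h
  | succ c ih =>
    intro y hy hzero
    have ih' := ih (by omega)
    rw [Function.iterate_succ_apply'] at hzero
    set q := Polynomial.derivative^[c] p with hq
    have hq0 : q ≠ 0 := by
      intro h0
      apply ih' 1 (by simp)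
      simp [h0]
    have hcoeff : q.coeff (p.natDegree - c) ≠ 0 := by
      rw [hq, Polynomial.coeff_iterate_derivative, Nat.sub_add_cancel (by omega)]
      have hp0 : p ≠ 0 := by rintro rfl; simp at hc
      refine smul_ne_zero ?_ (by simpa using hp0)
      rw [Ne, Nat.descFactorial_eq_zero_iff_lt]
      omega
    have hdeg : 0 < q.degree := by
      rw [← Polynomial.natDegree_pos_iff_degree_pos]
      have := Polynomial.le_natDegree_of_ne_zero hcoeff
      omega
    have hd0 : Polynomial.derivative q ≠ 0 := by
      intro h0
      have := Polynomial.natDegree_eq_zero_of_derivative_eq_zero h0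
      rw [← Polynomial.natDegree_pos_iff_degree_pos] at hdeg
      omega
    have hmem : y ∈ (Polynomial.derivative q).rootSet ℂ := by
      rw [Polynomial.mem_rootSet]
      exact ⟨hd0, by simpa [Polynomial.coe_aeval_eq_eval] using hzero⟩
    have hmem2 := Polynomial.rootSet_derivative_subset_convexHull_rootSet hdeg hmem
    have hsub : convexHull ℝ (q.rootSet ℂ) ⊆ {x : ℂ | x.re ≤ 0} := by
      apply convexHull_min
      · intro x hx
        rw [Polynomial.mem_rootSet] at hx
        by_contra hcon
        simp only [Set.mem_setOf_eq, not_le] at hcon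
        exact ih' x hcon (by simpa [Polynomial.coe_aeval_eq_eval] using hx.2)
      · exact convex_halfSpace_re_le 0
    have := hsub hmem2
    simp only [Set.mem_setOf_eq] at this
    linarith

lemma coeff_nonvanishing {n : ℕ} (U : Set (Fin n → ℂ)) (hU : IsOpen U)
    (P : Polynomial (MvPolynomial (Fin n) ℂ))
    (h : ∀ z ∈ U, ∀ y : ℂ, 0 < y.re → (P.map (MvPolynomial.eval z)).eval y ≠ 0) (c : ℕ)
    (hc : P.coeff c ≠ 0) : ∀ z ∈ U, MvPolynomial.eval z (P.coeff c) ≠ 0 := by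
  have hP : P ≠ 0 := by rintro rfl; simp at hc
  have hlead : ∀ z ∈ U, MvPolynomial.eval z P.leadingCoeff ≠ 0 := by
    have := hurwitz_multi U hU P.reverse (by simpa using hP) (by
      intro z hz e he
      have hre : 0 < ((e⁻¹ : ℝ) : ℂ).re := by simpa using he
      have hne := h z hz _ hre
      have hne0 : ((e⁻¹ : ℝ) : ℂ) ≠ 0 := by
        simpa using he.ne'
      letI := invertibleOfNonzero hne0
      have key := Polynomial.eval₂_reverse_mul_pow (MvPolynomial.eval z) ((e⁻¹ : ℝ) : ℂ) P
      rw [← Polynomial.eval_map, ← Polynomial.eval_map] at key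
      intro h0
      apply hne
      rw [← key]
      have : (⅟((e⁻¹ : ℝ) : ℂ)) = (e : ℂ) := by
        rw [invOf_eq_inv]; simp
      rw [this, h0, zero_mul])
    simpa using this
  have hcM : c ≤ P.natDegree := Polynomial.le_natDegree_of_ne_zero hc
  have hfac : ((c.descFactorial c : ℕ) : ℂ) ≠ 0 := by
    rw [Nat.descFactorial_self]; exact_mod_cast c.factorial_ne_zero
  have hcoef : (Polynomial.derivative^[c] P).coeff 0 = (c.descFactorial c) • P.coeff c := by
    rw [Polynomial.coeff_iterate_derivative, zero_add]
  have := hurwitz_multi U hU (Polynomial.derivative^[c] P) (by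
      rw [hcoef]
      exact smul_ne_zero (by exact_mod_cast hfac) hc) (by
      intro z hz e he
      rw [← Polynomial.iterate_derivative_map]
      apply gauss_lucas_iter _ (h z hz) c
      · rw [Polynomial.natDegree_map_of_leadingCoeff_ne_zero _ (hlead z hz)]
        exact hcM
      · simpa using he)
  intro z hz h0
  apply this z hz
  rw [hcoef, map_nsmul, h0, smul_zero]

/-- The sum of the terms of `g` whose exponent satisfies `p`. -/
noncomputable def termPart {n : ℕ} (g : MvPolynomial (Fin n) ℂ) (p : (Fin n →₀ ℕ) → Prop)
    [DecidablePred p] : MvPolynomial (Fin n) ℂ :=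
  ∑ m ∈ g.support.filter p, MvPolynomial.monomial m (MvPolynomial.coeff m g)

lemma coeff_termPart {n : ℕ} (g : MvPolynomial (Fin n) ℂ) (p : (Fin n →₀ ℕ) → Prop)
    [DecidablePred p] (m : Fin n →₀ ℕ) :
    MvPolynomial.coeff m (termPart g p) = if p m then MvPolynomial.coeff m g else 0 := by
  classical
  unfold termPart
  rw [MvPolynomial.coeff_sum]
  simp only [MvPolynomial.coeff_monomial]
  rw [Finset.sum_ite_eq']
  by_cases hp : p m <;> by_cases hm : MvPolynomial.coeff m g = 0 <;> simp [hp, hm]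

lemma part_nonvanishing {n : ℕ} (U : Set (Fin n → ℂ)) (hU : IsOpen U)
    (f : MvPolynomial (Fin n) ℂ) (T : Finset (Fin n)) (u : ℂ) (hu : u ≠ 0)
    (h : ∀ z ∈ U, ∀ y : ℂ, 0 < y.re →
      MvPolynomial.eval (fun i => if i ∈ T then u * y * z i else z i) f ≠ 0)
    (c : ℕ) (hne : termPart f (fun m => ∑ i ∈ T, m i = c) ≠ 0) :
    ∀ z ∈ U, MvPolynomial.eval z (termPart f (fun m => ∑ i ∈ T, m i = c)) ≠ 0 := by
  set P : Polynomial (MvPolynomial (Fin n) ℂ) :=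
    ∑ m ∈ f.support, Polynomial.monomial (∑ i ∈ T, m i)
      (MvPolynomial.C (u ^ (∑ i ∈ T, m i)) *
        MvPolynomial.monomial m (MvPolynomial.coeff m f)) with hP
  have hcoeff : P.coeff c = MvPolynomial.C (u ^ c) *
      termPart f (fun m => ∑ i ∈ T, m i = c) := by
    rw [hP, Polynomial.finsetSum_coeff, termPart, Finset.mul_sum, Finset.sum_filter]
    refine Finset.sum_congr rfl fun m _ => ?_
    rw [Polynomial.coeff_monomial]
    split_ifs with hm
    · rw [hm]
    · rfl
  have heval : ∀ z y, (P.map (MvPolynomial.eval z)).eval y =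
      MvPolynomial.eval (fun i => if i ∈ T then u * y * z i else z i) f := by
    intro z y
    rw [hP, Polynomial.map_sum, Polynomial.eval_finset_sum, MvPolynomial.eval_eq']
    refine Finset.sum_congr rfl fun m _ => ?_
    rw [Polynomial.map_monomial, Polynomial.eval_monomial, map_mul, MvPolynomial.eval_C,
      MvPolynomial.eval_monomial, Finsupp.prod_fintype _ _ (by simp)]
    have : ∏ i, (if i ∈ T then u * y * z i else z i) ^ m i =
        (∏ i, z i ^ m i) * (u * y) ^ (∑ i ∈ T, m i) := by
      rw [← Finset.prod_pow_eq_pow_sum, ← Finset.prod_filter_mul_prod_filter_not univ (· ∈ T)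
        (fun i => z i ^ m i)]
      rw [← Finset.prod_filter_mul_prod_filter_not univ (· ∈ T)]
      have e1 : ∏ i ∈ univ.filter (· ∈ T), (if i ∈ T then u * y * z i else z i) ^ m i =
          (∏ i ∈ T, (u * y) ^ m i) * ∏ i ∈ univ.filter (· ∈ T), z i ^ m i := by
        have : univ.filter (· ∈ T) = T := by ext; simp
        rw [this, ← Finset.prod_mul_distrib]
        refine Finset.prod_congr rfl fun i hi => ?_
        rw [if_pos hi, mul_pow]
      have e2 : ∏ i ∈ univ.filter (fun i => ¬ i ∈ T),
          (if i ∈ T then u * y * z i else z i) ^ m i =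
          ∏ i ∈ univ.filter (fun i => ¬ i ∈ T), z i ^ m i := by
        refine Finset.prod_congr rfl fun i hi => ?_
        rw [if_neg (Finset.mem_filter.1 hi).2]
      rw [e1, e2]
      ring
    rw [this, mul_pow]
    ring
  have huc : u ^ c ≠ 0 := pow_ne_zero _ hu
  intro z hz
  have := coeff_nonvanishing U hU P (fun z hz y hy => by rw [heval]; exact h z hz y hy) c
    (by
      rw [hcoeff]
      exact mul_ne_zero (by rw [Ne, MvPolynomial.C_eq_zero]; exact huc) hne) z hz
  rw [hcoeff, map_mul] at this
  exact right_ne_zero_of_mul this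

lemma isOpen_sector (β : ℝ) (hβ : β ≤ 1) :
    IsOpen {z : ℂ | z ≠ 0 ∧ |z.arg| < β * Real.pi / 2} := by
  rw [isOpen_iff_mem_nhds]
  rintro z ⟨hz, harg⟩
  have hslit : z ∈ Complex.slitPlane := by
    rw [Complex.mem_slitPlane_iff_arg]
    refine ⟨?_, hz⟩
    intro h
    rw [h, abs_of_pos Real.pi_pos] at harg
    nlinarith [Real.pi_pos]
  have h1 := (Complex.continuousAt_arg hslit).abs.eventually (gt_mem_nhds harg)
  filter_upwards [h1, isOpen_ne.mem_nhds hz] with x hx hx0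
  exact ⟨hx0, hx⟩

lemma eval_smul_hom {n d : ℕ} (g : MvPolynomial (Fin n) ℂ) (hhom : g.IsHomogeneous d) (u : ℂ)
    (z : Fin n → ℂ) : MvPolynomial.eval (fun i => u * z i) g = u ^ d * MvPolynomial.eval z g := by
  rw [MvPolynomial.eval_eq', MvPolynomial.eval_eq', Finset.mul_sum]
  refine Finset.sum_congr rfl fun m hm => ?_
  have hd : ∑ i, m i = d := by
    have := hhom (MvPolynomial.mem_support_iff.1 hm)
    rw [Finsupp.weight_apply, Finsupp.sum_fintype _ _ (by simp)] at this
    simpa using this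
  simp only [mul_pow]
  rw [Finset.prod_mul_distrib, Finset.prod_pow_eq_pow_sum, hd]
  ring

/-- The polar form of a complex number. -/
lemma polar (w : ℂ) : w = (‖w‖ : ℂ) * Complex.exp (w.arg * Complex.I) :=
  (Complex.norm_mul_exp_arg_mul_I w).symm

lemma base_case {n d : ℕ} (g : MvPolynomial (Fin n) ℂ) (hhom : g.IsHomogeneous d)
    (hstable : SectorStable 1 g) (β φ : ℝ) (θ : Fin n → ℝ)
    (hθ : ∀ i, |θ i - φ| ≤ (1 - β) * Real.pi / 2) (w : Fin n → ℂ)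
    (hw : ∀ i, w i ≠ 0 ∧ |(w i).arg| < β * Real.pi / 2) :
    MvPolynomial.eval (fun i => Complex.exp (θ i * Complex.I) * w i) g ≠ 0 := by
  have h1 : (fun i => Complex.exp (θ i * Complex.I) * w i) =
      fun i => Complex.exp (φ * Complex.I) *
        ((‖w i‖ : ℂ) * Complex.exp (((θ i - φ + (w i).arg : ℝ) : ℂ) * Complex.I)) := by
    ext i
    conv_lhs => rw [polar (w i)]
    have : Complex.exp (θ i * Complex.I) * Complex.exp ((w i).arg * Complex.I) =
        Complex.exp (φ * Complex.I) *
          Complex.exp (((θ i - φ + (w i).arg : ℝ) : ℂ) * Complex.I) := by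
      rw [← Complex.exp_add, ← Complex.exp_add]
      congr 1
      push_cast
      ring
    linear_combination (‖w i‖ : ℂ) * this
  rw [h1, eval_smul_hom g hhom]
  refine mul_ne_zero (pow_ne_zero _ (Complex.exp_ne_zero _)) (hstable _ fun i => ?_)
  have hpos : 0 < ‖w i‖ := norm_pos_iff.2 (hw i).1
  refine ⟨mul_ne_zero (by exact_mod_cast hpos.ne') (Complex.exp_ne_zero _), ?_⟩
  rw [one_mul, Complex.abs_arg_lt_pi_div_two_iff]
  left
  rw [Complex.re_ofReal_mul, Complex.exp_ofReal_mul_I_re]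
  refine mul_pos hpos (Real.cos_pos_of_mem_Ioo ?_)
  have h2 := abs_le.1 (hθ i)
  have h3 := abs_lt.1 (hw i).2
  constructor <;> linarith [h2.1, h2.2, h3.1, h3.2]

lemma main_induction {n k d : ℕ} (g : MvPolynomial (Fin n) ℂ) (hhom : g.IsHomogeneous d)
    (hstable : SectorStable 1 g) (T : Fin k → Finset (Fin n)) (a : Fin n → Fin k)
    (ha : ∀ i j, i ∈ T j ↔ a i = j) (c : Fin k → ℕ) (j : ℕ) (hj : j ≤ k) :
    termPart g (fun m => ∀ l : Fin k, l.1 < j → ∑ i ∈ T l, m i = c l) = 0 ∨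
    ∀ (φ : ℝ) (θ : Fin k → ℝ),
      (∀ l : Fin k, j ≤ l.1 → |θ l - φ| ≤ (1 - 2 ^ j * (1 / 2 ^ k)) * Real.pi / 2) →
      ∀ w : Fin n → ℂ, (∀ i, w i ≠ 0 ∧ |(w i).arg| < (1 / 2 ^ k : ℝ) * Real.pi / 2) →
        MvPolynomial.eval (fun i => Complex.exp (θ (a i) * Complex.I) * w i)
          (termPart g (fun m => ∀ l : Fin k, l.1 < j → ∑ i ∈ T l, m i = c l)) ≠ 0 := by
  induction j with
  | zero =>
    right
    intro φ θ hθ w hw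
    have : termPart g (fun m => ∀ l : Fin k, l.1 < 0 → ∑ i ∈ T l, m i = c l) = g := by
      ext m
      rw [coeff_termPart]
      simp
    rw [this]
    exact base_case g hhom hstable (1 / 2 ^ k) φ (fun i => θ (a i))
      (fun i => by simpa using hθ (a i) (Nat.zero_le _)) w hw
  | succ j ih =>
    set f := termPart g (fun m => ∀ l : Fin k, l.1 < j → ∑ i ∈ T l, m i = c l) with hf
    set J : Fin k := ⟨j, by omega⟩ with hJ
    have hstep : termPart g (fun m => ∀ l : Fin k, l.1 < j + 1 → ∑ i ∈ T l, m i = c l) =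
        termPart f (fun m => ∑ i ∈ T J, m i = c J) := by
      ext m
      rw [coeff_termPart, coeff_termPart, hf, coeff_termPart]
      have hiff : (∀ l : Fin k, l.1 < j + 1 → ∑ i ∈ T l, m i = c l) ↔
          (∑ i ∈ T J, m i = c J) ∧ ∀ l : Fin k, l.1 < j → ∑ i ∈ T l, m i = c l := by
        constructor
        · intro h
          exact ⟨h J (by simp [hJ]), fun l hl => h l (by omega)⟩
        · rintro ⟨h1, h2⟩ l hl
          rcases Nat.lt_succ_iff_lt_or_eq.1 hl with h | h
          · exact h2 l h
          · have : l = J := Fin.ext h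
            rw [this]; exact h1
      by_cases h1 : ∑ i ∈ T J, m i = c J <;>
        by_cases h2 : ∀ l : Fin k, l.1 < j → ∑ i ∈ T l, m i = c l <;>
        simp only [hiff, h1, h2, if_true, if_false, and_false, false_and, true_and]
    rw [hstep]
    rw [or_iff_not_imp_left]
    intro hne φ θ hθ w hw
    have hf0 : f ≠ 0 := by
      intro h0
      apply hne
      rw [h0]
      ext m
      rw [coeff_termPart]
      simp
    have ih' := (ih (by omega)).resolve_left hf0
    set U : Set (Fin n → ℂ) := {z | ∀ i, Complex.exp (-(θ (a i)) * Complex.I) * z i ∈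
      {z : ℂ | z ≠ 0 ∧ |z.arg| < (1 / 2 ^ k : ℝ) * Real.pi / 2}} with hUdef
    have hβ : (1 / 2 ^ k : ℝ) ≤ 1 := by
      rw [div_le_one (by positivity)]
      exact one_le_pow₀ (by norm_num)
    have hU : IsOpen U := by
      rw [hUdef, Set.setOf_forall]
      refine isOpen_iInter_of_finite fun i => ?_
      exact (isOpen_sector _ hβ).preimage (continuous_const.mul (continuous_apply i))
    have hcancel : ∀ t : ℝ, Complex.exp (-t * Complex.I) * Complex.exp (t * Complex.I) = 1 := by
      intro t
      rw [← Complex.exp_add]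
      simp
    have hwU : (fun i => Complex.exp (θ (a i) * Complex.I) * w i) ∈ U := by
      intro i
      rw [← mul_assoc, hcancel, one_mul]
      exact hw i
    refine part_nonvanishing U hU f (T J) (Complex.exp ((φ - θ J : ℝ) * Complex.I))
      (Complex.exp_ne_zero _) ?_ (c J) hne _ hwU
    intro z hz y hy
    set ε : ℝ := 2 ^ j * (1 / 2 ^ k) with hε
    have hε2 : (2 : ℝ) ^ (j + 1) * (1 / 2 ^ k) = 2 * ε := by rw [hε]; ring
    have hεle : 2 * ε ≤ 1 := by
      rw [← hε2, mul_one_div, div_le_one (by positivity)]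
      exact pow_le_pow_right₀ (by norm_num) hj
    have hεpos : 0 < ε := by positivity
    rw [hε2] at hθ
    set t : ℝ := y.arg with ht
    have htlt : |t| < Real.pi / 2 := Complex.abs_arg_lt_pi_div_two_iff.2 (Or.inl hy)
    have hy0 : y ≠ 0 := by rintro rfl; simp at hy
    have hypos : 0 < ‖y‖ := norm_pos_iff.2 hy0
    have hpi := Real.pi_pos
    have key := ih' (φ + t * ε) (Function.update θ J (φ + t)) (by
      intro l hl
      have ht' := abs_lt.1 htlt
      by_cases hlJ : l = J
      · rw [hlJ, Function.update_self]
        have : φ + t - (φ + t * ε) = t * (1 - ε) := by ring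
        rw [this, abs_mul, abs_of_pos (by linarith : (0 : ℝ) < 1 - ε)]
        nlinarith
      · rw [Function.update_of_ne hlJ]
        have hlt : j + 1 ≤ l.1 := by
          rcases Nat.lt_or_eq_of_le hl with h | h
          · exact h
          · exact absurd (Fin.ext h.symm) hlJ
        have h1 := hθ l hlt
        have h2 : |t * ε| ≤ Real.pi / 2 * ε := by
          rw [abs_mul, abs_of_pos hεpos]
          exact mul_le_mul_of_nonneg_right htlt.le hεpos.le
        have h3 : θ l - (φ + t * ε) = (θ l - φ) - t * ε := by ring
        rw [h3]
        refine (abs_sub _ _).trans ?_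
        linarith)
      (fun i => if i ∈ T J then (‖y‖ : ℂ) * (Complex.exp (-(θ (a i)) * Complex.I) * z i)
        else Complex.exp (-(θ (a i)) * Complex.I) * z i) (by
      intro i
      have hzi := hz i
      split_ifs with hi
      · refine ⟨mul_ne_zero (by exact_mod_cast hypos.ne') hzi.1, ?_⟩
        rw [Complex.arg_real_mul _ hypos]
        exact hzi.2
      · exact hzi)
    convert key using 2
    congr 1
    ext i
    by_cases hi : i ∈ T J
    · have hai : a i = J := (ha i J).1 hi
      simp only [hi, if_true, hai, Function.update_self]
      conv_lhs => rw [polar y]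
      rw [← ht]
      have : Complex.exp ((φ - θ J : ℝ) * Complex.I) * Complex.exp (t * Complex.I) =
          Complex.exp ((φ + t : ℝ) * Complex.I) * Complex.exp (-(θ J) * Complex.I) := by
        rw [← Complex.exp_add, ← Complex.exp_add]
        congr 1
        push_cast
        ring
      linear_combination (‖y‖ : ℂ) * z i * this
    · have hai : a i ≠ J := fun h => hi ((ha i J).2 h)
      simp only [hi, if_false, Function.update_of_ne hai]
      rw [← mul_assoc, mul_comm (Complex.exp (θ (a i) * Complex.I)), hcancel, one_mul]

/-- If `g` is a homogeneous `Γ₁`-stable polynomial, `T₁,…,T_k` a partition of `[n]`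
and `c ∈ ℤ_{≥0}^k`, then the sum `h` of the terms of `g` whose `(T₁,…,T_k)`-degree
equals `(c₁,…,c_k)` is either identically zero or `Γ_{1/2^k}`-stable. -/
theorem partition_degree_part_sectorStable {n k : ℕ}
    (g : MvPolynomial (Fin n) ℂ) (d : ℕ) (hhom : g.IsHomogeneous d)
    (hstable : SectorStable 1 g)
    (T : Fin k → Finset (Fin n))
    (hdisj : ∀ a b : Fin k, a ≠ b → Disjoint (T a) (T b))
    (hcover : Finset.univ.biUnion T = (Finset.univ : Finset (Fin n)))
    (c : Fin k → ℕ) :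
    (∑ m ∈ g.support.filter (fun m => ∀ j : Fin k, (∑ i ∈ T j, m i) = c j),
        MvPolynomial.monomial m (MvPolynomial.coeff m g)) = 0 ∨
      SectorStable ((1 : ℝ) / 2 ^ k)
        (∑ m ∈ g.support.filter (fun m => ∀ j : Fin k, (∑ i ∈ T j, m i) = c j),
          MvPolynomial.monomial m (MvPolynomial.coeff m g)) := by
  have hex : ∀ i, ∃ j, i ∈ T j := by
    intro i
    have : i ∈ Finset.univ.biUnion T := by rw [hcover]; exact Finset.mem_univ i
    simpa using this
  choose a ha using hex
  have ha' : ∀ i j, i ∈ T j ↔ a i = j := by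
    intro i j
    constructor
    · intro h
      by_contra hne
      exact Finset.disjoint_left.1 (hdisj _ _ hne) (ha i) h
    · rintro rfl
      exact ha i
  have heq : (∑ m ∈ g.support.filter (fun m => ∀ j : Fin k, (∑ i ∈ T j, m i) = c j),
        MvPolynomial.monomial m (MvPolynomial.coeff m g)) =
      termPart g (fun m => ∀ l : Fin k, l.1 < k → ∑ i ∈ T l, m i = c l) := by
    unfold termPart
    refine Finset.sum_congr ?_ fun _ _ => rfl
    ext m
    simp
  rw [heq]
  refine (main_induction g hhom hstable T a ha' c k le_rfl).imp_right fun h => ?_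
  intro z hz
  have := h 0 (fun _ => 0) (fun l hl => absurd l.2 (by omega)) z hz
  simpa using this
end

section
/- Let α, β > 0 with α + β ≥ 1, and let p(x,y) = Σ_{i=0}^{d} c_i x^i y^{d−i} be a homogeneous bivariate polynomial with coefficients c_i ∈ ℂ. Suppose p(x,y) ≠ 0 whenever x and y are nonzero complex numbers with |Arg x| ≤ απ/2 and |Arg y| ≤ βπ/2. Then the set {i : c_i ≠ 0} has no holes: if c_i ≠ 0 and c_j ≠ 0 for some i < j, then c_l ≠ 0 for every l with i ≤ l ≤ j. -/
open Finset

open Polynomial in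
lemma coeff_ne_zero_of_stable_aux (k : ℕ) : ∀ p : ℂ[X],
    (∀ z : ℂ, 0 ≤ z.re → p.eval z ≠ 0) → k ≤ p.natDegree → p.coeff k ≠ 0 := by
  induction k with
  | zero =>
    intro p hp _
    rw [coeff_zero_eq_eval_zero]
    exact hp 0 (by simp)
  | succ k ih =>
    intro p hp hk
    have hnd : (derivative p).natDegree = p.natDegree - 1 := natDegree_derivative p
    have hd : derivative p ≠ 0 := by
      intro h
      have := derivative_eq_zero.mp h
      omega
    have hst : ∀ z : ℂ, 0 ≤ z.re → (derivative p).eval z ≠ 0 := by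
      intro z hz h0
      have hmem : z ∈ (derivative p).rootSet ℂ := by
        rw [mem_rootSet]
        exact ⟨hd, by simpa [aeval_def] using h0⟩
      have hsub : p.rootSet ℂ ⊆ {w : ℂ | w.re < 0} := by
        intro w hw
        rw [mem_rootSet] at hw
        by_contra hcon
        have hw0 : 0 ≤ w.re := by simpa using hcon
        exact hp w hw0 (by simpa [aeval_def] using hw.2)
      have hconv : Convex ℝ {w : ℂ | w.re < 0} := convex_halfSpace_re_lt 0
      have hdeg : 0 < p.degree := natDegree_pos_iff_degree_pos.mp (by omega)
      have := convexHull_min hsub hconv (rootSet_derivative_subset_convexHull_rootSet hdeg hmem)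
      have h2 : z.re < 0 := this
      linarith
    have := ih (derivative p) hst (by omega)
    rw [coeff_derivative] at this
    exact left_ne_zero_of_mul this

lemma arg_split_aux (r t : ℝ) (hr : 0 < r) (ht : |t| ≤ Real.pi / 2) :
    ((r : ℂ) * Complex.exp (t * Complex.I)).arg = t := by
  have := Real.pi_pos
  have h := abs_le.mp ht
  rw [Complex.exp_mul_I]
  exact Complex.arg_mul_cos_add_sin_mul_I hr ⟨by linarith, by linarith⟩

/-- If the homogeneous bivariate polynomial `p(x,y) = Σ_{i=0}^d c_i x^i y^{d-i}` has no
zeros with `x, y` nonzero, `|Arg x| ≤ απ/2` and `|Arg y| ≤ βπ/2`, where `α + β ≥ 1`,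
then the set of indices of its nonzero coefficients has no holes. -/
theorem no_holes_of_closed_sector_stable (α β : ℝ) (hα : 0 < α) (hβ : 0 < β)
    (hαβ : 1 ≤ α + β) (d : ℕ) (c : ℕ → ℂ)
    (hstable : ∀ x y : ℂ, x ≠ 0 → y ≠ 0 →
      |x.arg| ≤ α * Real.pi / 2 → |y.arg| ≤ β * Real.pi / 2 →
      (∑ i ∈ Finset.range (d + 1), c i * x ^ i * y ^ (d - i)) ≠ 0)
    (i j l : ℕ) (hij : i < j) (hjd : j ≤ d) (hil : i ≤ l) (hlj : l ≤ j)
    (hci : c i ≠ 0) (hcj : c j ≠ 0) : c l ≠ 0 := by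
  have hpi := Real.pi_pos
  set q : Polynomial ℂ := ∑ i ∈ Finset.range (d + 1), Polynomial.monomial i (c i) with hq
  have hcoeff : ∀ n, n ≤ d → q.coeff n = c n := by
    intro n hn
    rw [hq, Polynomial.finsetSum_coeff]
    simp only [Polynomial.coeff_monomial]
    rw [Finset.sum_ite_eq' ]
    simp [hn]
  have heval : ∀ z : ℂ, z ≠ 0 → 0 ≤ z.re → q.eval z ≠ 0 := by
    intro z hz hre h0
    have harg : |z.arg| ≤ Real.pi / 2 := Complex.abs_arg_le_pi_div_two_iff.mpr hre
    have hs : 0 < α + β := by linarith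
    have key : ∀ γ : ℝ, 0 < γ → γ ≤ α + β → |γ / (α + β) * z.arg| ≤ Real.pi / 2 ∧
        |γ / (α + β) * z.arg| ≤ γ * Real.pi / 2 := by
      intro γ hγ hγ'
      rw [abs_mul, abs_of_pos (div_pos hγ hs)]
      have h1 : γ / (α + β) ≤ 1 := (div_le_one hs).mpr hγ'
      have h2 : γ / (α + β) ≤ γ := div_le_self hγ.le hαβ
      have h3 := abs_nonneg z.arg
      have h4 := div_pos hγ hs
      constructor <;> nlinarith
    have ha := key α hα (by linarith)
    have hb := key β hβ (by linarith)
    set s := α / (α + β) * z.arg with hsdef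
    set t := β / (α + β) * z.arg with htdef
    have hst : s + t = z.arg := by
      rw [hsdef, htdef]; field_simp
    have hn : 0 < ‖z‖ := norm_pos_iff.mpr hz
    set x : ℂ := ((‖z‖ : ℝ) : ℂ) * Complex.exp (s * Complex.I) with hx
    set y : ℂ := ((1 : ℝ) : ℂ) * Complex.exp ((-t : ℝ) * Complex.I) with hy
    have hx0 : x ≠ 0 := mul_ne_zero (by exact_mod_cast hn.ne') (Complex.exp_ne_zero _)
    have hy0 : y ≠ 0 := mul_ne_zero (by simp) (Complex.exp_ne_zero _)
    have hxy : x = z * y := by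
      conv_rhs => rw [← Complex.norm_mul_exp_arg_mul_I z]
      rw [hx, hy, ← hst, Complex.ofReal_one, one_mul, mul_assoc, ← Complex.exp_add]
      congr 2
      push_cast
      ring
    refine hstable x y hx0 hy0 ?_ ?_ ?_
    · rw [hx, arg_split_aux _ _ hn ha.1]; exact ha.2
    · rw [hy, arg_split_aux _ _ one_pos (by rw [abs_neg]; exact hb.1), abs_neg]; exact hb.2
    · have : ∑ i ∈ Finset.range (d + 1), c i * x ^ i * y ^ (d - i) = q.eval z * y ^ d := by
        rw [hq, Polynomial.eval_finsetSum, Finset.sum_mul]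
        refine Finset.sum_congr rfl fun n hn => ?_
        have hnd : n ≤ d := by simpa [Nat.lt_succ_iff] using hn
        rw [Polynomial.eval_monomial, hxy, mul_pow]
        conv_rhs => rw [← Nat.add_sub_cancel' hnd, pow_add]
        ring_nf
      rw [this, h0, zero_mul]
  have hq0 : q ≠ 0 := by
    intro h
    apply hci
    rw [← hcoeff i (by omega), h, Polynomial.coeff_zero]
  obtain ⟨r, hr, hndvd⟩ := Polynomial.exists_eq_pow_rootMultiplicity_mul_and_not_dvd q hq0 0
  generalize Polynomial.rootMultiplicity 0 q = m at hr
  rw [Polynomial.C_0, sub_zero] at hr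
  have hrst : ∀ z : ℂ, 0 ≤ z.re → r.eval z ≠ 0 := by
    intro z hz h0
    by_cases hz0 : z = 0
    · subst hz0
      exact hndvd (Polynomial.dvd_iff_isRoot.mpr h0)
    · apply heval z hz0 hz
      rw [hr, Polynomial.eval_mul, h0, mul_zero]
  rw [← hcoeff i (by omega), hr, Polynomial.coeff_X_pow_mul'] at hci
  rw [← hcoeff j (by omega), hr, Polynomial.coeff_X_pow_mul'] at hcj
  rw [← hcoeff l (by omega), hr, Polynomial.coeff_X_pow_mul']
  have hmi : m ≤ i := by
    by_contra h
    simp [h] at hci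
  rw [if_pos (by omega)] at hcj ⊢
  have hdeg := Polynomial.le_natDegree_of_ne_zero hcj
  exact coeff_ne_zero_of_stable_aux _ r hrst (by omega)
end

section
/- Let α₁,…,αₙ ∈ (0,2] and let U = Γ_{α₁} × ⋯ × Γ_{αₙ} ⊆ ℂⁿ. Let g ∈ ℂ[z₁,…,zₙ] be a nonzero polynomial with g(z) ≠ 0 for all z ∈ U, and let S ⊆ [n]. Define the S-degree of a monomial z₁^{t₁}⋯zₙ^{tₙ} as Σ_{i∈S} t_i, and let k_max^S and k_min^S be the maximum and minimum S-degree over monomials of g with nonzero coefficient. Then the sum g^S_{k_max} of the terms of g of S-degree exactly k_max^S, and the sum g^S_{k_min} of the terms of S-degree exactly k_min^S, are both nonvanishing on U. -/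
open MvPolynomial Finset

lemma poly_bound (P : Polynomial ℂ) (d : ℕ) (hd : P.natDegree ≤ d) (ε : ℝ) (hε : 0 < ε)
    (h : ∀ s : ℂ, ‖s‖ < ε → P.eval s ≠ 0) (s : ℂ) (hs : ‖s‖ < ε) :
    ‖P.eval s‖ ≤ 2 ^ d * ‖P.eval 0‖ := by
  have hsp : P.Splits := IsAlgClosed.splits P
  have hP : P ≠ 0 := by
    rintro rfl
    exact h 0 (by simpa using hε) (by simp)
  have hroot : ∀ r ∈ P.roots, ε ≤ ‖r‖ := by
    intro r hr
    by_contra hc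
    push Not at hc
    exact h r hc (Polynomial.isRoot_of_mem_roots hr)
  have key : ∀ M : Multiset ℂ, (∀ r ∈ M, ε ≤ ‖r‖) →
      ‖(M.map (fun r => s - r)).prod‖ ≤ 2 ^ M.card * ‖(M.map (fun r => 0 - r)).prod‖ := by
    intro M
    induction M using Multiset.induction_on with
    | empty => simp
    | cons a M ih =>
      intro hM
      have h1 := ih (fun r hr => hM r (Multiset.mem_cons_of_mem hr))
      have h2 := hM a (Multiset.mem_cons_self a M)
      have h3 : ‖s - a‖ ≤ 2 * ‖0 - a‖ := by
        have := norm_sub_le s a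
        rw [zero_sub, norm_neg]
        linarith
      simp only [Multiset.map_cons, Multiset.prod_cons, norm_mul, Multiset.card_cons, pow_succ]
      calc _ ≤ (2 * ‖0 - a‖) * (2 ^ M.card * ‖(M.map (fun r => 0 - r)).prod‖) := by gcongr
        _ = _ := by ring
  have e : ∀ x, P.eval x = P.leadingCoeff * (P.roots.map (fun r => x - r)).prod := by
    intro x
    conv_lhs => rw [hsp.eq_prod_roots]
    simp [Polynomial.eval_multiset_prod, Multiset.map_map, Function.comp_def]
  have hc : P.roots.card ≤ d := (Polynomial.card_roots' P).trans hd
  rw [e s, e 0, norm_mul, norm_mul]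
  have h1 := key _ hroot
  have h2 : (2:ℝ) ^ P.roots.card ≤ 2 ^ d := pow_le_pow_right₀ (by norm_num) hc
  calc _ ≤ ‖P.leadingCoeff‖ * (2 ^ d * ‖(P.roots.map (fun r => 0 - r)).prod‖) := by
        gcongr
        exact h1.trans (by gcongr)
    _ = _ := by ring

lemma isOpen_sector_s10 (α : ℝ) (hα : α ≤ 2) : IsOpen {z : ℂ | inSector α z} := by
  rw [isOpen_iff_mem_nhds]
  rintro z ⟨hz, ha⟩
  have hpi : |z.arg| < Real.pi := by nlinarith [Real.pi_pos]
  have hsl : z ∈ Complex.slitPlane := by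
    rw [Complex.mem_slitPlane_iff_arg]
    exact ⟨fun h => by rw [h, abs_of_pos Real.pi_pos] at hpi; exact lt_irrefl _ hpi, hz⟩
  have hc := (Complex.continuousAt_arg hsl).abs
  filter_upwards [hc.eventually_lt continuousAt_const ha, isOpen_ne.mem_nhds hz] with w h1 h2
  exact ⟨h2, h1⟩

lemma sector_smul {α : ℝ} {z : ℂ} (h : inSector α z) {t : ℝ} (ht : 0 < t) :
    inSector α ((t : ℂ) * z) := by
  refine ⟨mul_ne_zero (by exact_mod_cast ht.ne') h.1, ?_⟩
  rw [Complex.arg_real_mul z ht]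
  exact h.2

lemma hurwitz_main {n : ℕ} (αv : Fin n → ℝ) (hαv : ∀ i, αv i ≤ 2)
    (g p : MvPolynomial (Fin n) ℂ) (hp : p ≠ 0)
    (hstable : ∀ z : Fin n → ℂ, (∀ i, inSector (αv i) (z i)) → MvPolynomial.eval z g ≠ 0)
    (a : ℝ → Fin n → ℝ) (ha : ∀ u > 0, ∀ i, 0 < a u i) (c : ℝ → ℂ)
    (hlim : ∀ z : Fin n → ℂ, Filter.Tendsto
      (fun u => c u * MvPolynomial.eval (fun i => (a u i : ℂ) * z i) g)
      (nhdsWithin 0 (Set.Ioi 0)) (nhds (MvPolynomial.eval z p)))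
    (z : Fin n → ℂ) (hz : ∀ i, inSector (αv i) (z i)) : MvPolynomial.eval z p ≠ 0 := by
  intro h0
  apply hp
  apply MvPolynomial.funext
  intro w1
  rw [map_zero]
  set w : Fin n → ℂ := w1 - z with hw
  have hopen : IsOpen {z : Fin n → ℂ | ∀ i, inSector (αv i) (z i)} := by
    have : {z : Fin n → ℂ | ∀ i, inSector (αv i) (z i)} =
        ⋂ i, (fun z : Fin n → ℂ => z i) ⁻¹' {x | inSector (αv i) x} := by
      ext; simp
    rw [this]
    exact isOpen_iInter_of_finite fun i =>
      (isOpen_sector_s10 _ (hαv i)).preimage (continuous_apply i)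
  have hline : Continuous (fun s : ℂ => fun i => z i + s * w i) := by fun_prop
  have hmem := (hopen.preimage hline).mem_nhds (x := 0) (by simpa using hz)
  obtain ⟨ε, hε, hball⟩ := Metric.mem_nhds_iff.1 hmem
  -- the restriction of a polynomial to the line
  let L : (Fin n → ℂ) → (Fin n → ℂ) → MvPolynomial (Fin n) ℂ → Polynomial ℂ := fun x y q =>
    MvPolynomial.aeval (fun i => Polynomial.C (x i) + Polynomial.X * Polynomial.C (y i)) q
  have hL : ∀ x y q s, (L x y q).eval s = MvPolynomial.eval (fun i => x i + s * y i) q := by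
    intro x y q s
    have : ((Polynomial.aeval s).comp (MvPolynomial.aeval
        (fun i => Polynomial.C (x i) + Polynomial.X * Polynomial.C (y i))) :
        MvPolynomial (Fin n) ℂ →ₐ[ℂ] ℂ) = MvPolynomial.aeval (fun i => x i + s * y i) := by
      ext i; simp; ring
    have := DFunLike.congr_fun this q
    simpa [L, Polynomial.coe_aeval_eq_eval, MvPolynomial.coe_aeval_eq_eval] using this
  have hdeg : ∀ x y q, (L x y q).natDegree ≤ q.totalDegree := by
    intro x y q
    have := MvPolynomial.aeval_natDegree_le (F := q) (m := q.totalDegree) (n := 1) le_rfl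
      (fun i => Polynomial.C (x i) + Polynomial.X * Polynomial.C (y i))
      (fun i => by compute_degree)
    simpa [L] using this
  have hsmall : ∀ s : ℂ, ‖s‖ < ε → MvPolynomial.eval (fun i => z i + s * w i) p = 0 := by
    intro s hs
    have l1 := (hlim (fun i => z i + s * w i)).norm
    have l2 := ((hlim z).norm).const_mul ((2:ℝ) ^ g.totalDegree)
    have hle := le_of_tendsto_of_tendsto l1 l2 (by
      filter_upwards [self_mem_nhdsWithin] with u hu
      have hb := poly_bound (L (fun i => a u i * z i) (fun i => a u i * w i) g) _ (hdeg _ _ _)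
        ε hε (by
          intro s hs
          rw [hL]
          apply hstable
          intro i
          have : inSector (αv i) (z i + s * w i) := hball (by simpa using hs) i
          have := sector_smul this (ha u hu i)
          convert this using 1
          ring) s hs
      rw [hL, hL] at hb
      have e1 : (fun i => (a u i : ℂ) * z i + s * (a u i * w i)) =
        fun i => (a u i : ℂ) * (z i + s * w i) := by ext i; ring
      simp only [e1, zero_mul, add_zero] at hb
      rw [norm_mul, norm_mul]
      nlinarith [norm_nonneg (c u)])
    rw [h0] at hle
    simpa using hle
  have hzero : L z w p = 0 := by
    apply Polynomial.eq_zero_of_infinite_isRoot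
    refine Set.Infinite.mono (s := Metric.ball 0 ε) ?_ ?_
    · intro s hs
      have := hsmall s (by simpa using hs)
      rw [Set.mem_setOf_eq, Polynomial.IsRoot, hL, this]
    · exact infinite_of_mem_nhds (0:ℂ) (Metric.ball_mem_nhds 0 hε)
  have := hL z w p 1
  rw [hzero] at this
  simpa [hw] using this.symm

lemma part_stable {n : ℕ} (αv : Fin n → ℝ) (hαv : ∀ i, αv i ≤ 2)
    (g : MvPolynomial (Fin n) ℂ)
    (hstable : ∀ z : Fin n → ℂ, (∀ i, inSector (αv i) (z i)) → MvPolynomial.eval z g ≠ 0)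
    (S : Finset (Fin n)) (k : ℕ) (hmem : ∃ m ∈ g.support, (∑ i ∈ S, m i) = k)
    (b c : ℝ → ℝ) (hb : ∀ u > 0, 0 < b u)
    (hlim : ∀ m ∈ g.support, Filter.Tendsto (fun u => c u * b u ^ (∑ i ∈ S, m i))
      (nhdsWithin 0 (Set.Ioi 0)) (nhds (if (∑ i ∈ S, m i) = k then 1 else 0)))
    (z : Fin n → ℂ) (hz : ∀ i, inSector (αv i) (z i)) :
    MvPolynomial.eval z (∑ m ∈ g.support.filter (fun m => (∑ i ∈ S, m i) = k),
        MvPolynomial.monomial m (MvPolynomial.coeff m g)) ≠ 0 := by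
  refine hurwitz_main αv hαv g _ ?_ hstable (fun u i => if i ∈ S then b u else 1)
    (fun u hu i => by split_ifs; exacts [hb u hu, one_pos])
    (fun u => (c u : ℂ)) ?_ z hz
  · obtain ⟨m, hm, hk⟩ := hmem
    intro h
    have h2 := congrArg (MvPolynomial.coeff m) h
    rw [MvPolynomial.coeff_sum] at h2
    simp only [MvPolynomial.coeff_monomial, MvPolynomial.coeff_zero] at h2
    rw [Finset.sum_ite_eq', if_pos (by simp only [Finset.mem_filter]; exact ⟨hm, hk⟩)] at h2
    exact (MvPolynomial.mem_support_iff.1 hm) h2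
  · intro z
    have e1 : ∀ u, (c u : ℂ) * MvPolynomial.eval
        (fun i => ((if i ∈ S then b u else 1 : ℝ) : ℂ) * z i) g =
        ∑ m ∈ g.support, ((c u * b u ^ (∑ i ∈ S, m i) : ℝ) : ℂ) *
          (MvPolynomial.coeff m g * ∏ i, z i ^ m i) := by
      intro u
      rw [MvPolynomial.eval_eq', Finset.mul_sum]
      refine Finset.sum_congr rfl fun m _ => ?_
      have : ∏ i, (((if i ∈ S then b u else 1 : ℝ) : ℂ) * z i) ^ m i =
          (b u : ℂ) ^ (∑ i ∈ S, m i) * ∏ i, z i ^ m i := by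
        simp only [mul_pow, Finset.prod_mul_distrib]
        congr 1
        rw [← Finset.prod_pow_eq_pow_sum, ← Finset.prod_subset (Finset.subset_univ S)]
        · exact Finset.prod_congr rfl fun i hi => by simp [hi]
        · intro i _ hi
          simp [hi]
      rw [this]
      push_cast
      ring
    have e2 : MvPolynomial.eval z (∑ m ∈ g.support.filter (fun m => (∑ i ∈ S, m i) = k),
        MvPolynomial.monomial m (MvPolynomial.coeff m g)) =
        ∑ m ∈ g.support, (((if (∑ i ∈ S, m i) = k then 1 else 0 : ℝ)) : ℂ) *
          (MvPolynomial.coeff m g * ∏ i, z i ^ m i) := by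
      rw [map_sum, Finset.sum_filter]
      refine Finset.sum_congr rfl fun m _ => ?_
      split_ifs
      · simp [MvPolynomial.eval_monomial, Finsupp.prod_fintype]
      · simp
    simp only [e1]
    rw [e2]
    refine tendsto_finsetSum _ fun m hm => ?_
    exact ((Complex.continuous_ofReal.tendsto _).comp (hlim m hm)).mul_const _

lemma pow_lim (j : ℕ) : Filter.Tendsto (fun u : ℝ => u ^ j)
      (nhdsWithin 0 (Set.Ioi 0)) (nhds (if j = 0 then 1 else 0)) := by
  have : Filter.Tendsto (fun u : ℝ => u ^ j) (nhds 0) (nhds ((0:ℝ) ^ j)) :=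
    (continuous_pow j).tendsto 0
  rw [zero_pow_eq] at this
  exact this.mono_left nhdsWithin_le_nhds

/-- If `g` is a nonzero polynomial nonvanishing on `U = Γ_{α₁} × ⋯ × Γ_{αₙ}` and
`S ⊆ [n]`, then the parts of `g` of maximal and of minimal `S`-degree are also
nonvanishing on `U`. -/
theorem extreme_S_degree_parts_stable {n : ℕ} (αv : Fin n → ℝ)
    (hαv : ∀ i, 0 < αv i ∧ αv i ≤ 2)
    (g : MvPolynomial (Fin n) ℂ) (hg : g ≠ 0)
    (hstable : ∀ z : Fin n → ℂ, (∀ i, inSector (αv i) (z i)) →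
      MvPolynomial.eval z g ≠ 0)
    (S : Finset (Fin n)) (kmax kmin : ℕ)
    (hkmaxmem : ∃ m ∈ g.support, (∑ i ∈ S, m i) = kmax)
    (hkmaxub : ∀ m ∈ g.support, (∑ i ∈ S, m i) ≤ kmax)
    (hkminmem : ∃ m ∈ g.support, (∑ i ∈ S, m i) = kmin)
    (hkminlb : ∀ m ∈ g.support, kmin ≤ (∑ i ∈ S, m i)) :
    (∀ z : Fin n → ℂ, (∀ i, inSector (αv i) (z i)) →
      MvPolynomial.eval z (∑ m ∈ g.support.filter (fun m => (∑ i ∈ S, m i) = kmax),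
        MvPolynomial.monomial m (MvPolynomial.coeff m g)) ≠ 0) ∧
    (∀ z : Fin n → ℂ, (∀ i, inSector (αv i) (z i)) →
      MvPolynomial.eval z (∑ m ∈ g.support.filter (fun m => (∑ i ∈ S, m i) = kmin),
        MvPolynomial.monomial m (MvPolynomial.coeff m g)) ≠ 0) := by
  refine ⟨part_stable αv (fun i => (hαv i).2) g hstable S kmax hkmaxmem (fun u => u⁻¹)
      (fun u => u ^ kmax) (fun u hu => inv_pos.2 hu) ?_,
    part_stable αv (fun i => (hαv i).2) g hstable S kmin hkminmem (fun u => u)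
      (fun u => (u ^ kmin)⁻¹) (fun u hu => hu) ?_⟩
  · intro m hm
    have hle := hkmaxub m hm
    have h1 := pow_lim (kmax - ∑ i ∈ S, m i)
    have h2 : (kmax - ∑ i ∈ S, m i = 0) ↔ (∑ i ∈ S, m i) = kmax := by omega
    simp only [h2] at h1
    refine h1.congr' ?_
    filter_upwards [self_mem_nhdsWithin] with u hu
    have hu' : u ≠ 0 := ne_of_gt hu
    rw [pow_sub₀ u hu' hle, inv_pow]
  · intro m hm
    have hle := hkminlb m hm
    have h1 := pow_lim ((∑ i ∈ S, m i) - kmin)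
    have h2 : ((∑ i ∈ S, m i) - kmin = 0) ↔ (∑ i ∈ S, m i) = kmin := by omega
    simp only [h2] at h1
    refine h1.congr' ?_
    filter_upwards [self_mem_nhdsWithin] with u hu
    have hu' : u ≠ 0 := ne_of_gt hu
    rw [pow_sub₀ u hu' hle, mul_comm]
end

section
/- Let p ∈ ℂ[z₁,…,zₙ] be a multiaffine Γ_α-stable polynomial for some α ∈ (0,2]. Then for every i ∈ [n], the partial derivative ∂p/∂z_i is either identically zero or Γ_α-stable. -/
open MvPolynomial

lemma eval_update_monomial {n : ℕ} (m : Fin n →₀ ℕ) (c : ℂ) (i : Fin n) (hm : m i = 0)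
    (z : Fin n → ℂ) (x : ℂ) :
    MvPolynomial.eval (Function.update z i x) (monomial m c) = MvPolynomial.eval z (monomial m c) := by
  rw [eval_monomial, eval_monomial]
  congr 1
  refine Finset.prod_congr rfl fun j hj => ?_
  have : j ≠ i := by
    rintro rfl
    exact (Finsupp.mem_support_iff.1 hj) hm
  simp [Function.update_of_ne this]

lemma eval_update_multiaffine {n : ℕ} (p : MvPolynomial (Fin n) ℂ)
    (hma : ∀ m ∈ p.support, ∀ v, m v ≤ 1) (i : Fin n) (z : Fin n → ℂ) (x : ℂ) :
    MvPolynomial.eval (Function.update z i x) p =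
      MvPolynomial.eval z p + (x - z i) * MvPolynomial.eval z (pderiv i p) := by
  have key : ∀ m ∈ p.support, MvPolynomial.eval (Function.update z i x) (monomial m (p.coeff m)) =
      MvPolynomial.eval z (monomial m (p.coeff m)) +
        (x - z i) * MvPolynomial.eval z (pderiv i (monomial m (p.coeff m))) := by
    intro m hm
    generalize p.coeff m = c
    rcases Nat.le_one_iff_eq_zero_or_eq_one.1 (hma m hm i) with h | h
    · rw [eval_update_monomial m c i h, pderiv_monomial, h]
      simp
    · have hle : Finsupp.single i 1 ≤ m := by
        rw [Finsupp.single_le_iff, h]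
      have hd : monomial m c = monomial (m - Finsupp.single i 1) c * X i := by
        rw [X, monomial_mul, tsub_add_cancel_of_le hle, mul_one]
      rw [pderiv_monomial, hd, map_mul, map_mul, eval_update_monomial _ _ _ (by simp [h])]
      simp only [eval_X, Function.update_self, h, Nat.cast_one, mul_one]
      ring
  conv_lhs => rw [p.as_sum]
  conv_rhs => rw [p.as_sum]
  simp only [map_sum]
  rw [Finset.sum_congr rfl key, Finset.sum_add_distrib, Finset.mul_sum]

lemma analyticAt_eval {n : ℕ} (p : MvPolynomial (Fin n) ℂ) (z : Fin n → ℂ) :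
    AnalyticAt ℂ (fun w => MvPolynomial.eval w p) z := by
  have := AnalyticOnNhd.eval_mvPolynomial (𝕜 := ℂ) p z (Set.mem_univ z)
  simpa using this

/-- Partial derivatives of a multiaffine `Γ_α`-stable polynomial are either identically
zero or `Γ_α`-stable. -/
theorem pderiv_sectorStable_of_multiaffine {n : ℕ} (α : ℝ) (hα0 : 0 < α) (hα2 : α ≤ 2)
    (p : MvPolynomial (Fin n) ℂ)
    (hma : ∀ m ∈ p.support, ∀ v, m v ≤ 1)
    (hstable : SectorStable α p) (i : Fin n) :
    MvPolynomial.pderiv i p = 0 ∨ SectorStable α (MvPolynomial.pderiv i p) := by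
  by_cases h0 : pderiv i p = 0
  · exact Or.inl h0
  right
  intro w hw hB
  have hpi := Real.pi_pos
  set A : (Fin n → ℂ) → ℂ := fun z =>
    MvPolynomial.eval z p - z i * MvPolynomial.eval z (pderiv i p) with hA
  have hAan : AnalyticAt ℂ A w := by
    have h1 := (analyticAt_eval (X i * pderiv i p) w)
    simp only [map_mul, eval_X] at h1
    exact (analyticAt_eval p w).sub h1
  have hAw : A w ≠ 0 := by
    simp only [hA, hB, mul_zero, sub_zero]
    exact hstable w hw
  have hAev : ∀ᶠ z in nhds w, A z ≠ 0 := hAan.continuousAt.eventually_ne hAw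
  have hsec : ∀ᶠ z : Fin n → ℂ in nhds w, ∀ j, z j ≠ 0 ∧ |(z j).arg| < α * Real.pi / 2 := by
    rw [Filter.eventually_all]
    intro j
    have hc : ContinuousAt (fun z : Fin n → ℂ => z j) w := (continuous_apply j).continuousAt
    have hs : w j ∈ Complex.slitPlane := by
      rw [Complex.mem_slitPlane_iff_arg]
      refine ⟨fun h => ?_, (hw j).1⟩
      have := (hw j).2
      rw [h, abs_of_pos hpi] at this
      nlinarith
    have hc2 : ContinuousAt (fun z : Fin n → ℂ => |(z j).arg|) w :=
      (ContinuousAt.comp (f := fun z : Fin n → ℂ => z j) (Complex.continuousAt_arg hs) hc).abs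
    exact (hc.eventually_ne (hw j).1).and (hc2.eventually_lt continuousAt_const (hw j).2)
  have hg : AnalyticAt ℂ (fun z => - MvPolynomial.eval z (pderiv i p) / A z) w :=
    (analyticAt_eval _ w).neg.div hAan hAw
  rcases hg.eventually_constant_or_nhds_le_map_nhds with h | h
  · apply h0
    have hz : ∀ᶠ z in nhds w, MvPolynomial.eval z (pderiv i p) = 0 := by
      filter_upwards [h, hAev] with z hz hz2
      simpa [hB, hz2] using hz
    have := AnalyticOnNhd.eq_of_eventuallyEq (𝕜 := ℂ)
      (f := fun z => MvPolynomial.eval z (pderiv i p)) (g := fun _ => 0) (z₀ := w)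
      (fun z _ => analyticAt_eval _ z) (fun z _ => analyticAt_const) hz
    apply MvPolynomial.funext
    intro z
    simpa using congrFun this z
  · simp only [hB, neg_zero, zero_div] at h
    have himg := h (Filter.image_mem_map (hAev.and hsec))
    have ht : Filter.Tendsto (fun ε : ℝ => (ε : ℂ)) (nhdsWithin 0 (Set.Ioi 0)) (nhds 0) := by
      have : Filter.Tendsto (fun ε : ℝ => (ε : ℂ)) (nhds 0) (nhds ((0 : ℝ) : ℂ)) :=
        Complex.continuous_ofReal.continuousAt
      rw [Complex.ofReal_zero] at this
      exact this.mono_left nhdsWithin_le_nhds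
    obtain ⟨ε, ⟨z, ⟨hz1, hz2⟩, hz3⟩, hε⟩ :=
      ((ht.eventually himg).and self_mem_nhdsWithin).exists
    have hε' : (0 : ℝ) < ε := hε
    have hεc : (ε : ℂ) ≠ 0 := by exact_mod_cast hε'.ne'
    refine hstable (Function.update z i ((ε⁻¹ : ℝ) : ℂ)) ?_ ?_
    · intro j
      by_cases hj : j = i
      · subst hj
        rw [Function.update_self, Complex.arg_ofReal_of_nonneg (by positivity), abs_zero]
        exact ⟨by exact_mod_cast (inv_pos.2 hε').ne', by positivity⟩
      · rw [Function.update_of_ne hj]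
        exact hz2 j
    · rw [eval_update_multiaffine p hma]
      have e : - MvPolynomial.eval z (pderiv i p) = ε * A z := by
        rw [← hz3]; field_simp
      have e2 : MvPolynomial.eval z (pderiv i p) = - (ε * A z) := by rw [← e, neg_neg]
      have e3 : MvPolynomial.eval z p = A z + z i * MvPolynomial.eval z (pderiv i p) := by
        simp only [hA]; ring
      rw [e3, e2]
      push_cast
      field_simp
      ring
end

section
/- Let g(z₁,…,zₙ) = Σ_{S ⊆ [n]} c_S Π_{i∈S} z_i be a multiaffine polynomial with complex coefficients that is Γ_α-stable for some α ∈ (0,2]. Then its dual g*(z₁,…,zₙ) = Σ_{S ⊆ [n]} c_S Π_{i∉S} z_i is also Γ_α-stable. -/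
open Finset

/-- If the multiaffine polynomial `g = Σ_S c_S Π_{i∈S} z_i` is `Γ_α`-stable, then so is
its dual `g* = Σ_S c_S Π_{i∉S} z_i`. -/
theorem dual_sectorStable (n : ℕ) (α : ℝ) (hα0 : 0 < α) (hα2 : α ≤ 2)
    (c : Finset (Fin n) → ℂ)
    (hstable : ∀ z : Fin n → ℂ, (∀ i, inSector α (z i)) →
      (∑ S : Finset (Fin n), c S * ∏ i ∈ S, z i) ≠ 0) :
    ∀ z : Fin n → ℂ, (∀ i, inSector α (z i)) →
      (∑ S : Finset (Fin n), c S * ∏ i ∈ Sᶜ, z i) ≠ 0 := by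
  intro z hz h0
  refine hstable (fun i => (z i)⁻¹)
    (fun i => ⟨inv_ne_zero (hz i).1, by rw [Complex.abs_arg_inv]; exact (hz i).2⟩) ?_
  have hP : (∏ i, z i) ≠ 0 := Finset.prod_ne_zero_iff.mpr fun i _ => (hz i).1
  apply (mul_eq_zero.mp _).resolve_left hP
  rw [← h0, Finset.mul_sum]
  refine Finset.sum_congr rfl fun S _ => ?_
  have hS : (∏ i ∈ S, z i) ≠ 0 := Finset.prod_ne_zero_iff.mpr fun i _ => (hz i).1
  rw [← Finset.prod_mul_prod_compl S z, Finset.prod_inv_distrib]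
  field_simp
end
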